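/- Let 𝓜 be a regular sequence and Ω ⊆ ℝ^d × ℝ^n an open neighborhood of the origin. Let u ∈ C²(Ω,ℂ) be a solution of ∂u/∂t_j = f_j(x,t,u,u_x) for 1 ≤ j ≤ n, where u_x = (∂u/∂x_1,…,∂u/∂x_d), and each f_j : Ω × ℂ × ℂ^d → ℂ is holomorphic in (ζ_0,ζ) ∈ ℂ × ℂ^d for each fixed (x,t), and of class C^𝓜 with respect to (x,t): for every compact K ⊆ Ω × ℂ × ℂ^d there is C > 0 with |∂_{(x,t)}^α f_j| ≤ C^{|α|+1} M_{|α|} on K for every α ∈ ℕ^{d+n}. Let (p_0,(ξ_0,τ_0)) with p_0 = (x_0,t_0) ∈ Ω and (ξ_0,τ_0) ∈ (ℝ^d × ℝ^n) ∖ {0}, and suppose there exists j ∈ {1,…,n} with τ_{0,j} ≠ Σ_{k=1}^d (∂f_j/∂ζ_k)(x_0,t_0,u(p_0),u_x(p_0))·ξ_{0,k} (as complex numbers, i.e. (p_0,(ξ_0,τ_0)) is not characteristic for the linearized operators L_j^u = ∂/∂t_j − Σ_k (∂f_j/∂ζ_k)(x,t,u,u_x) ∂/∂x_k). Then u is 𝓜-microlocally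 regular at (p_0,(ξ_0,τ_0)): there exist χ ∈ C_c^∞(Ω) with χ ≡ 1 on a neighborhood of p_0, an open neighborhood U ⋐ Ω of p_0, an open cone Γ ⊆ ℝ^{d+n} ∖ {0} containing (ξ_0,τ_0), and A > 0 such that |ℱ[χu]((x,t),(ξ,τ))| ≤ A^{k+1} M_k / ‖(ξ,τ)‖^k for all (x,t) ∈ U, (ξ,τ) ∈ Γ and k ∈ ℕ. -/

import Mathlib

open scoped BigOperators

/-- `m_k = M_k / k!` -/
noncomputable def DCm (M : ℕ → ℝ) (k : ℕ) : ℝ := M k / (Nat.factorial k)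

/-- A sequence `M` of non-negative reals is regular if, with `m_k = M_k/k!`:
(a) `m_0 = m_1 = 1`; (b) `m_k² ≤ m_{k-1} m_{k+1}` for `k ≥ 1`;
(c) `sup_{k≥1} (m_{k+1}/m_k)^{1/k} < ∞`; (d) `m_k^{1/k} → ∞`. -/
def DCRegular (M : ℕ → ℝ) : Prop :=
  (∀ k, 0 ≤ M k) ∧
  DCm M 0 = 1 ∧ DCm M 1 = 1 ∧
  (∀ k : ℕ, 1 ≤ k → (DCm M k) ^ 2 ≤ DCm M (k - 1) * DCm M (k + 1)) ∧
  (∃ B : ℝ, ∀ k : ℕ, 1 ≤ k → (DCm M (k + 1) / DCm M k) ^ ((1 : ℝ) / k) ≤ B) ∧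
  Filter.Tendsto (fun k : ℕ => (DCm M k) ^ ((1 : ℝ) / k)) Filter.atTop Filter.atTop

/-- The space `ℝ^d × ℝ^n` of variables `(x,t)`. -/
abbrev PSp (d n : ℕ) := (Fin d → ℝ) × (Fin n → ℝ)

/-- The Euclidean dot product on `ℝ^d × ℝ^n ≅ ℝ^{d+n}`. -/
noncomputable def dotP {d n : ℕ} (p q : PSp d n) : ℝ :=
  (∑ i, p.1 i * q.1 i) + ∑ j, p.2 j * q.2 j

/-- The Euclidean norm on `ℝ^d × ℝ^n ≅ ℝ^{d+n}`. -/
noncomputable def enP {d n : ℕ} (p : PSp d n) : ℝ :=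
  Real.sqrt ((∑ i, (p.1 i) ^ 2) + ∑ j, (p.2 j) ^ 2)

/-- The F.B.I. transform on `ℝ^{d+n}`. -/
noncomputable def FBIP {d n : ℕ} (g : PSp d n → ℂ) (p w : PSp d n) : ℂ :=
  ∫ q : PSp d n,
    Complex.exp (Complex.I * ((dotP (p - q) w : ℝ) : ℂ) -
      ((enP w * (enP (p - q)) ^ 2 : ℝ) : ℂ)) * g q

/-- Iterated partial derivatives `∂_{(x,t)}^{(α,β)} g` of functions on `ℝ^d × ℝ^n`. -/
noncomputable def PDxt {d n : ℕ} (α : Fin d → ℕ) (β : Fin n → ℕ)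
    (g : PSp d n → ℂ) : PSp d n → ℂ :=
  (((List.ofFn (fun i : Fin d =>
      (fun (h : PSp d n → ℂ) (p : PSp d n) =>
        fderiv ℝ h p ((Pi.single i (1 : ℝ), 0) : PSp d n))^[α i])) ++
    (List.ofFn (fun j : Fin n =>
      (fun (h : PSp d n → ℂ) (p : PSp d n) =>
        fderiv ℝ h p ((0, Pi.single j (1 : ℝ)) : PSp d n))^[β j]))).foldr (· ∘ ·) id) g

open scoped BigOperators

/-- The consequences of regularity that the proof uses. -/
structure WM (M : ℕ → ℝ) : Prop where
  zero : M 0 = 1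
  pos : ∀ k, 0 < M k
  mono : ∀ k, M k ≤ M (k + 1)
  choose : ∀ n l k, l ≤ n → (n.choose l : ℝ) * M (n - l) * M (l + k) ≤ M (n + k)
  der : ∃ H : ℝ, 1 ≤ H ∧ ∀ n, M (n + 1) ≤ H ^ n * M n
  fact : ∀ a b, M a * (b.factorial : ℝ) ≤ M (a + b)

theorem DCRegular.wm {M : ℕ → ℝ} (h : DCRegular M) : WM M := by
  obtain ⟨h0, hm0, hm1, hlc, ⟨B, hB⟩, -⟩ := h
  set m := DCm M with hm
  have hM : ∀ k, M k = (k.factorial : ℝ) * m k := by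
    intro k
    have : (k.factorial : ℝ) ≠ 0 := by positivity
    simp only [hm, DCm]; field_simp
  have key : ∀ k, 1 ≤ m k ∧ m k ≤ m (k + 1) := by
    intro k
    induction k with
    | zero => simp [hm0, hm1]
    | succ k ih =>
      obtain ⟨h1, h2⟩ := ih
      have h3 : 1 ≤ m (k + 1) := h1.trans h2
      refine ⟨h3, ?_⟩
      have h4 := hlc (k + 1) (by omega)
      simp only [Nat.add_sub_cancel] at h4
      by_contra hlt
      push Not at hlt
      have h5 : m k * m (k + 1 + 1) < m (k + 1) ^ 2 := by
        have : 0 < m k := by linarith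
        nlinarith
      linarith
  have one : ∀ k, 1 ≤ m k := fun k => (key k).1
  have mpos : ∀ k, 0 < m k := fun k => by linarith [one k]
  -- ratio monotone
  have rat : ∀ a b, m (b + 1) * m (a + b) ≤ m b * m (a + b + 1) := by
    intro a
    induction a with
    | zero => intro b; simp [mul_comm]
    | succ a ih =>
      intro b
      have h1 := ih b
      have h2 := hlc (a + b + 1) (by omega)
      simp only [Nat.add_sub_cancel] at h2
      have e1 : a + 1 + b = a + b + 1 := by ring
      rw [e1]
      have p1 := mpos (a + b)
      have p2 := mpos (a + b + 1)
      have p3 := mpos b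
      have h3 : m (b + 1) * m (a + b) * m (a + b + 1) ≤ m b * m (a+b+1) * m (a + b + 1) :=
        mul_le_mul_of_nonneg_right h1 p2.le
      have h4 : m b * m (a+b+1) ^ 2 ≤ m b * (m (a + b) * m (a + b + 1 + 1)) :=
        mul_le_mul_of_nonneg_left h2 p3.le
      have h5 : m (a + b) * (m (b + 1) * m (a + b + 1)) ≤ m (a + b) * (m b * m (a + b + 1 + 1)) := by
        nlinarith
      exact le_of_mul_le_mul_left h5 p1
  have sup : ∀ a b, m a * m b ≤ m (a + b) := by
    intro a b
    induction b with
    | zero => simp [hm0]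
    | succ b ih =>
      have h1 := rat a b
      have h2 : m b * (m a * m (b + 1)) ≤ m b * m (a + b + 1) := by
        have := mul_le_mul_of_nonneg_left ih (mpos (b + 1)).le
        nlinarith
      exact le_of_mul_le_mul_left h2 (mpos b)
  have ff : ∀ a b : ℕ, (a.factorial : ℝ) * b.factorial ≤ (a + b).factorial := by
    intro a b
    exact_mod_cast Nat.le_of_dvd (Nat.factorial_pos _) (Nat.factorial_mul_factorial_dvd_factorial_add a b)
  refine ⟨by simp [hM, hm0], fun k => by rw [hM]; have := mpos k; positivity, ?_, ?_, ?_, ?_⟩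
  · intro k
    rw [hM, hM]
    have : (k.factorial : ℝ) ≤ (k+1).factorial := by exact_mod_cast Nat.factorial_le (by omega)
    exact mul_le_mul this (key k).2 (mpos k).le (by positivity)
  · intro n l k hl
    rw [hM, hM, hM]
    have h1 : ((n.choose l : ℝ)) * l.factorial * (n - l).factorial = n.factorial := by
      exact_mod_cast Nat.choose_mul_factorial_mul_factorial hl
    have h2 : m (n - l) * m (l + k) ≤ m (n + k) := by
      have := sup (n - l) (l + k)
      rwa [show n - l + (l + k) = n + k by omega] at this
    have h3 : (n.choose l : ℝ) * (n - l).factorial * (l + k).factorial ≤ (n + k).factorial := by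
      have e1 : n.choose l * (n - l).factorial = n.descFactorial (n - l) := by
        rw [← Nat.choose_symm hl, Nat.descFactorial_eq_factorial_mul_choose, mul_comm]
      have e2 : (n + k).descFactorial (n - l) * (l + k).factorial = (n + k).factorial := by
        have := Nat.factorial_mul_descFactorial (n := n + k) (k := n - l) (by omega)
        rw [show n + k - (n - l) = l + k by omega] at this
        rw [mul_comm]; exact this
      have e3 : n.descFactorial (n - l) ≤ (n + k).descFactorial (n - l) := by
        exact Nat.descFactorial_le _ (by omega)
      have : n.choose l * (n - l).factorial * (l + k).factorial ≤ (n + k).factorial := by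
        rw [e1, ← e2]; exact Nat.mul_le_mul_right _ e3
      exact_mod_cast this
    calc (n.choose l : ℝ) * (((n - l).factorial : ℝ) * m (n - l)) * (((l + k).factorial : ℝ) * m (l + k))
        = ((n.choose l : ℝ) * (n - l).factorial * (l + k).factorial) * (m (n - l) * m (l + k)) := by ring
      _ ≤ ((n + k).factorial : ℝ) * m (n + k) := by
        apply mul_le_mul h3 h2 (by have := mpos (n-l); have := mpos (l+k); positivity) (by positivity)
  · have hr : ∀ k, 1 ≤ k → m (k + 1) ≤ B ^ k * m k ∧ 1 ≤ B := by
      intro k hk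
      have h1 : 1 ≤ m (k + 1) / m k := by
        rw [le_div_iff₀ (mpos k)]; linarith [(key k).2]
      have h2 := hB k hk
      have hk0 : (k : ℝ) ≠ 0 := by exact_mod_cast (by omega : k ≠ 0)
      have h4 : 1 ≤ (m (k + 1) / m k) ^ ((1 : ℝ) / k) := Real.one_le_rpow h1 (by positivity)
      refine ⟨?_, h4.trans h2⟩
      have h3 : ((m (k + 1) / m k) ^ ((1 : ℝ) / k)) ^ k ≤ B ^ k :=
        pow_le_pow_left₀ (by linarith) h2 k
      rw [← Real.rpow_natCast, ← Real.rpow_mul (by linarith), one_div, inv_mul_cancel₀ hk0,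
        Real.rpow_one, div_le_iff₀ (mpos k)] at h3
      exact h3
    have hB1 : 1 ≤ B := (hr 1 le_rfl).2
    refine ⟨2 * B, by linarith, fun n => ?_⟩
    have h1 : m (n + 1) ≤ B ^ n * m n := by
      rcases Nat.eq_zero_or_pos n with h | h
      · subst h; simp [hm0, hm1]
      · exact (hr n h).1
    rw [hM, hM, Nat.factorial_succ]
    have h2 : ((n : ℝ) + 1) ≤ 2 ^ n := by exact_mod_cast Nat.lt_two_pow_self
    push_cast
    calc ((n : ℝ) + 1) * n.factorial * m (n + 1) ≤ 2 ^ n * n.factorial * (B ^ n * m n) := by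
          apply mul_le_mul (mul_le_mul_of_nonneg_right h2 (by positivity)) h1 (mpos _).le (by positivity)
      _ = _ := by rw [mul_pow]; ring
  · intro a b
    rw [hM, hM]
    have h2 : m a ≤ m (a + b) := by
      have := sup a b
      have := one b
      have := mpos a
      nlinarith
    calc (a.factorial : ℝ) * m a * b.factorial = (a.factorial * b.factorial : ℝ) * m a := by ring
      _ ≤ _ := mul_le_mul (ff a b) h2 (mpos a).le (by positivity)

open scoped BigOperators ContDiff

section Words
variable {E : Type*} [NormedAddCommGroup E] [NormedSpace ℝ E]
variable {Y : Type*}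

/-- directional derivative -/
noncomputable def PD (e : Y → E) (m : Y) (F : E → ℂ) : E → ℂ := fun y => fderiv ℝ F y (e m)

/-- iterated directional derivatives along a word -/
noncomputable def DW (e : Y → E) : List Y → (E → ℂ) → (E → ℂ)
  | [], F => F
  | m :: w, F => PD e m (DW e w F)

theorem DW_append (e : Y → E) (w w' : List Y) (F : E → ℂ) :
    DW e (w ++ w') F = DW e w (DW e w' F) := by
  induction w with
  | nil => rfl
  | cons m w ih => simp [DW, ih]

theorem DW_snoc (e : Y → E) (w : List Y) (m : Y) (F : E → ℂ) :
    DW e (w ++ [m]) F = DW e w (PD e m F) := by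
  rw [DW_append]; rfl

theorem PD_congr {e : Y → E} {O : Set E} (hO : IsOpen O) {F G : E → ℂ} (h : Set.EqOn F G O) (m : Y) :
    Set.EqOn (PD e m F) (PD e m G) O := by
  intro y hy
  have : F =ᶠ[nhds y] G := Filter.eventuallyEq_of_mem (hO.mem_nhds hy) h
  simp only [PD, this.fderiv_eq]

theorem DW_congr {e : Y → E} {O : Set E} (hO : IsOpen O) {F G : E → ℂ} (h : Set.EqOn F G O)
    (w : List Y) : Set.EqOn (DW e w F) (DW e w G) O := by
  induction w with
  | nil => exact h
  | cons m w ih => exact PD_congr hO ih m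

theorem PD_smooth {e : Y → E} {O : Set E} (hO : IsOpen O) {F : E → ℂ} (h : ContDiffOn ℝ ∞ F O) (m : Y) :
    ContDiffOn ℝ ∞ (PD e m F) O := by
  have := h.fderiv_of_isOpen (m := ∞) hO (by simp)
  exact this.clm_apply contDiffOn_const

theorem DW_smooth {e : Y → E} {O : Set E} (hO : IsOpen O) {F : E → ℂ} (h : ContDiffOn ℝ ∞ F O)
    (w : List Y) : ContDiffOn ℝ ∞ (DW e w F) O := by
  induction w with
  | nil => exact h
  | cons m w ih => exact PD_smooth hO ih m

theorem smooth_diffAt {O : Set E} (hO : IsOpen O) {F : E → ℂ} (h : ContDiffOn ℝ ∞ F O) {y : E}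
    (hy : y ∈ O) : DifferentiableAt ℝ F y :=
  (h.contDiffAt (hO.mem_nhds hy)).differentiableAt (by simp)

theorem PD_add {e : Y → E} {O : Set E} (hO : IsOpen O) {F G : E → ℂ} (hF : ContDiffOn ℝ ∞ F O)
    (hG : ContDiffOn ℝ ∞ G O) (m : Y) :
    Set.EqOn (PD e m (fun y => F y + G y)) (fun y => PD e m F y + PD e m G y) O := by
  intro y hy
  simp only [PD]
  rw [fderiv_fun_add (smooth_diffAt hO hF hy) (smooth_diffAt hO hG hy)]; rfl

theorem PD_mul {e : Y → E} {O : Set E} (hO : IsOpen O) {F G : E → ℂ} (hF : ContDiffOn ℝ ∞ F O)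
    (hG : ContDiffOn ℝ ∞ G O) (m : Y) :
    Set.EqOn (PD e m (fun y => F y * G y)) (fun y => PD e m F y * G y + F y * PD e m G y) O := by
  intro y hy
  simp only [PD]
  rw [fderiv_fun_mul (smooth_diffAt hO hF hy) (smooth_diffAt hO hG hy)]
  simp; ring

theorem DW_add {e : Y → E} {O : Set E} (hO : IsOpen O) {F G : E → ℂ} (hF : ContDiffOn ℝ ∞ F O)
    (hG : ContDiffOn ℝ ∞ G O) (w : List Y) :
    Set.EqOn (DW e w (fun y => F y + G y)) (fun y => DW e w F y + DW e w G y) O := by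
  induction w with
  | nil => intro y _; rfl
  | cons m w ih =>
    exact (PD_congr hO ih m).trans (PD_add hO (DW_smooth hO hF w) (DW_smooth hO hG w) m)

/-- binomial convolution -/
noncomputable def bconv (a b : ℕ → ℝ) (n : ℕ) : ℝ :=
  ∑ ij ∈ Finset.HasAntidiagonal.antidiagonal n, (n.choose ij.1 : ℝ) * (a ij.1 * b ij.2)

theorem bconv_succ (a b : ℕ → ℝ) (n : ℕ) :
    bconv a b (n + 1) = bconv (fun i => a (i + 1)) b n + bconv a (fun i => b (i + 1)) n := by
  unfold bconv
  rw [Finset.sum_antidiagonal_choose_succ_mul (fun i j => a i * b j) n, add_comm]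
  congr 1
  apply Finset.sum_congr rfl
  intro ij hij
  rw [Finset.HasAntidiagonal.mem_antidiagonal] at hij
  rw [← Nat.choose_symm_of_eq_add hij.symm]

theorem leib {e : Y → E} {O : Set E} (hO : IsOpen O) (n : ℕ) : ∀ {F G : E → ℂ} {a b : ℕ → ℝ},
    ContDiffOn ℝ ∞ F O → ContDiffOn ℝ ∞ G O →
    (∀ w : List Y, w.length ≤ n → ∀ y ∈ O, ‖DW e w F y‖ ≤ a w.length) →
    (∀ w : List Y, w.length ≤ n → ∀ y ∈ O, ‖DW e w G y‖ ≤ b w.length) →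
    ∀ w : List Y, w.length = n → ∀ y ∈ O, ‖DW e w (fun y => F y * G y) y‖ ≤ bconv a b n := by
  induction n with
  | zero =>
    intro F G a b hF hG ha hb w hw y hy
    obtain rfl := List.length_eq_zero_iff.1 hw
    have h1 := ha [] (by simp) y hy
    have h2 := hb [] (by simp) y hy
    simp only [DW, List.length_nil] at h1 h2 ⊢
    simp only [bconv, Finset.HasAntidiagonal.antidiagonal_zero, Finset.sum_singleton, Nat.choose_self, Nat.cast_one,
      one_mul, norm_mul]
    exact mul_le_mul h1 h2 (norm_nonneg _) ((norm_nonneg _).trans h1)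
  | succ n ih =>
    intro F G a b hF hG ha hb w hw y hy
    obtain ⟨w, m, rfl⟩ : ∃ w' m, w = w' ++ [m] := by
      rcases List.eq_nil_or_concat w with h | ⟨w', m, h⟩
      · subst h; simp at hw
      · exact ⟨w', m, by simpa using h⟩
    have hw' : w.length = n := by simpa using hw
    rw [DW_snoc, DW_congr hO (PD_mul hO hF hG m) w hy,
      DW_add hO ((PD_smooth hO hF m).mul hG) (hF.mul (PD_smooth hO hG m)) w hy, bconv_succ]
    refine (norm_add_le _ _).trans (add_le_add ?_ ?_)
    · refine ih (PD_smooth hO hF m) hG ?_ (fun v hv => hb v (by omega)) w hw' y hy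
      intro v hv z hz
      have := ha (v ++ [m]) (by simp; omega) z hz
      rw [DW_snoc] at this; simpa using this
    · refine ih hF (PD_smooth hO hG m) (fun v hv => ha v (by omega)) ?_ w hw' y hy
      intro v hv z hz
      have := hb (v ++ [m]) (by simp; omega) z hz
      rw [DW_snoc] at this; simpa using this

theorem leib' {e : Y → E} {O : Set E} (hO : IsOpen O) (n : ℕ) : ∀ {F G : E → ℂ} {a b : ℕ → ℝ},
    ContDiffOn ℝ ∞ F O → ContDiffOn ℝ ∞ G O → a 0 = 0 →
    (∀ w : List Y, w ≠ [] → ∀ y ∈ O, ‖DW e w F y‖ ≤ a w.length) →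
    (∀ w : List Y, w.length < n → ∀ y ∈ O, ‖DW e w G y‖ ≤ b w.length) →
    ∀ w : List Y, w.length = n → ∀ y ∈ O,
      ‖DW e w (fun y => F y * G y) y - F y * DW e w G y‖ ≤ bconv a b n := by
  induction n with
  | zero =>
    intro F G a b hF hG ha0 ha hb w hw y hy
    obtain rfl := List.length_eq_zero_iff.1 hw
    simp [DW, bconv, ha0]
  | succ n ih =>
    intro F G a b hF hG ha0 ha hb w hw y hy
    obtain ⟨w, m, rfl⟩ : ∃ w' m, w = w' ++ [m] := by
      rcases List.eq_nil_or_concat w with h | ⟨w', m, h⟩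
      · subst h; simp at hw
      · exact ⟨w', m, by simpa using h⟩
    have hw' : w.length = n := by simpa using hw
    rw [DW_snoc, DW_snoc, DW_congr hO (PD_mul hO hF hG m) w hy,
      DW_add hO ((PD_smooth hO hF m).mul hG) (hF.mul (PD_smooth hO hG m)) w hy, bconv_succ,
      add_sub_assoc]
    refine (norm_add_le _ _).trans (add_le_add ?_ ?_)
    · refine leib hO n (PD_smooth hO hF m) hG ?_ (fun v hv => hb v (by omega)) w hw' y hy
      intro v hv z hz
      have := ha (v ++ [m]) (by simp) z hz
      rw [DW_snoc] at this; simpa using this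
    · refine ih hF (PD_smooth hO hG m) ha0 ha ?_ w hw' y hy
      intro v hv z hz
      have := hb (v ++ [m]) (by simp; omega) z hz
      rw [DW_snoc] at this; simpa using this

theorem geom_bound {h B : ℝ} (hh : 0 ≤ h) (hB : 2 * h ≤ B) (n : ℕ) :
    ∑ ij ∈ Finset.HasAntidiagonal.antidiagonal n, h ^ ij.1 * B ^ ij.2 ≤ 2 * B ^ n := by
  suffices H : ∑ ij ∈ Finset.HasAntidiagonal.antidiagonal n, h ^ ij.1 * B ^ ij.2 ≤ 2 * B ^ n - h ^ n by
    have := pow_nonneg hh n; linarith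
  induction n with
  | zero => simp; norm_num
  | succ n ih =>
    have hB0 : 0 ≤ B := by linarith
    rw [Finset.Nat.sum_antidiagonal_succ']
    have e : ∑ x ∈ Finset.HasAntidiagonal.antidiagonal n, h ^ x.1 * B ^ (x.2 + 1)
        = B * ∑ x ∈ Finset.HasAntidiagonal.antidiagonal n, h ^ x.1 * B ^ x.2 := by
      rw [Finset.mul_sum]; apply Finset.sum_congr rfl; intros; ring
    simp only at e ⊢
    rw [e]
    have h1 := mul_le_mul_of_nonneg_left ih hB0
    have h2 : 2 * h * h ^ n ≤ B * h ^ n := mul_le_mul_of_nonneg_right hB (pow_nonneg hh n)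
    rw [pow_succ, pow_succ]; nlinarith

theorem bconv_bound {M : ℕ → ℝ} (hM : WM M) {C₁ C₂ h B : ℝ} (hC₁ : 0 ≤ C₁) (hC₂ : 0 ≤ C₂)
    (hh : 0 ≤ h) (hB : 2 * h ≤ B) (k n : ℕ) :
    bconv (fun i => C₁ * h ^ i * M i) (fun i => C₂ * B ^ i * M (i + k)) n
      ≤ 2 * C₁ * C₂ * B ^ n * M (n + k) := by
  have hB0 : 0 ≤ B := by linarith
  calc bconv (fun i => C₁ * h ^ i * M i) (fun i => C₂ * B ^ i * M (i + k)) n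
      ≤ ∑ ij ∈ Finset.HasAntidiagonal.antidiagonal n, (C₁ * C₂ * M (n + k)) * (h ^ ij.1 * B ^ ij.2) := by
        apply Finset.sum_le_sum
        rintro ⟨i, j⟩ hij
        rw [Finset.HasAntidiagonal.mem_antidiagonal] at hij
        simp only at hij ⊢
        have := hM.choose n j k (by omega)
        rw [show n - j = i by omega, Nat.choose_symm_of_eq_add (by omega : n = j + i)] at this
        have h2 : 0 ≤ C₁ * C₂ * (h ^ i * B ^ j) := by positivity
        nlinarith [mul_le_mul_of_nonneg_left this h2]
    _ = C₁ * C₂ * M (n + k) * ∑ ij ∈ Finset.HasAntidiagonal.antidiagonal n, (h ^ ij.1 * B ^ ij.2) := by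
        rw [Finset.mul_sum]
    _ ≤ C₁ * C₂ * M (n + k) * (2 * B ^ n) := by
        apply mul_le_mul_of_nonneg_left (geom_bound hh hB n)
        have := hM.pos (n + k); positivity
    _ = _ := by ring

theorem bconv_bound' {M : ℕ → ℝ} (hM : WM M) {C₁ C₂ h B : ℝ} (hC₁ : 0 ≤ C₁) (hC₂ : 0 ≤ C₂)
    (hh : 0 ≤ h) (hB : 2 * h ≤ B) (n : ℕ) :
    bconv (fun i => if i = 0 then 0 else C₁ * h ^ i * M i) (fun i => C₂ * B ^ i * M i) (n + 1)
      ≤ 2 * h * C₁ * C₂ * B ^ n * M (n + 1) := by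
  have hB0 : 0 ≤ B := by linarith
  unfold bconv
  rw [Finset.Nat.sum_antidiagonal_succ]
  simp only [if_true, zero_mul, mul_zero, zero_add, Nat.succ_ne_zero, if_false]
  calc _ ≤ ∑ ij ∈ Finset.HasAntidiagonal.antidiagonal n, (h * C₁ * C₂ * M (n + 1)) * (h ^ ij.1 * B ^ ij.2) := by
        apply Finset.sum_le_sum
        rintro ⟨i, j⟩ hij
        rw [Finset.HasAntidiagonal.mem_antidiagonal] at hij
        simp only at hij ⊢
        have := hM.choose (n + 1) j 0 (by omega)
        rw [show n + 1 - j = i + 1 by omega,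
          Nat.choose_symm_of_eq_add (by omega : n + 1 = j + (i + 1))] at this
        have h2 : 0 ≤ C₁ * C₂ * (h ^ (i + 1) * B ^ j) := by positivity
        simp only [add_zero, Nat.add_eq_zero_iff, one_ne_zero, and_false, if_false] at this ⊢
        have h3 := mul_le_mul_of_nonneg_left this h2
        calc _ = C₁ * C₂ * (h ^ (i + 1) * B ^ j) * (((n + 1).choose (i + 1) : ℝ) * M (i + 1) * M j) := by ring
          _ ≤ _ := h3
          _ = _ := by ring
    _ = h * C₁ * C₂ * M (n + 1) * ∑ ij ∈ Finset.HasAntidiagonal.antidiagonal n, (h ^ ij.1 * B ^ ij.2) := by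
        rw [Finset.mul_sum]
    _ ≤ h * C₁ * C₂ * M (n + 1) * (2 * B ^ n) := by
        apply mul_le_mul_of_nonneg_left (geom_bound hh hB n)
        have := hM.pos (n + 1); positivity
    _ = _ := by ring
end Words

open scoped BigOperators ContDiff

theorem WM.mono' {M : ℕ → ℝ} (hM : WM M) {a b : ℕ} (h : a ≤ b) : M a ≤ M b :=
  monotone_nat_of_le_succ hM.mono h

theorem WM.one_le {M : ℕ → ℝ} (hM : WM M) (a : ℕ) : 1 ≤ M a := by
  rw [← hM.zero]; exact hM.mono' (Nat.zero_le a)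

section Class
variable {E : Type*} [NormedAddCommGroup E] [NormedSpace ℝ E]
variable {Y V : Type*} [Fintype V]

/-- holomorphy in the second variable -/
def HolO (O : Set (E × (V → ℂ))) (F : E × (V → ℂ) → ℂ) : Prop :=
  ∀ y ∈ O, ∀ z : V → ℂ, fderiv ℝ F y (0, Complex.I • z) = Complex.I * fderiv ℝ F y (0, z)

/-- the Denjoy-Carleman class on `O` with constants -/
structure Cl (e : Y → E × (V → ℂ)) (O : Set (E × (V → ℂ))) (M : ℕ → ℝ) (C h : ℝ) (k : ℕ)
    (F : E × (V → ℂ) → ℂ) : Prop where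
  smooth : ContDiffOn ℝ ∞ F O
  hol : HolO O F
  bd : ∀ w : List Y, ∀ y ∈ O, ‖DW e w F y‖ ≤ C * h ^ w.length * M (w.length + k)

variable {e : Y → E × (V → ℂ)} {O : Set (E × (V → ℂ))} {M : ℕ → ℝ}

theorem Cl.mono (hM : WM M) {C C' h h' : ℝ} {k k' : ℕ} {F : E × (V → ℂ) → ℂ} (H : Cl e O M C h k F)
    (hC : 0 ≤ C) (hh : 0 ≤ h) (hCC : C ≤ C') (hhh : h ≤ h') (hk : k ≤ k') : Cl e O M C' h' k' F := by
  refine ⟨H.smooth, H.hol, fun w y hy => (H.bd w y hy).trans ?_⟩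
  have := hM.mono' (show w.length + k ≤ w.length + k' by omega)
  have := hM.pos (w.length + k)
  have hC' : 0 ≤ C' := hC.trans hCC
  have hh' : 0 ≤ h' := hh.trans hhh
  gcongr

theorem Cl.congr (hO : IsOpen O) {C h : ℝ} {k : ℕ} {F G : E × (V → ℂ) → ℂ} (H : Cl e O M C h k F)
    (hFG : Set.EqOn G F O) : Cl e O M C h k G := by
  refine ⟨H.smooth.congr hFG, ?_, ?_⟩
  · intro y hy z
    have : G =ᶠ[nhds y] F := Filter.eventuallyEq_of_mem (hO.mem_nhds hy) hFG
    rw [this.fderiv_eq]; exact H.hol y hy z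
  · intro w y hy
    rw [DW_congr hO hFG w hy]; exact H.bd w y hy

theorem Cl.add (hO : IsOpen O) {C₁ C₂ h : ℝ} {k : ℕ} {F G : E × (V → ℂ) → ℂ}
    (hF : Cl e O M C₁ h k F) (hG : Cl e O M C₂ h k G) :
    Cl e O M (C₁ + C₂) h k (fun y => F y + G y) := by
  refine ⟨hF.smooth.add hG.smooth, ?_, ?_⟩
  · intro y hy z
    rw [fderiv_fun_add (smooth_diffAt hO hF.smooth hy) (smooth_diffAt hO hG.smooth hy)]
    simp only [add_apply, hF.hol y hy z, hG.hol y hy z]; ring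
  · intro w y hy
    rw [DW_add hO hF.smooth hG.smooth w hy]
    have h1 := hF.bd w y hy
    have h2 := hG.bd w y hy
    refine (norm_add_le _ _).trans ?_
    rw [add_mul, add_mul]; exact add_le_add h1 h2

theorem Cl.mul (hM : WM M) (hO : IsOpen O) {C₁ C₂ h B : ℝ} {k : ℕ} {F G : E × (V → ℂ) → ℂ}
    (hF : Cl e O M C₁ h 0 F) (hG : Cl e O M C₂ B k G) (hC₁ : 0 ≤ C₁) (hC₂ : 0 ≤ C₂)
    (hh : 0 ≤ h) (hB : 2 * h ≤ B) :
    Cl e O M (2 * C₁ * C₂) B k (fun y => F y * G y) := by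
  refine ⟨hF.smooth.mul hG.smooth, ?_, ?_⟩
  · intro y hy z
    rw [fderiv_fun_mul (smooth_diffAt hO hF.smooth hy) (smooth_diffAt hO hG.smooth hy)]
    simp only [add_apply, smul_apply, smul_eq_mul,
      hF.hol y hy z, hG.hol y hy z]; ring
  · intro w y hy
    refine (leib hO w.length hF.smooth hG.smooth (a := fun i => C₁ * h ^ i * M i)
      (b := fun i => C₂ * B ^ i * M (i + k)) ?_ ?_ w rfl y hy).trans
      (bconv_bound hM hC₁ hC₂ hh hB k _)
    · intro v _ z hz; simpa using hF.bd v z hz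
    · intro v _ z hz; simpa using hG.bd v z hz

theorem HolO.pd (hO : IsOpen O) {F : E × (V → ℂ) → ℂ} (hs : ContDiffOn ℝ ∞ F O) (hF : HolO O F) (m : Y) :
    HolO O (PD e m F) := by
  intro y hy z
  have hc : ContDiffAt ℝ ∞ F y := hs.contDiffAt (hO.mem_nhds hy)
  have hd : DifferentiableAt ℝ (fderiv ℝ F) y :=
    ((hc.fderiv_right (m := 1) (by exact WithTop.coe_le_coe.2 le_top)).differentiableAt (by simp))
  have hsym : IsSymmSndFDerivAt ℝ F y := by
    apply hc.isSymmSndFDerivAt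
    simp only [minSmoothness_of_isRCLikeNormedField]
    exact WithTop.coe_le_coe.2 le_top
  have e1 : ∀ v, fderiv ℝ (PD e m F) y v = fderiv ℝ (fderiv ℝ F) y (e m) v := by
    intro v
    unfold PD
    rw [fderiv_clm_apply hd (differentiableAt_const _)]
    simp
    exact hsym v (e m)
  rw [e1, e1]
  have e2 : ∀ v, fderiv ℝ (fun y => fderiv ℝ F y v) y (e m) = fderiv ℝ (fderiv ℝ F) y (e m) v := by
    intro v
    rw [fderiv_clm_apply hd (differentiableAt_const _)]
    simp
  rw [← e2, ← e2]
  have e3 : (fun y => fderiv ℝ F y (0, Complex.I • z)) =ᶠ[nhds y]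
      fun y => Complex.I * fderiv ℝ F y (0, z) :=
    Filter.eventuallyEq_of_mem (hO.mem_nhds hy) (fun y hy => hF y hy z)
  rw [e3.fderiv_eq, fderiv_const_mul (hd.clm_apply (differentiableAt_const _))]
  simp

theorem Cl.pd (hO : IsOpen O) {C h : ℝ} {k : ℕ} {F : E × (V → ℂ) → ℂ}
    (hF : Cl e O M C h k F) (m : Y) : Cl e O M (C * h) h (k + 1) (PD e m F) := by
  refine ⟨PD_smooth hO hF.smooth m, hF.hol.pd hO hF.smooth m, ?_⟩
  intro w y hy
  rw [← DW_snoc]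
  refine (hF.bd (w ++ [m]) y hy).trans (le_of_eq ?_)
  simp only [List.length_append, List.length_singleton]
  rw [show w.length + 1 + k = w.length + (k + 1) by ring]; ring

theorem Cl.pd0 (hO : IsOpen O) {C h H : ℝ} {F : E × (V → ℂ) → ℂ} (hC : 0 ≤ C) (hh : 0 ≤ h)
    (hH : ∀ n, M (n + 1) ≤ H ^ n * M n)
    (hF : Cl e O M C h 0 F) (m : Y) : Cl e O M (C * h) (h * H) 0 (PD e m F) := by
  have h1 := hF.pd hO m
  refine ⟨h1.smooth, h1.hol, fun w y hy => (h1.bd w y hy).trans ?_⟩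
  simp only [zero_add, add_zero]
  calc C * h * h ^ w.length * M (w.length + 1) ≤ C * h * h ^ w.length * (H ^ w.length * M w.length) := by
        apply mul_le_mul_of_nonneg_left (hH _) (by positivity)
    _ = _ := by rw [mul_pow]; ring

theorem DW_const (c : ℂ) (w : List Y) (hw : w ≠ []) : DW e w (fun _ => c) = fun _ => 0 := by
  induction w with
  | nil => exact absurd rfl hw
  | cons m w ih =>
    by_cases h : w = []
    · subst h; funext y; simp [DW, PD]
    · simp only [DW, ih h]; funext y; simp [PD]

theorem Cl.const (hM : WM M) {h : ℝ} (hh : 0 ≤ h) (c : ℂ) : Cl e O M ‖c‖ h 0 (fun _ => c) := by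
  refine ⟨contDiffOn_const, ?_, ?_⟩
  · intro y _ z; simp
  · intro w y hy
    by_cases hw : w = []
    · subst hw; simp [DW, hM.zero]
    · rw [DW_const c w hw]; simp only [norm_zero]
      have := hM.pos (w.length + 0); positivity

theorem Cl.lin (hM : WM M) {h R : ℝ} (hh : 1 ≤ h) (ℓ : E × (V → ℂ) →L[ℝ] ℂ)
    (hℓ : ∀ z, ℓ (0, Complex.I • z) = Complex.I * ℓ (0, z)) (h1 : ∀ y ∈ O, ‖ℓ y‖ ≤ R)
    (h2 : ∀ m, ‖ℓ (e m)‖ ≤ R) (hR : 0 ≤ R) : Cl e O M R h 0 (fun y => ℓ y) := by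
  refine ⟨ℓ.contDiff.contDiffOn, ?_, ?_⟩
  · intro y _ z; simp [hℓ]
  · intro w y hy
    have hw1 : 1 ≤ h ^ w.length * M (w.length + 0) := by
      have := one_le_pow₀ hh (n := w.length)
      have := hM.one_le (w.length + 0)
      nlinarith
    have hw2 : R ≤ R * h ^ w.length * M (w.length + 0) := by
      rw [mul_assoc]; exact le_mul_of_one_le_right hR hw1
    refine le_trans ?_ hw2
    rcases List.eq_nil_or_concat w with h | ⟨w', m, h⟩
    · subst h; exact h1 y hy
    · rw [List.concat_eq_append] at h
      subst h
      rw [DW_snoc]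
      have : PD e m (fun y => ℓ y) = fun _ => ℓ (e m) := by
        funext y; simp [PD]
      rw [this]
      by_cases hw' : w' = []
      · subst hw'; exact h2 m
      · rw [DW_const _ w' hw']; simpa using hR

theorem Cl.inv (hM : WM M) (hO : IsOpen O) {C h c B : ℝ} {F : E × (V → ℂ) → ℂ}
    (hF : Cl e O M C h 0 F) (hC : 0 ≤ C) (hh : 0 ≤ h) (hc : 0 < c) (hlow : ∀ y ∈ O, c ≤ ‖F y‖)
    (hB : 2 * h ≤ B) (hB' : 2 * h * C / c ≤ B) : Cl e O M (1 / c) B 0 (fun y => (F y)⁻¹) := by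
  have hne : ∀ y ∈ O, F y ≠ 0 := fun y hy h0 => by
    have := hlow y hy; rw [h0, norm_zero] at this; linarith
  have hs : ContDiffOn ℝ ∞ (fun y => (F y)⁻¹) O := hF.smooth.inv hne
  have hB0 : 0 ≤ B := by linarith
  refine ⟨hs, ?_, ?_⟩
  · intro y hy z
    have hd := smooth_diffAt hO hF.smooth hy
    have h1 := ((hasFDerivAt_inv' (𝕜 := ℝ) (hne y hy)).comp y hd.hasFDerivAt).fderiv
    rw [show (fun y => (F y)⁻¹) = Inv.inv ∘ F from rfl, h1]
    simp only [ContinuousLinearMap.comp_apply, neg_apply, hF.hol y hy z,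
      ContinuousLinearMap.mulLeftRight_apply]
    ring
  · intro w
    induction hn : w.length using Nat.strong_induction_on generalizing w with
    | _ n ih =>
    intro y hy
    simp only [add_zero]
    rcases n with _ | n
    · obtain rfl := List.length_eq_zero_iff.1 hn
      simp only [DW, pow_zero, mul_one, hM.zero, norm_inv]
      rw [one_div]; exact inv_anti₀ hc (hlow y hy)
    · have h1 := leib' hO (n + 1) (F := F) (G := fun y => (F y)⁻¹) (e := e)
        (a := fun i => if i = 0 then 0 else C * h ^ i * M i)
        (b := fun i => (1 / c) * B ^ i * M i) hF.smooth hs (by simp)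
        (by
          intro v hv z hz
          have : v.length ≠ 0 := by simpa using hv
          simpa [this] using hF.bd v z hz)
        (by
          intro v hv z hz
          simpa using ih v.length hv v rfl z hz) w hn y hy
      have h2 : DW e w (fun y => F y * (F y)⁻¹) y = 0 := by
        have : Set.EqOn (fun y => F y * (F y)⁻¹) (fun _ => (1 : ℂ)) O :=
          fun y hy => mul_inv_cancel₀ (hne y hy)
        rw [DW_congr hO this w hy, DW_const 1 w (by rintro rfl; simp at hn)]
      rw [h2, zero_sub, norm_neg, norm_mul] at h1
      have h3 := bconv_bound' hM hC (by positivity : 0 ≤ 1 / c) hh hB n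
      have h4 : c * ‖DW e w (fun y => (F y)⁻¹) y‖ ≤ 2 * h * C * (1 / c) * B ^ n * M (n + 1) := by
        refine (mul_le_mul_of_nonneg_right (hlow y hy) (norm_nonneg _)).trans (h1.trans h3)
      have h5 : 2 * h * C * (1 / c) * B ^ n * M (n + 1) ≤ c * (1 / c * B ^ (n + 1) * M (n + 1)) := by
        have e1 : c * (1 / c * B ^ (n + 1) * M (n + 1)) = B * (B ^ n * M (n + 1)) := by
          field_simp; ring
        have e2 : 2 * h * C * (1 / c) * B ^ n * M (n + 1) = (2 * h * C / c) * (B ^ n * M (n + 1)) := by ring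
        rw [e1, e2]
        have := hM.pos (n + 1)
        exact mul_le_mul_of_nonneg_right hB' (by positivity)
      exact le_of_mul_le_mul_left (h4.trans h5) hc

theorem Cl.cmul (hM : WM M) (hO : IsOpen O) {C h : ℝ} {k : ℕ} {F : E × (V → ℂ) → ℂ}
    (hF : Cl e O M C h k F) (hC : 0 ≤ C) (hh : 0 ≤ h) (c : ℂ) {D : ℝ} (hc : ‖c‖ ≤ D) :
    Cl e O M (2 * D * C) h k (fun y => c * F y) := by
  have h0 := (Cl.const (e := e) (O := O) hM (le_refl (0 : ℝ)) c).mono hM (norm_nonneg _) le_rfl hc le_rfl le_rfl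
  exact Cl.mul hM hO h0 hF ((norm_nonneg c).trans hc) hC le_rfl (by linarith)

theorem Cl.sum (hM : WM M) (hO : IsOpen O) {ι : Type*} (s : Finset ι) {C h : ℝ} {k : ℕ}
    {F : ι → E × (V → ℂ) → ℂ} (hh : 0 ≤ h)
    (hF : ∀ i ∈ s, Cl e O M C h k (F i)) :
    Cl e O M (s.card * C) h k (fun y => ∑ i ∈ s, F i y) := by
  classical
  induction s using Finset.induction_on with
  | empty =>
    have := (Cl.const (e := e) (O := O) hM hh (0 : ℂ)).mono hM (norm_nonneg _) hh (le_refl _) le_rfl (Nat.zero_le k)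
    simpa using this
  | insert i s hi ih =>
    have h1 := Cl.add hO (hF i (by simp)) (ih (fun j hj => hF j (by simp [hj])))
    simp only [Finset.sum_insert hi, Finset.card_insert_of_notMem hi]
    convert h1 using 1
    push_cast; ring
end Class

open scoped BigOperators ContDiff Topology

section Smooth
variable {E : Type*} [NormedAddCommGroup E] [NormedSpace ℝ E]

theorem lineDeriv_shift {F : E → ℂ} {g : ℂ} {z v : E} {t : ℝ}
    (h : HasLineDerivAt ℝ F g (z + t • v) v) : HasDerivAt (fun s : ℝ => F (z + s • v)) g t := by
  unfold HasLineDerivAt at h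
  have h1 : HasDerivAt (fun s : ℝ => s - t) 1 t := (hasDerivAt_id t).sub_const t
  have h2 := HasDerivAt.scomp_of_eq (g₁ := fun s : ℝ => F (z + t • v + s • v)) t h h1 (by simp)
  rw [one_smul] at h2
  refine h2.congr_of_eventuallyEq (Filter.Eventually.of_forall fun s => ?_)
  simp only [Function.comp]
  rw [sub_smul]; congr 1; abel

theorem lineDeriv_mvt {F : E → ℂ} {G : E → ℂ} {z v : E} {c B : ℝ}
    (h : ∀ t ∈ Set.uIcc 0 c, HasLineDerivAt ℝ F (G (z + t • v)) (z + t • v) v ∧ ‖G (z + t • v)‖ ≤ B) :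
    ‖F (z + c • v) - F z‖ ≤ B * |c| := by
  have := Convex.norm_image_sub_le_of_norm_hasDerivWithin_le (𝕜 := ℝ)
    (f := fun s : ℝ => F (z + s • v)) (f' := fun s => G (z + s • v))
    (s := Set.uIcc 0 c) (C := B) (x := 0) (y := c)
    (fun t ht => (lineDeriv_shift (h t ht).1).hasDerivWithinAt)
    (fun t ht => (h t ht).2) (convex_uIcc 0 c) Set.left_mem_uIcc Set.right_mem_uIcc
  simpa using this

theorem tele {ι : Type*} {b : ι → E} {F : E → ℂ} {G : ι → E → ℂ} {y : E} {r B : ℝ}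
    (h : ∀ z ∈ Metric.ball y r, ∀ m, HasLineDerivAt ℝ F (G m z) z (b m) ∧ ‖G m z‖ ≤ B)
    (c : ι → ℝ) (s : Finset ι) (hs : ∑ m ∈ s, |c m| * ‖b m‖ < r) :
    ‖F (y + ∑ m ∈ s, c m • b m) - F y‖ ≤ B * ∑ m ∈ s, |c m| := by
  classical
  induction s using Finset.induction_on with
  | empty => simp
  | insert i s hi ih =>
    rw [Finset.sum_insert hi] at hs
    have hs' : ∑ m ∈ s, |c m| * ‖b m‖ < r := by
      have : 0 ≤ |c i| * ‖b i‖ := by positivity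
      linarith
    have h1 := ih hs'
    have hno : ‖∑ m ∈ s, c m • b m‖ ≤ ∑ m ∈ s, |c m| * ‖b m‖ := by
      refine (norm_sum_le _ _).trans (le_of_eq ?_)
      apply Finset.sum_congr rfl; intro m _; rw [norm_smul, Real.norm_eq_abs]
    have h2 := lineDeriv_mvt (F := F) (G := G i) (z := y + ∑ m ∈ s, c m • b m) (v := b i) (c := c i)
      (B := B) (by
        intro t ht
        apply h
        rw [Metric.mem_ball, dist_eq_norm]
        have ht' : |t| ≤ |c i| := by
          rcases Set.mem_uIcc.1 ht with ⟨h1, h2⟩ | ⟨h1, h2⟩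
          · rw [abs_of_nonneg h1, abs_of_nonneg (h1.trans h2)]; exact h2
          · rw [abs_of_nonpos h2, abs_of_nonpos (h1.trans h2)]; linarith
        calc ‖y + ∑ m ∈ s, c m • b m + t • b i - y‖ = ‖∑ m ∈ s, c m • b m + t • b i‖ := by
              congr 1; abel
          _ ≤ ‖∑ m ∈ s, c m • b m‖ + |t| * ‖b i‖ := by
              refine (norm_add_le _ _).trans (le_of_eq ?_); rw [norm_smul, Real.norm_eq_abs]
          _ ≤ ∑ m ∈ s, |c m| * ‖b m‖ + |c i| * ‖b i‖ := by gcongr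
          _ < r := by linarith)
    rw [Finset.sum_insert hi, Finset.sum_insert hi]
    have e : y + (c i • b i + ∑ m ∈ s, c m • b m) = y + ∑ m ∈ s, c m • b m + c i • b i := by abel
    rw [e]
    calc _ ≤ ‖F (y + ∑ m ∈ s, c m • b m + c i • b i) - F (y + ∑ m ∈ s, c m • b m)‖
          + ‖F (y + ∑ m ∈ s, c m • b m) - F y‖ := by
          refine le_trans (le_of_eq ?_) (norm_add_le _ _); congr 1; ring
      _ ≤ _ := by rw [mul_add]; exact add_le_add h2 h1

variable [FiniteDimensional ℝ E] {ι : Type*} [Fintype ι]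

theorem tele2 (b : Module.Basis ι ℝ E) : ∃ K : ℝ, 0 < K ∧ ∀ (F : E → ℂ) (G : ι → E → ℂ) (y : E) (r B : ℝ),
    (∀ z ∈ Metric.ball y r, ∀ m, HasLineDerivAt ℝ F (G m z) z (b m) ∧ ‖G m z‖ ≤ B) → 0 ≤ B →
    ∀ v, K * ‖v‖ < r → ‖F (y + v) - F y‖ ≤ B * (K * ‖v‖) := by
  set L : ι → (E →L[ℝ] ℝ) := fun m => LinearMap.toContinuousLinearMap (b.coord m) with hL
  refine ⟨1 + ∑ m, ‖L m‖ * (1 + ‖b m‖), by positivity, ?_⟩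
  intro F G y r B h hB v hv
  have hc : ∀ m, |b.repr v m| ≤ ‖L m‖ * ‖v‖ := fun m => (L m).le_opNorm v
  have h1 : ∑ m, |b.repr v m| * ‖b m‖ ≤ (1 + ∑ m, ‖L m‖ * (1 + ‖b m‖)) * ‖v‖ := by
    rw [add_mul, Finset.sum_mul, one_mul]
    have : ∑ m, |b.repr v m| * ‖b m‖ ≤ ∑ m, ‖L m‖ * (1 + ‖b m‖) * ‖v‖ := by
      apply Finset.sum_le_sum; intro m _
      have h1 := mul_le_mul_of_nonneg_right (hc m) (norm_nonneg (b m))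
      have : 0 ≤ ‖L m‖ * ‖v‖ := by positivity
      nlinarith
    linarith [norm_nonneg v]
  have h2 : ∑ m, |b.repr v m| ≤ (1 + ∑ m, ‖L m‖ * (1 + ‖b m‖)) * ‖v‖ := by
    rw [add_mul, Finset.sum_mul, one_mul]
    have : ∑ m, |b.repr v m| ≤ ∑ m, ‖L m‖ * (1 + ‖b m‖) * ‖v‖ := by
      apply Finset.sum_le_sum; intro m _
      have h1 := hc m
      have : 0 ≤ ‖L m‖ * ‖v‖ * ‖b m‖ := by positivity
      nlinarith
    linarith [norm_nonneg v]
  have h3 := tele h (fun m => b.repr v m) Finset.univ (lt_of_le_of_lt h1 hv)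
  rw [b.sum_repr v] at h3
  exact h3.trans (mul_le_mul_of_nonneg_left h2 hB)

/-- A family of functions that is closed under partial derivatives and locally bounded consists of
smooth functions. -/
theorem smooth_of_family (b : Module.Basis ι ℝ E) {O : Set E} (hO : IsOpen O) (W : Set (E → ℂ))
    (hW : ∀ F ∈ W, ∀ m, ∃ G ∈ W, ∀ y ∈ O, HasLineDerivAt ℝ F (G y) y (b m))
    (hbd : ∀ F ∈ W, ∀ y ∈ O, ∃ r > 0, ∃ B, ∀ z ∈ Metric.ball y r, ‖F z‖ ≤ B) :
    ∀ F ∈ W, ContDiffOn ℝ ∞ F O := by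
  obtain ⟨K, hK, hT⟩ := tele2 b
  have hcont : ∀ F ∈ W, ∀ y ∈ O, ContinuousAt F y := by
    intro F hF y hy
    choose G hGW hG using hW F hF
    have hb := fun m => hbd (G m) (hGW m) y hy
    choose r hr B hB using hb
    obtain ⟨r0, hr0, hball⟩ := Metric.isOpen_iff.1 hO y hy
    obtain ⟨r1, hr1, hr1'⟩ : ∃ r1 > 0, ∀ m, r1 ≤ r m := by
      rcases isEmpty_or_nonempty ι with hι | hι
      · exact ⟨1, one_pos, fun m => (hι.false m).elim⟩
      · obtain ⟨m0, hm0⟩ := Finite.exists_min r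
        exact ⟨r m0, hr m0, hm0⟩
    have hB' : ∀ m, B m ≤ ∑ m, |B m| := fun m =>
      (le_abs_self _).trans (Finset.single_le_sum (f := fun m => |B m|) (fun i _ => abs_nonneg (B i)) (Finset.mem_univ m))
    have h1 := hT F G y (min r0 r1) (∑ m, |B m|) (by
      intro z hz m
      have hz0 : z ∈ Metric.ball y r0 := Metric.ball_subset_ball (min_le_left _ _) hz
      have hz1 : z ∈ Metric.ball y (r m) := Metric.ball_subset_ball ((min_le_right _ _).trans (hr1' m)) hz
      exact ⟨hG m z (hball hz0), (hB m z hz1).trans (hB' m)⟩)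
      (by positivity)
    set B0 := ∑ m, |B m|
    have hB0 : 0 ≤ B0 := by positivity
    rw [Metric.continuousAt_iff]
    intro ε hε
    refine ⟨min (min r0 r1 / K) (ε / (B0 * K + 1)), by positivity, ?_⟩
    intro x hx
    rw [dist_eq_norm] at hx ⊢
    have h2 := h1 (x - y) (by
      have := lt_of_lt_of_le hx (min_le_left _ _)
      rwa [lt_div_iff₀ hK, mul_comm] at this)
    rw [add_sub_cancel] at h2
    have h3 := lt_of_lt_of_le hx (min_le_right _ _)
    rw [lt_div_iff₀ (by positivity)] at h3
    have : 0 ≤ ‖x - y‖ := norm_nonneg _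
    nlinarith
  have hdiff : ∀ F ∈ W, ∃ G : ι → E → ℂ, (∀ m, G m ∈ W) ∧ ∀ y ∈ O, HasFDerivAt F
      (∑ m, ((LinearMap.toContinuousLinearMap (b.coord m)).smulRight (G m y) : E →L[ℝ] ℂ)) y := by
    intro F hF
    choose G hGW hG using hW F hF
    refine ⟨G, hGW, ?_⟩
    intro y hy
    set ℓ : E →L[ℝ] ℂ := ∑ m, ((LinearMap.toContinuousLinearMap (b.coord m)).smulRight (G m y) : E →L[ℝ] ℂ) with hℓ
    have hℓb : ∀ m, ℓ (b m) = G m y := by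
      intro m
      classical
      simp [hℓ, Finsupp.single_apply]
    obtain ⟨r0, hr0, hball⟩ := Metric.isOpen_iff.1 hO y hy
    rw [hasFDerivAt_iff_isLittleO_nhds_zero, Asymptotics.isLittleO_iff]
    intro ε hε
    have hev : ∀ᶠ z in 𝓝 y, ∀ m, ‖G m z - G m y‖ ≤ ε / K := by
      rw [Filter.eventually_all]
      intro m
      have := (Metric.continuousAt_iff'.1 (hcont (G m) (hGW m) y hy)) (ε / K) (by positivity)
      filter_upwards [this] with z hz
      rw [dist_eq_norm] at hz; exact hz.le
    obtain ⟨r1, hr1, hr1'⟩ := Metric.eventually_nhds_iff_ball.1 hev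
    have h1 := hT (fun z => F z - ℓ z) (fun m z => G m z - G m y) y (min r0 r1) (ε / K) (by
      intro z hz m
      have hz0 : z ∈ Metric.ball y r0 := Metric.ball_subset_ball (min_le_left _ _) hz
      have hz1 : z ∈ Metric.ball y r1 := Metric.ball_subset_ball (min_le_right _ _) hz
      refine ⟨?_, hr1' z hz1 m⟩
      have h2 : HasLineDerivAt ℝ (fun z => ℓ z) (G m y) z (b m) := by
        have := (ℓ.hasFDerivAt (x := z)).hasLineDerivAt (b m)
        rwa [hℓb] at this
      exact (hG m z (hball hz0)).sub h2) (by positivity)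
    have : ∀ᶠ v in 𝓝 (0 : E), ‖v‖ < min r0 r1 / K := by
      have := Metric.ball_mem_nhds (0 : E) (show 0 < min r0 r1 / K by positivity)
      filter_upwards [this] with v hv
      simpa using hv
    filter_upwards [this] with v hv
    have h2 := h1 v (by rwa [lt_div_iff₀ hK, mul_comm] at hv)
    have e1 : F (y + v) - ℓ (y + v) - (F y - ℓ y) = F (y + v) - F y - ℓ v := by
      rw [map_add]; ring
    rw [e1] at h2
    refine h2.trans (le_of_eq ?_)
    field_simp
  have hn : ∀ n : ℕ, ∀ F ∈ W, ContDiffOn ℝ n F O := by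
    intro n
    induction n with
    | zero =>
      intro F hF
      exact contDiffOn_zero.2 fun y hy => (hcont F hF y hy).continuousWithinAt
    | succ n ih =>
      intro F hF
      obtain ⟨G, hGW, hG⟩ := hdiff F hF
      push_cast
      rw [contDiffOn_succ_iff_fderiv_of_isOpen hO]
      refine ⟨fun y hy => (hG y hy).differentiableAt.differentiableWithinAt, by simp, ?_⟩
      have : ContDiffOn ℝ n (fun y => ∑ m, ((LinearMap.toContinuousLinearMap (b.coord m)).smulRight (G m y) : E →L[ℝ] ℂ)) O := by
        apply ContDiffOn.sum
        intro m _
        exact contDiffOn_const.smulRight (ih (G m) (hGW m))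
      exact this.congr fun y hy => (hG y hy).fderiv
  intro F hF
  exact contDiffOn_infty.2 fun n => hn n F hF
end Smooth

open scoped BigOperators ContDiff Topology
set_option linter.unusedSectionVars false

/-- difference quotients of holomorphic functions -/
theorem swap_deriv {𝕜 : Type*} [RCLike 𝕜] [NormedSpace 𝕜 ℂ] (hsm : ∀ (s : 𝕜) (c : ℂ), s • c = (s • (1 : ℂ)) * c) {H H1 H2 : 𝕜 → ℂ → ℂ} {r ρ B : ℝ} (hr : 0 < r) (hρ : 0 < ρ)
    (h1 : ∀ s ∈ Metric.ball (0 : 𝕜) r, ∀ c ∈ Metric.ball (0 : ℂ) ρ, HasDerivAt (fun s => H s c) (H1 s c) s)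
    (h2 : ∀ s ∈ Metric.ball (0 : 𝕜) r, ∀ c ∈ Metric.ball (0 : ℂ) ρ, HasDerivAt (fun s => H1 s c) (H2 s c) s)
    (hB : ∀ s ∈ Metric.ball (0 : 𝕜) r, ∀ c ∈ Metric.ball (0 : ℂ) ρ, ‖H2 s c‖ ≤ B)
    (hd : ∀ s ∈ Metric.ball (0 : 𝕜) r, DifferentiableOn ℂ (H s) (Metric.ball (0 : ℂ) ρ)) :
    DifferentiableOn ℂ (H1 0) (Metric.ball (0 : ℂ) ρ) ∧
      HasDerivAt (fun s => deriv (H s) 0) (deriv (H1 0) 0) 0 := by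
  have h0 : (0 : 𝕜) ∈ Metric.ball (0 : 𝕜) r := Metric.mem_ball_self hr
  have hB0 : 0 ≤ B := (norm_nonneg _).trans (hB 0 h0 0 (Metric.mem_ball_self hρ))
  -- first estimate
  have e1 : ∀ s ∈ Metric.ball (0 : 𝕜) r, ∀ c ∈ Metric.ball (0 : ℂ) ρ, ‖H1 s c - H1 0 c‖ ≤ B * ‖s‖ := by
    intro s hs c hc
    have := (convex_ball (0 : 𝕜) r).norm_image_sub_le_of_norm_hasDerivWithin_le
      (f := fun s => H1 s c) (f' := fun s => H2 s c) (C := B)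
      (fun t ht => (h2 t ht c hc).hasDerivWithinAt) (fun t ht => hB t ht c hc) h0 hs
    simpa using this
  have e2 : ∀ s ∈ Metric.ball (0 : 𝕜) r, ∀ c ∈ Metric.ball (0 : ℂ) ρ,
      ‖H s c - H 0 c - s • H1 0 c‖ ≤ B * ‖s‖ * ‖s‖ := by
    intro s hs c hc
    have hs' : ‖s‖ < r := by simpa using hs
    have hsub : Metric.closedBall (0 : 𝕜) ‖s‖ ⊆ Metric.ball 0 r := Metric.closedBall_subset_ball hs'
    have := (convex_closedBall (0 : 𝕜) ‖s‖).norm_image_sub_le_of_norm_hasDerivWithin_le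
      (f := fun t => H t c - t • H1 0 c) (f' := fun t => H1 t c - (1 : 𝕜) • H1 0 c) (C := B * ‖s‖) (x := 0) (y := s)
      (fun t ht => ((h1 t (hsub ht) c hc).sub ((hasDerivAt_id t).smul_const (H1 0 c))).hasDerivWithinAt)
      (fun t ht => by
        rw [one_smul]
        refine (e1 t (hsub ht) c hc).trans ?_
        have : ‖t‖ ≤ ‖s‖ := by simpa using ht
        gcongr) (by simp) (by simp)
    simp only [zero_smul, sub_zero] at this
    refine le_trans (le_of_eq ?_) this
    congr 1; ring
  have hunif : TendstoLocallyUniformlyOn (fun (s : 𝕜) (c : ℂ) => s⁻¹ • (H s c - H 0 c)) (H1 0) (𝓝[≠] (0 : 𝕜))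
      (Metric.ball (0 : ℂ) ρ) := by
    apply TendstoUniformlyOn.tendstoLocallyUniformlyOn
    rw [Metric.tendstoUniformlyOn_iff]
    intro ε hε
    have hev : ∀ᶠ s in 𝓝[≠] (0 : 𝕜), s ∈ Metric.ball (0 : 𝕜) (min r (ε / (B + 1))) :=
      mem_nhdsWithin_of_mem_nhds (Metric.ball_mem_nhds _ (by positivity))
    filter_upwards [hev, self_mem_nhdsWithin] with s hs hs0 c hc
    have hs0' : s ≠ 0 := hs0
    have hsr := Metric.ball_subset_ball (min_le_left _ _) hs
    have hsε : ‖s‖ < ε / (B + 1) := by simpa using Metric.ball_subset_ball (min_le_right _ _) hs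
    rw [dist_comm, dist_eq_norm]
    have : s⁻¹ • (H s c - H 0 c) - H1 0 c = s⁻¹ • (H s c - H 0 c - s • H1 0 c) := by
      rw [smul_sub s⁻¹ (H s c - H 0 c), smul_smul, inv_mul_cancel₀ hs0', one_smul]
    rw [this, norm_smul, norm_inv]
    have hsp : 0 < ‖s‖ := norm_pos_iff.2 hs0'
    calc ‖s‖⁻¹ * ‖H s c - H 0 c - s • H1 0 c‖ ≤ ‖s‖⁻¹ * (B * ‖s‖ * ‖s‖) := by
          gcongr; exact e2 s hsr c hc
      _ = B * ‖s‖ := by field_simp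
      _ < ε := by
          rw [lt_div_iff₀ (by positivity)] at hsε
          nlinarith
  have hdiffQ : ∀ᶠ s in 𝓝[≠] (0 : 𝕜), DifferentiableOn ℂ (fun c => s⁻¹ • (H s c - H 0 c)) (Metric.ball (0 : ℂ) ρ) := by
    have hev : ∀ᶠ s in 𝓝[≠] (0 : 𝕜), s ∈ Metric.ball (0 : 𝕜) r :=
      mem_nhdsWithin_of_mem_nhds (Metric.ball_mem_nhds _ hr)
    filter_upwards [hev] with s hs
    have := ((hd s hs).sub (hd 0 h0))
    have h3 : (fun c => s⁻¹ • (H s c - H 0 c)) = fun c => (s⁻¹ • (1 : ℂ)) * (H s c - H 0 c) := by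
      funext c; exact hsm _ _
    rw [h3]
    exact this.const_mul _
  refine ⟨hunif.differentiableOn hdiffQ Metric.isOpen_ball, ?_⟩
  have hder := hunif.deriv hdiffQ Metric.isOpen_ball
  have ht := hder.tendsto_at (Metric.mem_ball_self hρ)
  rw [hasDerivAt_iff_tendsto_slope]
  refine ht.congr' ?_
  have hev : ∀ᶠ s in 𝓝[≠] (0 : 𝕜), s ∈ Metric.ball (0 : 𝕜) r :=
      mem_nhdsWithin_of_mem_nhds (Metric.ball_mem_nhds _ hr)
  filter_upwards [hev] with s hs
  have d1 : DifferentiableAt ℂ (H s) 0 := (hd s hs).differentiableAt (Metric.ball_mem_nhds _ hρ)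
  have d2 : DifferentiableAt ℂ (H 0) 0 := (hd 0 h0).differentiableAt (Metric.ball_mem_nhds _ hρ)
  simp only [Function.comp, slope, sub_zero, vsub_eq_sub]
  have h3 : (fun c => s⁻¹ • (H s c - H 0 c)) = fun c => (s⁻¹ • (1 : ℂ)) * (H s c - H 0 c) := by
    funext c; exact hsm _ _
  rw [h3, deriv_const_mul (d := fun c => H s c - H 0 c) _ (d1.sub d2), hsm s⁻¹ (deriv (H s) 0 - deriv (H 0) 0)]
  congr 1
  exact deriv_sub d1 d2

section Fam
variable {E : Type*} [NormedAddCommGroup E] [NormedSpace ℝ E] {V : Type*} [Fintype V] [DecidableEq V]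

/-- slice derivative in the `l`-th complex variable -/
noncomputable def SD (l : V) (F : E × (V → ℂ) → ℂ) : E × (V → ℂ) → ℂ :=
  fun y => deriv (fun c : ℂ => F (y.1, y.2 + Pi.single l c)) 0

def BddC (Ω : Set E) (F : E × (V → ℂ) → ℂ) : Prop :=
  ∀ K : Set (E × (V → ℂ)), IsCompact K → K ⊆ Ω ×ˢ Set.univ → ∃ B, ∀ y ∈ K, ‖F y‖ ≤ B

def SHol (Ω : Set E) (F : E × (V → ℂ) → ℂ) (l : V) : Prop :=
  ∀ p ∈ Ω, ∀ z : V → ℂ, Differentiable ℂ (fun c : ℂ => F (p, z + Pi.single l c))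

theorem SHol.hasDeriv {Ω : Set E} {F : E × (V → ℂ) → ℂ} {l : V} (h : SHol Ω F l) {p : E} (hp : p ∈ Ω)
    (z : V → ℂ) (c : ℂ) :
    HasDerivAt (fun c : ℂ => F (p, z + Pi.single l c)) (SD l F (p, z + Pi.single l c)) c := by
  have h1 := ((h p hp (z + Pi.single l c)) 0).hasDerivAt
  have h2 : HasDerivAt (fun s : ℂ => s - c) 1 c := (hasDerivAt_id c).sub_const c
  have h3 := HasDerivAt.comp_of_eq (h₂ := fun s : ℂ => F (p, z + Pi.single l c + Pi.single l s)) c h1 h2 (by simp)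
  rw [mul_one] at h3
  refine h3.congr_of_eventuallyEq (Filter.Eventually.of_forall fun s => ?_)
  simp only [Function.comp]
  rw [add_assoc, ← Pi.single_add]; congr 4; ring

theorem SD_line {Ω : Set E} {F : E × (V → ℂ) → ℂ} {l : V} (h : SHol Ω F l) {y : E × (V → ℂ)} (hy : y.1 ∈ Ω)
    (a : ℂ) : HasLineDerivAt ℝ F (a * SD l F y) y (0, Pi.single l a) := by
  unfold HasLineDerivAt
  have h1 := h.hasDeriv hy y.2 0
  have h2 : HasDerivAt (fun s : ℝ => (s : ℂ) * a) a 0 := by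
    simpa using (Complex.ofRealCLM.hasDerivAt (x := (0:ℝ))).mul_const a
  have h3 := HasDerivAt.comp_of_eq (h₂ := fun c : ℂ => F (y.1, y.2 + Pi.single l c)) (0 : ℝ) h1 h2 (by simp)
  simp only [Pi.single_zero, add_zero] at h3
  rw [mul_comm]
  refine h3.congr_of_eventuallyEq (Filter.Eventually.of_forall fun s => ?_)
  simp only [Function.comp]
  congr 1
  ext i
  · simp
  · by_cases hi : i = l
    · subst hi; simp
    · simp [hi]

theorem SHol.bddC {Ω : Set E} {F : E × (V → ℂ) → ℂ} {l : V} (h : SHol Ω F l) (hb : BddC Ω F) :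
    BddC Ω (SD l F) := by
  intro K hK hKΩ
  have hc : Continuous fun q : (E × (V → ℂ)) × ℂ => ((q.1.1, q.1.2 + Pi.single l q.2) : E × (V → ℂ)) := by
    have : Continuous fun c : ℂ => (Pi.single l c : V → ℂ) := continuous_single (A := fun _ : V => ℂ) l
    fun_prop
  obtain ⟨B, hB⟩ := hb _ ((hK.prod (isCompact_closedBall (0 : ℂ) 1)).image hc) (by
    rintro _ ⟨q, hq, rfl⟩
    exact ⟨(hKΩ hq.1).1, trivial⟩)
  refine ⟨B, fun y hy => ?_⟩
  have := Complex.norm_deriv_le_of_forall_mem_sphere_norm_le (f := fun c : ℂ => F (y.1, y.2 + Pi.single l c))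
    (c := 0) (R := 1) (C := B) one_pos (h y.1 (hKΩ hy).1 y.2).diffContOnCl (by
      intro c hc
      exact hB _ ⟨(y, c), ⟨hy, Metric.sphere_subset_closedBall hc⟩, rfl⟩)
  simpa [SD] using this

theorem SHol.sd {Ω : Set E} {F : E × (V → ℂ) → ℂ} {l l' : V} (h : SHol Ω F l) (h' : SHol Ω F l') (hb : BddC Ω F) :
    SHol Ω (SD l' F) l := by
  have hself : SHol Ω (SD l' F) l' := by
    intro p hp z
    have : (fun c : ℂ => SD l' F (p, z + Pi.single l' c)) = deriv (fun c : ℂ => F (p, z + Pi.single l' c)) := by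
      funext c; exact ((h'.hasDeriv hp z c).deriv).symm
    rw [this]
    exact (h' p hp z).deriv
  have hb2 := hself.bddC (h'.bddC hb)
  intro p hp z c0
  have hc : Continuous fun q : ℂ × ℂ => ((p, z + Pi.single l c0 + Pi.single l' q.1 + Pi.single l q.2) : E × (V → ℂ)) := by
    have h1 : ∀ l : V, Continuous fun c : ℂ => (Pi.single l c : V → ℂ) := fun l => continuous_single (A := fun _ : V => ℂ) l
    have h2 := h1 l
    have h3 := h1 l'
    fun_prop
  obtain ⟨B, hB⟩ := hb2 _ (((isCompact_closedBall (0 : ℂ) 1).prod (isCompact_closedBall (0 : ℂ) 1)).image hc) (by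
    rintro _ ⟨q, hq, rfl⟩
    exact ⟨hp, trivial⟩)
  have key := swap_deriv (𝕜 := ℂ) (fun s c => by simp)
    (H := fun s c => F (p, z + Pi.single l c0 + Pi.single l' s + Pi.single l c))
    (H1 := fun s c => SD l' F (p, z + Pi.single l c0 + Pi.single l' s + Pi.single l c))
    (H2 := fun s c => SD l' (SD l' F) (p, z + Pi.single l c0 + Pi.single l' s + Pi.single l c))
    (r := 1) (ρ := 1) (B := B) one_pos one_pos
    (fun s _ c _ => by
      have := h'.hasDeriv hp (z + Pi.single l c0 + Pi.single l c) s
      simp only [add_right_comm _ (Pi.single l c : V → ℂ) (Pi.single l' _ : V → ℂ)] at this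
      exact this)
    (fun s _ c _ => by
      have := hself.hasDeriv hp (z + Pi.single l c0 + Pi.single l c) s
      simp only [add_right_comm _ (Pi.single l c : V → ℂ) (Pi.single l' _ : V → ℂ)] at this
      exact this)
    (fun s hs c hc => hB _ ⟨(s, c), ⟨Metric.ball_subset_closedBall hs, Metric.ball_subset_closedBall hc⟩, rfl⟩)
    (fun s _ => (h p hp _).differentiableOn)
  have k1 := key.1.differentiableAt (Metric.ball_mem_nhds (0 : ℂ) one_pos)
  simp only [Pi.single_zero, add_zero] at k1
  have h2 : DifferentiableAt ℂ (fun s : ℂ => s - c0) c0 := differentiableAt_id.sub_const c0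
  have h3 := DifferentiableAt.comp (g := fun c => SD l' F (p, z + Pi.single l c0 + Pi.single l c)) c0
    (by simpa using k1) h2
  refine h3.congr_of_eventuallyEq (Filter.Eventually.of_forall fun s => ?_)
  simp only [Function.comp]
  rw [add_assoc, ← Pi.single_add]; congr 4; ring

theorem SHol.line {Ω : Set E} (hΩ : IsOpen Ω) {F F1 F2 : E × (V → ℂ) → ℂ} {l : V} {v : E} (h : SHol Ω F l)
    (hb2 : BddC Ω F2)
    (h1 : ∀ y, y.1 ∈ Ω → HasLineDerivAt ℝ F (F1 y) y (v, 0))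
    (h2 : ∀ y, y.1 ∈ Ω → HasLineDerivAt ℝ F1 (F2 y) y (v, 0)) :
    SHol Ω F1 l ∧ ∀ y, y.1 ∈ Ω → HasLineDerivAt ℝ (SD l F) (SD l F1 y) y (v, 0) := by
  have main : ∀ p ∈ Ω, ∀ z : V → ℂ, DifferentiableAt ℂ (fun c => F1 (p, z + Pi.single l c)) 0 ∧
      HasLineDerivAt ℝ (SD l F) (SD l F1 (p, z)) (p, z) (v, 0) := by
    intro p hp z
    have hcv : Continuous fun s : ℝ => p + s • v := by fun_prop
    obtain ⟨r, hr, hrΩ⟩ : ∃ r > 0, ∀ s ∈ Metric.closedBall (0 : ℝ) r, p + s • v ∈ Ω := by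
      have : (fun s : ℝ => p + s • v) ⁻¹' Ω ∈ 𝓝 (0 : ℝ) := hcv.continuousAt.preimage_mem_nhds (by
        simpa using hΩ.mem_nhds hp)
      obtain ⟨r, hr, hrb⟩ := Metric.mem_nhds_iff.1 this
      exact ⟨r / 2, by positivity, fun s hs => hrb (Metric.closedBall_subset_ball (by linarith) hs)⟩
    have hc : Continuous fun q : ℝ × ℂ => ((p + q.1 • v, z + Pi.single l q.2) : E × (V → ℂ)) := by
      have h2 : Continuous fun c : ℂ => (Pi.single l c : V → ℂ) := continuous_single (A := fun _ : V => ℂ) l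
      fun_prop
    obtain ⟨B, hB⟩ := hb2 _ (((isCompact_closedBall (0 : ℝ) r).prod (isCompact_closedBall (0 : ℂ) 1)).image hc) (by
      rintro _ ⟨q, hq, rfl⟩
      exact ⟨hrΩ _ hq.1, trivial⟩)
    have key := swap_deriv (𝕜 := ℝ) (fun s c => by simp)
      (H := fun s c => F (p + s • v, z + Pi.single l c))
      (H1 := fun s c => F1 (p + s • v, z + Pi.single l c))
      (H2 := fun s c => F2 (p + s • v, z + Pi.single l c))
      (r := r) (ρ := 1) (B := B) hr one_pos
      (fun s hs c _ => by
        have := lineDeriv_shift (z := (p, z + Pi.single l c)) (v := ((v, 0) : E × (V → ℂ))) (t := s) (F := F)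
          (h1 _ (by simpa using hrΩ s (Metric.ball_subset_closedBall hs)))
        simpa using this)
      (fun s hs c _ => by
        have := lineDeriv_shift (z := (p, z + Pi.single l c)) (v := ((v, 0) : E × (V → ℂ))) (t := s) (F := F1)
          (h2 _ (by simpa using hrΩ s (Metric.ball_subset_closedBall hs)))
        simpa using this)
      (fun s hs c hc => hB _ ⟨(s, c), ⟨Metric.ball_subset_closedBall hs, Metric.ball_subset_closedBall hc⟩, rfl⟩)
      (fun s hs => (h _ (hrΩ s (Metric.ball_subset_closedBall hs)) _).differentiableOn)
    refine ⟨by simpa using key.1.differentiableAt (Metric.ball_mem_nhds (0 : ℂ) one_pos), ?_⟩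
    have k2 := key.2
    unfold HasLineDerivAt
    simpa [SD] using k2
  refine ⟨?_, fun y hy => (main y.1 hy y.2).2⟩
  intro p hp z c0
  have k1 := (main p hp (z + Pi.single l c0)).1
  have h2 : DifferentiableAt ℂ (fun s : ℂ => s - c0) c0 := differentiableAt_id.sub_const c0
  have h3 := DifferentiableAt.comp (g := fun c => F1 (p, z + Pi.single l c0 + Pi.single l c)) c0
    (by simpa using k1) h2
  refine h3.congr_of_eventuallyEq (Filter.Eventually.of_forall fun s => ?_)
  simp only [Function.comp]
  rw [add_assoc, ← Pi.single_add]; congr 4; ring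
end Fam

open scoped BigOperators ContDiff Topology
set_option linter.unusedSectionVars false

section Goal
variable {E : Type*} [NormedAddCommGroup E] [NormedSpace ℝ E] [FiniteDimensional ℝ E]
  {V : Type*} [Fintype V] [DecidableEq V] {ι : Type*} [Fintype ι]

/-- the family of mixed derivatives -/
noncomputable def GF (b : ι → E) (f : E × (V → ℂ) → ℂ) (α : List ι) : List V → E × (V → ℂ) → ℂ
  | [] => fun y => DW b α (fun p => f (p, y.2)) y.1
  | l :: γ => SD l (GF b f α γ)

/-- directions in the product space -/
def eY (b : ι → E) : ι ⊕ V → E × (V → ℂ)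
  | Sum.inl i => (b i, 0)
  | Sum.inr l => (0, Pi.single l 1)

variable {b : ι → E} {f : E × (V → ℂ) → ℂ} {Ω : Set E}

theorem GF_base_line (hΩ : IsOpen Ω) (hsm : ∀ z, ContDiffOn ℝ ∞ (fun p => f (p, z)) Ω) (α : List ι) (i : ι)
    (y : E × (V → ℂ)) (hy : y.1 ∈ Ω) :
    HasLineDerivAt ℝ (GF b f α []) (GF b f (i :: α) [] y) y (b i, 0) := by
  have h1 := (smooth_diffAt hΩ (DW_smooth (e := b) hΩ (hsm y.2) α) hy).hasFDerivAt.hasLineDerivAt (b i)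
  unfold HasLineDerivAt at h1 ⊢
  simpa [GF, DW, PD] using h1

theorem GF_main (hΩ : IsOpen Ω) (hsm : ∀ z, ContDiffOn ℝ ∞ (fun p => f (p, z)) Ω)
    (hhol : ∀ l, SHol Ω f l) (hbd : ∀ α : List ι, BddC Ω (GF b f α [])) (γ : List V) :
    ∀ α : List ι, BddC Ω (GF b f α γ) ∧ (∀ l, SHol Ω (GF b f α γ) l) ∧
      ∀ i, ∀ y : E × (V → ℂ), y.1 ∈ Ω → HasLineDerivAt ℝ (GF b f α γ) (GF b f (i :: α) γ y) y (b i, 0) := by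
  induction γ with
  | nil =>
    intro α
    refine ⟨hbd α, ?_, fun i y hy => GF_base_line hΩ hsm α i y hy⟩
    induction α with
    | nil => exact hhol
    | cons i α ih =>
      intro l
      exact ((ih l).line hΩ (hbd (i :: i :: α)) (fun y hy => GF_base_line hΩ hsm α i y hy)
        (fun y hy => GF_base_line hΩ hsm (i :: α) i y hy)).1
  | cons l γ ih =>
    intro α
    obtain ⟨h1, h2, h3⟩ := ih α
    refine ⟨(h2 l).bddC h1, fun l' => (h2 l').sd (h2 l) h1, fun i y hy => ?_⟩
    exact ((h2 l).line hΩ (ih (i :: i :: α)).1 (fun y hy => (ih α).2.2 i y hy)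
      (fun y hy => (ih (i :: α)).2.2 i y hy)).2 y hy

theorem GF_smooth (bb : Module.Basis ι ℝ E) (hΩ : IsOpen Ω) (hsm : ∀ z, ContDiffOn ℝ ∞ (fun p => f (p, z)) Ω)
    (hhol : ∀ l, SHol Ω f l) (hbd : ∀ α : List ι, BddC Ω (GF bb f α [])) (α : List ι) (γ : List V) :
    ContDiffOn ℝ ∞ (GF bb f α γ) (Ω ×ˢ Set.univ) := by
  have hO : IsOpen (Ω ×ˢ (Set.univ : Set (V → ℂ))) := hΩ.prod isOpen_univ
  have hm := GF_main hΩ hsm hhol hbd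
  let B := bb.prod (Pi.basis (fun _ : V => Complex.basisOneI))
  have key := smooth_of_family B hO
    (Set.range fun q : ℂ × List ι × List V => fun y => q.1 * GF bb f q.2.1 q.2.2 y) (by
      rintro _ ⟨⟨c, α, γ⟩, rfl⟩ m
      rcases m with i | ⟨l, t⟩
      · refine ⟨_, ⟨(c, i :: α, γ), rfl⟩, ?_⟩
        intro y hy
        have := (hm γ α).2.2 i y hy.1
        have e : B (Sum.inl i) = (bb i, 0) := by
          simp [B]
        rw [e]
        unfold HasLineDerivAt at this ⊢
        exact this.const_mul c
      · refine ⟨_, ⟨(c * Complex.basisOneI t, α, l :: γ), rfl⟩, ?_⟩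
        intro y hy
        have := SD_line ((hm γ α).2.1 l) hy.1 (Complex.basisOneI t)
        have e : B (Sum.inr ⟨l, t⟩) = (0, Pi.single l (Complex.basisOneI t)) := by
          simp [B, Pi.basis_apply]
        rw [e]
        unfold HasLineDerivAt at this ⊢
        have h2 := this.const_mul c
        simp only [GF]
        rw [mul_assoc]
        exact h2)
    (by
      rintro _ ⟨⟨c, α, γ⟩, rfl⟩ y hy
      obtain ⟨r, hr, hrb⟩ := Metric.isOpen_iff.1 hO y hy
      obtain ⟨C, hC⟩ := (hm γ α).1 (Metric.closedBall y (r / 2)) (isCompact_closedBall _ _)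
        ((Metric.closedBall_subset_ball (by linarith)).trans hrb)
      refine ⟨r / 2, by positivity, ‖c‖ * C, fun z hz => ?_⟩
      rw [norm_mul]
      exact mul_le_mul_of_nonneg_left (hC z (Metric.ball_subset_closedBall hz)) (norm_nonneg _))
  have := key _ ⟨(1, α, γ), rfl⟩
  simpa using this

/-- E-part and V-part of a word -/
def wE : List (ι ⊕ V) → List ι
  | [] => []
  | Sum.inl i :: w => i :: wE w
  | Sum.inr _ :: w => wE w
def wV : List (ι ⊕ V) → List V
  | [] => []
  | Sum.inl _ :: w => wV w
  | Sum.inr l :: w => l :: wV w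
theorem wlen (w : List (ι ⊕ V)) : (wE w).length + (wV w).length = w.length := by
  induction w with
  | nil => rfl
  | cons m w ih => rcases m with i | l <;> simp [wE, wV] <;> omega

theorem GF_DW (bb : Module.Basis ι ℝ E) (hΩ : IsOpen Ω) (hsm : ∀ z, ContDiffOn ℝ ∞ (fun p => f (p, z)) Ω)
    (hhol : ∀ l, SHol Ω f l) (hbd : ∀ α : List ι, BddC Ω (GF bb f α [])) (w : List (ι ⊕ V)) :
    Set.EqOn (DW (eY bb) w f) (GF bb f (wE w) (wV w)) (Ω ×ˢ Set.univ) := by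
  have hO : IsOpen (Ω ×ˢ (Set.univ : Set (V → ℂ))) := hΩ.prod isOpen_univ
  have hm := GF_main hΩ hsm hhol hbd
  induction w with
  | nil => intro y hy; rfl
  | cons m w ih =>
    intro y hy
    have h1 : DW (eY bb) (m :: w) f y = PD (eY bb) m (GF bb f (wE w) (wV w)) y := PD_congr hO ih m hy
    rw [h1]
    have h2 := (smooth_diffAt hO (GF_smooth bb hΩ hsm hhol hbd (wE w) (wV w)) hy).hasFDerivAt.hasLineDerivAt (eY bb m)
    rcases m with i | l
    · exact h2.unique ((hm (wV w) (wE w)).2.2 i y hy.1)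
    · have := SD_line ((hm (wV w) (wE w)).2.1 l) hy.1 1
      rw [one_mul] at this
      exact h2.unique this

theorem GF_hol (bb : Module.Basis ι ℝ E) (hΩ : IsOpen Ω) (hsm : ∀ z, ContDiffOn ℝ ∞ (fun p => f (p, z)) Ω)
    (hhol : ∀ l, SHol Ω f l) (hbd : ∀ α : List ι, BddC Ω (GF bb f α [])) : HolO (Ω ×ˢ Set.univ) f := by
  have hO : IsOpen (Ω ×ˢ (Set.univ : Set (V → ℂ))) := hΩ.prod isOpen_univ
  have hs := GF_smooth bb hΩ hsm hhol hbd [] []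
  intro y hy z
  have h2 := (smooth_diffAt hO (show ContDiffOn ℝ ∞ f _ from hs) hy).hasFDerivAt
  have h3 : ∀ l a, fderiv ℝ f y (0, Pi.single l a) = a * SD l f y := fun l a =>
    (h2.hasLineDerivAt _).unique (SD_line (hhol l) hy.1 a)
  have h4 : ∀ z : V → ℂ, fderiv ℝ f y (0, z) = ∑ l, z l * SD l f y := by
    intro z
    have : ((0, z) : E × (V → ℂ)) = ∑ l, (0, Pi.single l (z l)) := by
      ext i
      · simp [Prod.fst_sum]
      · simp [Prod.snd_sum, Finset.sum_apply, Pi.single_apply]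
    rw [this, map_sum]
    simp only [h3]
  rw [h4, h4, Finset.mul_sum]
  simp [mul_assoc]

theorem SD_cauchy {F : E × (V → ℂ) → ℂ} {l : V} (h : SHol Ω F l) {p : E} (hp : p ∈ Ω)
    {z0 : V → ℂ} {R B δ : ℝ} (hδ : 0 < δ) (hB : ∀ z ∈ Metric.closedBall z0 (R + δ), ‖F (p, z)‖ ≤ B) :
    ∀ z ∈ Metric.closedBall z0 R, ‖SD l F (p, z)‖ ≤ B / δ := by
  intro z hz
  have hin : ∀ c ∈ Metric.sphere (0 : ℂ) δ, ‖F (p, z + Pi.single l c)‖ ≤ B := by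
    intro c hc
    apply hB
    rw [mem_closedBall_iff_norm] at hz ⊢
    have hc' : ‖c‖ = δ := mem_sphere_zero_iff_norm.1 hc
    have h1 : ‖(Pi.single l c : V → ℂ)‖ = δ := by rw [← hc']; exact Pi.norm_single (G := fun _ : V => ℂ) c
    have h2 : z + Pi.single l c - z0 = (z - z0) + Pi.single l c := by abel
    rw [h2]
    exact (norm_add_le _ _).trans (add_le_add hz h1.le)
  exact Complex.norm_deriv_le_of_forall_mem_sphere_norm_le hδ (h p hp z).diffContOnCl hin

theorem GF_cauchy (hΩ : IsOpen Ω) (hsm : ∀ z, ContDiffOn ℝ ∞ (fun p => f (p, z)) Ω)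
    (hhol : ∀ l, SHol Ω f l) (hbd : ∀ α : List ι, BddC Ω (GF b f α [])) (α : List ι) {p : E} (hp : p ∈ Ω)
    {z0 : V → ℂ} {R B δ : ℝ} (hδ : 0 < δ)
    (h : ∀ z ∈ Metric.closedBall z0 R, ‖GF b f α [] (p, z)‖ ≤ B) (γ : List V) :
    ∀ z ∈ Metric.closedBall z0 (R - γ.length * δ), ‖GF b f α γ (p, z)‖ ≤ B / δ ^ γ.length := by
  have hm := GF_main hΩ hsm hhol hbd
  induction γ with
  | nil => simpa using h
  | cons l γ ih =>
    intro z hz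
    have := SD_cauchy ((hm γ α).2.1 l) hp hδ (z0 := z0) (R := R - (l :: γ).length * δ) (B := B / δ ^ γ.length) (by
      have e : R - (l :: γ).length * δ + δ = R - γ.length * δ := by
        simp only [List.length_cons]; push_cast; ring
      rw [e]; exact ih) z hz
    refine this.trans (le_of_eq ?_)
    rw [List.length_cons, pow_succ, div_div]

theorem f_class {M : ℕ → ℝ} (hM : WM M) (bb : Module.Basis ι ℝ E) (hΩ : IsOpen Ω)
    (hsm : ∀ z, ContDiffOn ℝ ∞ (fun p => f (p, z)) Ω)
    (hhol : ∀ l, SHol Ω f l)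
    (hCM : ∀ K : Set (E × (V → ℂ)), IsCompact K → K ⊆ Ω ×ˢ Set.univ → ∃ C > (0 : ℝ), ∀ α : List ι, ∀ y ∈ K,
      ‖DW bb α (fun p => f (p, y.2)) y.1‖ ≤ C ^ (α.length + 1) * M α.length)
    (y0 : E × (V → ℂ)) (hy0 : y0.1 ∈ Ω) :
    ∃ r > 0, Metric.ball y0.1 r ⊆ Ω ∧ ∃ C h : ℝ, 0 ≤ C ∧ 0 ≤ h ∧
      Cl (eY bb) (Metric.ball y0.1 r ×ˢ Metric.ball y0.2 r) M C h 0 f := by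
  have hbd : ∀ α : List ι, BddC Ω (GF bb f α []) := by
    intro α K hK hKΩ
    obtain ⟨C, hC, h⟩ := hCM K hK hKΩ
    exact ⟨_, fun y hy => h α y hy⟩
  have hO : IsOpen (Ω ×ˢ (Set.univ : Set (V → ℂ))) := hΩ.prod isOpen_univ
  obtain ⟨r0, hr0, hrb⟩ := Metric.isOpen_iff.1 hΩ y0.1 hy0
  obtain ⟨r, hrp, hsub⟩ : ∃ r > 0, Metric.closedBall y0.1 r ⊆ Ω :=
    ⟨r0 / 2, by positivity, (Metric.closedBall_subset_ball (by linarith)).trans hrb⟩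
  obtain ⟨C, hC, hb⟩ := hCM (Metric.closedBall y0.1 r ×ˢ Metric.closedBall y0.2 (2 * r))
    ((isCompact_closedBall _ _).prod (isCompact_closedBall _ _)) (Set.prod_mono hsub (Set.subset_univ _))
  have hsub' : Metric.ball y0.1 r ⊆ Ω := Metric.ball_subset_closedBall.trans hsub
  have hsubO : Metric.ball y0.1 r ×ˢ Metric.ball y0.2 r ⊆ Ω ×ˢ (Set.univ : Set (V → ℂ)) :=
    Set.prod_mono hsub' (Set.subset_univ _)
  refine ⟨r, hrp, hsub', C * Real.exp 1, (1 + C) * (1 + Real.exp 1 / r), by positivity, by positivity, ?_, ?_, ?_⟩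
  · exact (show ContDiffOn ℝ ∞ f _ from GF_smooth bb hΩ hsm hhol hbd [] []).mono hsubO
  · intro y hy z
    exact GF_hol bb hΩ hsm hhol hbd y (hsubO hy) z
  · intro w y hy
    rw [GF_DW bb hΩ hsm hhol hbd w (hsubO hy)]
    set a := (wE w).length with ha
    set k := (wV w).length with hk
    have hak : a + k = w.length := wlen w
    have h1 := GF_cauchy hΩ hsm hhol hbd (wE w) (hsub' hy.1) (z0 := y0.2) (R := 2 * r) (B := C ^ (a + 1) * M a)
      (δ := r / (k + 1)) (by positivity) (fun z hz => hb (wE w) (y.1, z) ⟨Metric.ball_subset_closedBall hy.1, hz⟩)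
      (wV w) y.2 (by
        rw [Metric.mem_closedBall]
        have h2 : dist y.2 y0.2 < r := hy.2
        have h3 : (k : ℝ) * (r / (k + 1)) ≤ r := by
          rw [mul_div_assoc', div_le_iff₀ (by positivity)]; nlinarith
        linarith)
    rw [← hk] at h1
    refine h1.trans ?_
    have hM1 := hM.fact a k
    rw [← hak, add_zero]
    have hMa := hM.pos a
    have hexp : ((k : ℝ) + 1) ^ k ≤ Real.exp 1 ^ (k + 1) * k.factorial := by
      have := Real.pow_div_factorial_le_exp ((k : ℝ) + 1) (by positivity) k
      rw [div_le_iff₀ (by positivity)] at this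
      rw [← Real.exp_nat_mul, mul_one]; push_cast; exact this
    have hfac : (0 : ℝ) < k.factorial := by positivity
    have hMk := hM.pos (a + k)
    calc C ^ (a + 1) * M a / (r / (k + 1)) ^ k = C ^ (a + 1) * M a * ((k + 1) ^ k / r ^ k) := by
          rw [div_pow]; field_simp
      _ ≤ C ^ (a + 1) * M a * ((Real.exp 1 ^ (k + 1) * k.factorial) / r ^ k) := by gcongr
      _ = C * Real.exp 1 * (C ^ a * (Real.exp 1 / r) ^ k) * (M a * k.factorial) := by
          rw [div_pow]; ring
      _ ≤ C * Real.exp 1 * ((1 + C) ^ (a + k) * (1 + Real.exp 1 / r) ^ (a + k)) * M (a + k) := by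
          gcongr
          · calc C ^ a ≤ (1 + C) ^ a := by gcongr; linarith
              _ ≤ _ := pow_le_pow_right₀ (by linarith) (by omega)
          · have : 0 ≤ Real.exp 1 / r := by positivity
            calc (Real.exp 1 / r) ^ k ≤ (1 + Real.exp 1 / r) ^ k := by gcongr; linarith
              _ ≤ _ := pow_le_pow_right₀ (by linarith) (by omega)
      _ = _ := by rw [mul_pow]
end Goal

open scoped BigOperators ContDiff Topology
set_option linter.unusedSectionVars false

section PDx
variable {E : Type*} [NormedAddCommGroup E] [NormedSpace ℝ E] {Y : Type*}

theorem PD_comm {e : Y → E} {O : Set E} (hO : IsOpen O) {F : E → ℂ} (hs : ContDiffOn ℝ ∞ F O) (m m' : Y) :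
    Set.EqOn (PD e m (PD e m' F)) (PD e m' (PD e m F)) O := by
  intro y hy
  have hc : ContDiffAt ℝ ∞ F y := hs.contDiffAt (hO.mem_nhds hy)
  have hd : DifferentiableAt ℝ (fderiv ℝ F) y :=
    ((hc.fderiv_right (m := 1) (by exact WithTop.coe_le_coe.2 le_top)).differentiableAt (by simp))
  have hsym : IsSymmSndFDerivAt ℝ F y := by
    apply hc.isSymmSndFDerivAt
    simp only [minSmoothness_of_isRCLikeNormedField]
    exact WithTop.coe_le_coe.2 le_top
  have h1 : ∀ m m', PD e m (PD e m' F) y = fderiv ℝ (fderiv ℝ F) y (e m) (e m') := by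
    intro m m'
    have : HasFDerivAt (fun y => fderiv ℝ F y (e m')) ((fderiv ℝ (fderiv ℝ F) y).flip (e m')) y := by
      have := hd.hasFDerivAt.clm_apply (hasFDerivAt_const (e m') y)
      have e0 : fderiv ℝ F y ∘SL (0 : E →L[ℝ] E) + (fderiv ℝ (fderiv ℝ F) y).flip (e m')
        = (fderiv ℝ (fderiv ℝ F) y).flip (e m') := by simp
      rw [← e0]; exact this
    show fderiv ℝ (fun y => fderiv ℝ F y (e m')) y (e m) = _
    rw [this.fderiv]; rfl
  rw [h1, h1]
  exact hsym.eq _ _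

theorem DW_perm {e : Y → E} {O : Set E} (hO : IsOpen O) {F : E → ℂ} (hs : ContDiffOn ℝ ∞ F O) {w w' : List Y}
    (h : w.Perm w') : Set.EqOn (DW e w F) (DW e w' F) O := by
  induction h with
  | nil => exact fun y _ => rfl
  | cons m _ ih => exact PD_congr hO ih m
  | swap m m' w => exact PD_comm hO (DW_smooth hO hs w) m' m
  | trans _ _ ih1 ih2 => exact ih1.trans ih2

theorem DW_replicate (e : Y → E) (m : Y) (k : ℕ) (F : E → ℂ) :
    DW e (List.replicate k m) F = (PD e m)^[k] F := by
  induction k with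
  | zero => rfl
  | succ k ih => rw [List.replicate_succ, Function.iterate_succ_apply', ← ih]; rfl

theorem DW_flatten (e : Y → E) (L : List (List Y)) (F : E → ℂ) :
    (L.map (fun w => DW e w)).foldr (· ∘ ·) id F = DW e L.flatten F := by
  induction L with
  | nil => rfl
  | cons w L ih => simp [DW_append, ih]

/-- the standard basis of `PSp` -/
noncomputable def bE (d n : ℕ) : Module.Basis (Fin d ⊕ Fin n) ℝ (PSp d n) :=
  (Pi.basisFun ℝ (Fin d)).prod (Pi.basisFun ℝ (Fin n))

theorem bE_inl (d n : ℕ) (i : Fin d) : bE d n (Sum.inl i) = (Pi.single i 1, 0) := by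
  simp [bE]
theorem bE_inr (d n : ℕ) (i : Fin n) : bE d n (Sum.inr i) = (0, Pi.single i 1) := by
  simp [bE]

theorem PDxt_eq {d n : ℕ} (α : Fin d → ℕ) (β : Fin n → ℕ) (g : PSp d n → ℂ) :
    PDxt α β g = DW (bE d n) ((List.ofFn fun i => List.replicate (α i) (Sum.inl i)) ++
      (List.ofFn fun j => List.replicate (β j) (Sum.inr j))).flatten g := by
  rw [← DW_flatten]
  unfold PDxt
  rw [List.map_append, List.map_ofFn, List.map_ofFn]
  have h1 : ∀ i : Fin d, (fun (h : PSp d n → ℂ) (p : PSp d n) =>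
        fderiv ℝ h p ((Pi.single i (1 : ℝ), 0) : PSp d n))^[α i] =
      ((fun w => DW (bE d n) w) ∘ fun i => List.replicate (α i) (Sum.inl i)) i := by
    intro i
    funext h
    simp only [Function.comp, DW_replicate]
    have : (PD (bE d n) (Sum.inl i)) = (fun (h : PSp d n → ℂ) (p : PSp d n) =>
        fderiv ℝ h p ((Pi.single i (1 : ℝ), 0) : PSp d n)) := by
      funext h p; simp [PD, bE_inl]
    rw [this]
  have h2 : ∀ i : Fin n, (fun (h : PSp d n → ℂ) (p : PSp d n) =>
        fderiv ℝ h p ((0, Pi.single i (1 : ℝ)) : PSp d n))^[β i] =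
      ((fun w => DW (bE d n) w) ∘ fun i => List.replicate (β i) (Sum.inr i)) i := by
    intro i
    funext h
    simp only [Function.comp, DW_replicate]
    have : (PD (bE d n) (Sum.inr i)) = (fun (h : PSp d n → ℂ) (p : PSp d n) =>
        fderiv ℝ h p ((0, Pi.single i (1 : ℝ)) : PSp d n)) := by
      funext h p; simp [PD, bE_inr]
    rw [this]
  simp only [h1, h2]

/-- counting letters -/
abbrev cnt {Z : Type*} [DecidableEq Z] (a : Z) (w : List Z) : ℕ := @List.count _ instBEqOfDecidableEq a w

theorem word_perm {d n : ℕ} (w : List (Fin d ⊕ Fin n)) :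
    w.Perm ((List.ofFn fun i => List.replicate (cnt (Sum.inl i) w) (Sum.inl i)) ++
      (List.ofFn fun j => List.replicate (cnt (Sum.inr j) w) (Sum.inr j))).flatten := by
  rw [@List.perm_iff_count _ instBEqOfDecidableEq]
  intro a
  rw [@List.count_flatten _ instBEqOfDecidableEq, List.map_append, List.sum_append, List.map_ofFn, List.map_ofFn, List.sum_ofFn, List.sum_ofFn]
  simp only [Function.comp, List.count_replicate]
  rcases a with i | j
  · simp
  · simp

theorem word_bound {d n : ℕ} {Ω : Set (PSp d n)} (hΩ : IsOpen Ω) {g : PSp d n → ℂ} (hg : ContDiffOn ℝ ∞ g Ω)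
    {M : ℕ → ℝ} {C : ℝ} {p : PSp d n} (hp : p ∈ Ω)
    (h : ∀ (α : Fin d → ℕ) (β : Fin n → ℕ), ‖PDxt α β g p‖
          ≤ C ^ ((∑ i, α i) + (∑ i, β i) + 1) * M ((∑ i, α i) + (∑ i, β i))) (w : List (Fin d ⊕ Fin n)) :
    ‖DW (bE d n) w g p‖ ≤ C ^ (w.length + 1) * M w.length := by
  have h1 := word_perm w
  have h2 := h (fun i => cnt (Sum.inl i) w) (fun i => cnt (Sum.inr i) w)
  rw [PDxt_eq, ← DW_perm hΩ hg h1 hp] at h2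
  have h3 : (∑ i : Fin d, cnt (Sum.inl i) w) + (∑ i : Fin n, cnt (Sum.inr i) w) = w.length := by
    rw [h1.length_eq, List.length_flatten, List.map_append, List.sum_append, List.map_ofFn, List.map_ofFn,
      List.sum_ofFn, List.sum_ofFn]
    simp
  rwa [h3] at h2
end PDx

open scoped BigOperators ContDiff Topology Convolution
open MeasureTheory
set_option linter.unusedSectionVars false

section Null
variable {E : Type*} [NormedAddCommGroup E] [NormedSpace ℝ E] [FiniteDimensional ℝ E]
  [MeasurableSpace E] [BorelSpace E]

theorem mollify (μ : Measure E) [μ.IsAddHaarMeasure] {g : E → ℂ} (hg : ContDiff ℝ 1 g) (hc : HasCompactSupport g) :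
    ∃ G : ℕ → E → ℂ, (∀ k, ContDiff ℝ ∞ (G k)) ∧ (∀ k, HasCompactSupport (G k)) ∧
      (∃ K, IsCompact K ∧ ∀ k, ∀ q ∉ K, ∀ v, fderiv ℝ (G k) q v = 0) ∧
      (∃ B, ∀ k q v, ‖fderiv ℝ (G k) q v‖ ≤ B * ‖v‖) ∧
      ∀ q v, Filter.Tendsto (fun k => fderiv ℝ (G k) q v) Filter.atTop (𝓝 (fderiv ℝ g q v)) := by
  let φ : ℕ → ContDiffBump (0 : E) := fun k =>
    ⟨1 / (2 * ((k : ℝ) + 1)), 1 / ((k : ℝ) + 1), by positivity, by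
      apply one_div_lt_one_div_of_lt (by positivity); linarith [(Nat.cast_nonneg k : (0 : ℝ) ≤ k)]⟩
  have hφ1 : ∀ k, (φ k).rOut ≤ 1 := by
    intro k
    show 1 / ((k : ℝ) + 1) ≤ 1
    rw [div_le_one (by positivity)]; linarith [(Nat.cast_nonneg k : (0 : ℝ) ≤ k)]
  have hφ0 : Filter.Tendsto (fun k => (φ k).rOut) Filter.atTop (𝓝 0) := tendsto_one_div_add_atTop_nhds_zero_nat
  have hφint : ∀ k, LocallyIntegrable ((φ k).normed μ) μ := fun k =>
    ((φ k).continuous_normed).locallyIntegrable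
  have hcd : Continuous (fderiv ℝ g) := hg.continuous_fderiv one_ne_zero
  have hder : ∀ k q v, fderiv ℝ ((φ k).normed μ ⋆[ContinuousLinearMap.lsmul ℝ ℝ, μ] g) q v =
      ((φ k).normed μ ⋆[ContinuousLinearMap.lsmul ℝ ℝ, μ] (fun x => fderiv ℝ g x v)) q := by
    intro k q v
    rw [(hc.hasFDerivAt_convolution_right (ContinuousLinearMap.lsmul ℝ ℝ) (hφint k) hg q).fderiv,
      convolution_precompR_apply _ (hφint k) (hc.fderiv ℝ) hcd]
  have hcv : ∀ v, Continuous (fun x => fderiv ℝ g x v) := fun v => hcd.clm_apply continuous_const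
  obtain ⟨B, hB⟩ : ∃ B, ∀ x, ‖fderiv ℝ g x‖ ≤ B := by
    obtain ⟨B, hB⟩ := hcd.norm.bddAbove_range_of_hasCompactSupport (hc.fderiv ℝ).norm
    exact ⟨B, fun x => hB ⟨x, rfl⟩⟩
  have hB0 : 0 ≤ B := (norm_nonneg _).trans (hB 0)
  refine ⟨fun k => (φ k).normed μ ⋆[ContinuousLinearMap.lsmul ℝ ℝ, μ] g, ?_, ?_, ?_, ?_, ?_⟩
  · intro k
    exact (φ k).hasCompactSupport_normed.contDiff_convolution_left _ (φ k).contDiff_normed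
      hg.continuous.locallyIntegrable
  · intro k
    exact (φ k).hasCompactSupport_normed.convolution _ hc
  · refine ⟨Metric.cthickening 1 (tsupport g), IsCompact.cthickening hc, ?_⟩
    intro k q hq v
    rw [hder]
    have hz : ∀ x ∈ Metric.ball q 1, fderiv ℝ g x v = 0 := by
      intro x hx
      have : x ∉ tsupport g := by
        intro hxs
        apply hq
        apply Metric.mem_cthickening_of_dist_le q x 1 _ hxs
        rw [dist_comm]; exact (Metric.mem_ball.1 hx).le
      have h2 : fderiv ℝ g x = 0 := by
        by_contra h3
        exact this (support_fderiv_subset ℝ h3)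
      rw [h2]; rfl
    have := (φ k).dist_normed_convolution_le (μ := μ) (x₀ := q) (ε := 0) (g := fun x => fderiv ℝ g x v)
      (hcv v).aestronglyMeasurable (by
        intro x hx
        rw [hz x (Metric.ball_subset_ball (hφ1 k) hx), hz q (Metric.mem_ball_self one_pos), dist_self])
    rw [hz q (Metric.mem_ball_self one_pos)] at this
    exact dist_le_zero.1 this
  · refine ⟨3 * B, fun k q v => ?_⟩
    rw [hder]
    have hbv : ∀ x, ‖fderiv ℝ g x v‖ ≤ B * ‖v‖ := fun x =>
      ((fderiv ℝ g x).le_opNorm v).trans (mul_le_mul_of_nonneg_right (hB x) (norm_nonneg _))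
    have := (φ k).dist_normed_convolution_le (μ := μ) (x₀ := q) (ε := 2 * (B * ‖v‖)) (g := fun x => fderiv ℝ g x v)
      (hcv v).aestronglyMeasurable (by
        intro x hx
        rw [dist_eq_norm]
        refine (norm_sub_le _ _).trans ?_
        linarith [hbv x, hbv q])
    rw [dist_eq_norm] at this
    have h2 := hbv q
    set a := ((φ k).normed μ ⋆[ContinuousLinearMap.lsmul ℝ ℝ, μ] (fun x => fderiv ℝ g x v)) q
    have h3 : ‖a‖ ≤ ‖a - fderiv ℝ g q v‖ + ‖fderiv ℝ g q v‖ := by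
      have := norm_add_le (a - fderiv ℝ g q v) (fderiv ℝ g q v)
      simpa using this
    linarith
  · intro q v
    simp_rw [hder]
    exact ContDiffBump.convolution_tendsto_right_of_continuous hφ0 (hcv v) q

variable {ι : Type*} [Fintype ι] [DecidableEq ι]

theorem null_smooth (μ : Measure E) [μ.IsAddHaarMeasure] (e : ι → E) (h : ι → E → ℂ)
    (hs : ∀ i, ContDiff ℝ ∞ (h i)) (hc : ∀ i, HasCompactSupport (h i)) (i0 : ι) :
    ∫ q, (Matrix.of fun i j => fderiv ℝ (h i) q (e j)).det ∂μ = 0 := by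
  have hs1 : ∀ i j, ContDiff ℝ ∞ (fun q => fderiv ℝ (h i) q (e j)) := fun i j =>
    ((hs i).fderiv_right (m := ∞) (by simp)).clm_apply contDiff_const
  have hc1 : ∀ i j, HasCompactSupport (fun q => fderiv ℝ (h i) q (e j)) := fun i j =>
    (hc i).fderiv_apply ℝ (e j)
  -- second derivatives
  let D2 : ι → ι → ι → E → ℂ := fun i j k q => fderiv ℝ (fun q => fderiv ℝ (h i) q (e j)) q (e k)
  have hsym : ∀ i j k q, D2 i j k q = D2 i k j q := by
    intro i j k q
    exact PD_comm (e := e) isOpen_univ (hs i).contDiffOn k j (Set.mem_univ q)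
  let P : Equiv.Perm ι → E → ℂ := fun σ q => ∏ i ∈ Finset.univ.erase i0, fderiv ℝ (h i) q (e (σ i))
  have hPs : ∀ σ, ContDiff ℝ ∞ (P σ) := fun σ => contDiff_prod fun i _ => hs1 i (σ i)
  have hPd : ∀ σ q, fderiv ℝ (P σ) q (e (σ i0)) = ∑ l ∈ Finset.univ.erase i0,
      (∏ i ∈ (Finset.univ.erase i0).erase l, fderiv ℝ (h i) q (e (σ i))) * D2 l (σ l) (σ i0) q := by
    intro σ q
    have := HasFDerivAt.finsetProd (u := Finset.univ.erase i0) (x := q)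
      (g := fun i q => fderiv ℝ (h i) q (e (σ i)))
      (g' := fun i => fderiv ℝ (fun q => fderiv ℝ (h i) q (e (σ i))) q)
      (fun i _ => ((hs1 i (σ i)).differentiable (by simp) q).hasFDerivAt)
    show fderiv ℝ (fun q => ∏ i ∈ Finset.univ.erase i0, fderiv ℝ (h i) q (e (σ i))) q (e (σ i0)) = _
    rw [this.fderiv]
    simp [D2]
  have hIBP : ∀ σ, ∫ q, P σ q * fderiv ℝ (h i0) q (e (σ i0)) ∂μ = - ∫ q, fderiv ℝ (P σ) q (e (σ i0)) * h i0 q ∂μ := by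
    intro σ
    have hPd' : Continuous fun q => fderiv ℝ (P σ) q (e (σ i0)) :=
      ((hPs σ).continuous_fderiv (by simp)).clm_apply continuous_const
    apply integral_mul_fderiv_eq_neg_fderiv_mul_of_integrable
    · exact (hPd'.mul (hs i0).continuous).integrable_of_hasCompactSupport ((hc i0).mul_left)
    · exact ((hPs σ).continuous.mul (hs1 i0 _).continuous).integrable_of_hasCompactSupport ((hc1 i0 _).mul_left)
    · exact ((hPs σ).continuous.mul (hs i0).continuous).integrable_of_hasCompactSupport ((hc i0).mul_left)
    · exact fun x _ => (hPs σ).differentiable (by simp) x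
    · exact fun x _ => (hs i0).differentiable (by simp) x
  have hdet : ∀ q, (Matrix.of fun i j => fderiv ℝ (h i) q (e j)).det =
      ∑ σ : Equiv.Perm ι, (Equiv.Perm.sign σ : ℂ) * (P σ q * fderiv ℝ (h i0) q (e (σ i0))) := by
    intro q
    rw [← Matrix.det_transpose, Matrix.det_apply']
    apply Finset.sum_congr rfl
    intro σ _
    congr 1
    rw [← Finset.prod_erase_mul _ _ (Finset.mem_univ i0)]
    rfl
  have hintg : ∀ σ, Integrable (fun q => (Equiv.Perm.sign σ : ℂ) * (P σ q * fderiv ℝ (h i0) q (e (σ i0)))) μ := by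
    intro σ
    apply Integrable.const_mul
    exact ((hPs σ).continuous.mul (hs1 i0 _).continuous).integrable_of_hasCompactSupport ((hc1 i0 _).mul_left)
  have hint2 : ∀ σ, Integrable (fun q => (Equiv.Perm.sign σ : ℂ) * (fderiv ℝ (P σ) q (e (σ i0)) * h i0 q)) μ := by
    intro σ
    apply Integrable.const_mul
    have hPd' : Continuous fun q => fderiv ℝ (P σ) q (e (σ i0)) :=
      ((hPs σ).continuous_fderiv (by simp)).clm_apply continuous_const
    exact (hPd'.mul (hs i0).continuous).integrable_of_hasCompactSupport ((hc i0).mul_left)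
  simp_rw [hdet]
  rw [integral_finset_sum _ fun σ _ => hintg σ]
  simp_rw [integral_const_mul, hIBP, mul_neg, ← integral_const_mul]
  rw [Finset.sum_neg_distrib, ← integral_finset_sum _ fun σ _ => hint2 σ, neg_eq_zero]
  have hzero : ∀ q, ∑ σ : Equiv.Perm ι, (Equiv.Perm.sign σ : ℂ) * (fderiv ℝ (P σ) q (e (σ i0)) * h i0 q) = 0 := by
    intro q
    simp_rw [hPd, Finset.sum_mul, Finset.mul_sum]
    rw [Finset.sum_comm]
    apply Finset.sum_eq_zero
    intro l hl
    have hl0 : l ≠ i0 := (Finset.mem_erase.1 hl).1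
    set T : Equiv.Perm ι → ℂ := fun σ => (Equiv.Perm.sign σ : ℂ) *
      ((∏ i ∈ (Finset.univ.erase i0).erase l, fderiv ℝ (h i) q (e (σ i))) * D2 l (σ l) (σ i0) q * h i0 q) with hT
    have h1 : ∀ σ, T (σ * Equiv.swap i0 l) = - T σ := by
      intro σ
      simp only [hT]
      rw [Equiv.Perm.sign_mul, Equiv.Perm.sign_swap hl0.symm]
      have h2 : ∏ i ∈ (Finset.univ.erase i0).erase l, fderiv ℝ (h i) q (e ((σ * Equiv.swap i0 l) i)) =
          ∏ i ∈ (Finset.univ.erase i0).erase l, fderiv ℝ (h i) q (e (σ i)) := by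
        apply Finset.prod_congr rfl
        intro i hi
        simp only [Finset.mem_erase] at hi
        rw [Equiv.Perm.mul_apply, Equiv.swap_apply_of_ne_of_ne hi.2.1 hi.1]
      rw [h2]
      simp only [Equiv.Perm.mul_apply, Equiv.swap_apply_left, Equiv.swap_apply_right]
      rw [hsym l (σ i0) (σ l)]
      push_cast
      ring
    have h3 : ∑ σ, T σ = ∑ σ, T (σ * Equiv.swap i0 l) :=
      (Equiv.sum_comp (Equiv.mulRight (Equiv.swap i0 l)) T).symm
    simp_rw [h1] at h3
    rw [Finset.sum_neg_distrib] at h3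
    exact self_eq_neg.1 h3
  simp_rw [hzero]
  simp

theorem null_C1 (μ : Measure E) [μ.IsAddHaarMeasure] (e : ι → E) (h : ι → E → ℂ)
    (hs : ∀ i, ContDiff ℝ 1 (h i)) (hc : ∀ i, HasCompactSupport (h i)) (i0 : ι) :
    ∫ q, (Matrix.of fun i j => fderiv ℝ (h i) q (e j)).det ∂μ = 0 := by
  choose G hG1 hG2 hG3 hG4 hG5 using fun i => mollify μ (hs i) (hc i)
  choose K hK hKz using hG3
  choose B hB using hG4
  have hlim : Filter.Tendsto (fun k => ∫ q, (Matrix.of fun i j => fderiv ℝ (G i k) q (e j)).det ∂μ) Filter.atTop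
      (𝓝 (∫ q, (Matrix.of fun i j => fderiv ℝ (h i) q (e j)).det ∂μ)) := by
    apply tendsto_integral_of_dominated_convergence ((K i0).indicator (fun _ => ∑ σ : Equiv.Perm ι, ∏ i, B i * ‖e (σ i)‖))
    · intro k
      apply Continuous.aestronglyMeasurable
      apply Continuous.matrix_det
      refine continuous_matrix fun i j => ?_
      exact ((hG1 i k).continuous_fderiv (by simp)).clm_apply continuous_const
    · rw [integrable_indicator_iff (hK i0).measurableSet]
      exact integrableOn_const (hK i0).measure_lt_top.ne
    · intro k
      refine Filter.Eventually.of_forall fun q => ?_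
      by_cases hq : q ∈ K i0
      · rw [Set.indicator_of_mem hq, ← Matrix.det_transpose, Matrix.det_apply']
        refine (norm_sum_le _ _).trans (Finset.sum_le_sum fun σ _ => ?_)
        rw [norm_mul, norm_prod]
        have : ‖((Equiv.Perm.sign σ : ℤ) : ℂ)‖ = 1 := by
          rcases Int.units_eq_one_or (Equiv.Perm.sign σ) with h | h <;> simp [h]
        rw [this, one_mul]
        exact Finset.prod_le_prod (fun i _ => norm_nonneg _) fun i _ => hB i k q _
      · rw [Set.indicator_of_notMem hq, Matrix.det_eq_zero_of_row_eq_zero i0]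
        · simp
        · intro j; exact hKz i0 k q hq _
    · refine Filter.Eventually.of_forall fun q => ?_
      simp only [Matrix.det_apply']
      refine tendsto_finset_sum _ fun σ _ => Filter.Tendsto.const_mul _ ?_
      exact tendsto_finset_prod _ fun i _ => hG5 _ q _
  have hz : ∀ k, ∫ q, (Matrix.of fun i j => fderiv ℝ (G i k) q (e j)).det ∂μ = 0 := fun k =>
    null_smooth μ e (fun i => G i k) (fun i => hG1 i k) (fun i => hG2 i k) i0
  simp_rw [hz] at hlim
  exact (tendsto_nhds_unique hlim tendsto_const_nhds)
end Null

open scoped BigOperators ContDiff Topology Convolution Manifold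
open MeasureTheory
set_option linter.unusedSectionVars false

section NullLoc
variable {E : Type*} [NormedAddCommGroup E] [NormedSpace ℝ E] [FiniteDimensional ℝ E]
  [MeasurableSpace E] [BorelSpace E]
variable {ι : Type*} [Fintype ι] [DecidableEq ι]

theorem glue_smooth {Ω : Set E} (hΩ : IsOpen Ω) {g : E → ℂ} {n : WithTop ℕ∞} (hg : ContDiffOn ℝ n g Ω)
    (hs : tsupport g ⊆ Ω) : ContDiff ℝ n g := by
  rw [contDiff_iff_contDiffAt]
  intro x
  by_cases hx : x ∈ Ω
  · exact hg.contDiffAt (hΩ.mem_nhds hx)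
  · have h1 : g =ᶠ[𝓝 x] fun _ => 0 := notMem_tsupport_iff_eventuallyEq.mp (fun h => hx (hs h))
    exact contDiffAt_const.congr_of_eventuallyEq h1

theorem glue_cont {Ω : Set E} (hΩ : IsOpen Ω) {g : E → ℂ} (hg : ContinuousOn g Ω)
    (hs : tsupport g ⊆ Ω) : Continuous g := by
  rw [continuous_iff_continuousAt]
  intro x
  by_cases hx : x ∈ Ω
  · exact hg.continuousAt (hΩ.mem_nhds hx)
  · have h1 : g =ᶠ[𝓝 x] fun _ => 0 := notMem_tsupport_iff_eventuallyEq.mp (fun h => hx (hs h))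
    exact continuousAt_const.congr h1.symm

theorem exists_cut {Ω K : Set E} (hΩ : IsOpen Ω) (hK : IsCompact K) (hKΩ : K ⊆ Ω) :
    ∃ κ : E → ℝ, ContDiff ℝ ∞ κ ∧ (∀ᶠ x in 𝓝ˢ K, κ x = 1) ∧ (∀ x, κ x ∈ Set.Icc (0:ℝ) 1) ∧
      HasCompactSupport κ ∧ tsupport κ ⊆ Ω := by
  obtain ⟨t, ht, h1, h2⟩ := exists_compact_between hK hΩ hKΩ
  obtain ⟨f, hf1, hf2, hf3⟩ := exists_contMDiffMap_one_nhds_of_subset_interior (n := (⊤ : ℕ∞)) 𝓘(ℝ, E) hK.isClosed h1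
  have hsup : tsupport f ⊆ t := by
    apply closure_minimal _ ht.isClosed
    intro x hx
    by_contra hxt
    exact hx (hf2 x hxt)
  exact ⟨f, f.contMDiff.contDiff, hf1, hf3, HasCompactSupport.of_support_subset_isCompact ht
    (subset_closure.trans hsup), hsup.trans h2⟩

theorem null_local (μ : Measure E) [μ.IsAddHaarMeasure] (e : ι → E) {Ω : Set E} (hΩ : IsOpen Ω) (h : ι → E → ℂ)
    (hs : ∀ i, ContDiffOn ℝ 1 (h i) Ω) (i0 : ι) (hc : HasCompactSupport (h i0)) (hsup : tsupport (h i0) ⊆ Ω) :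
    ∫ q, (Matrix.of fun i j => fderiv ℝ (h i) q (e j)).det ∂μ = 0 := by
  obtain ⟨κ, hκ, hκ1, -, hκc, hκΩ⟩ := exists_cut hΩ hc.isCompact hsup
  have key := null_C1 μ e (fun i q => (κ q : ℂ) * h i q) ?_ ?_ i0
  · rw [← key]
    congr 1
    ext q
    by_cases hq : q ∈ tsupport (h i0)
    · congr 1
      ext i j
      have h1 : ∀ᶠ x in 𝓝 q, κ x = 1 := (Filter.Eventually.filter_mono (nhds_le_nhdsSet hq) hκ1)
      have h2 : h i =ᶠ[𝓝 q] fun q => (κ q : ℂ) * h i q := by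
        filter_upwards [h1] with x hx
        simp [hx]
      simp only [Matrix.of_apply]
      rw [h2.fderiv_eq]
    · have h1 : h i0 =ᶠ[𝓝 q] fun _ => 0 := notMem_tsupport_iff_eventuallyEq.mp hq
      have h2 : (fun q => (κ q : ℂ) * h i0 q) =ᶠ[𝓝 q] fun _ => 0 := by
        filter_upwards [h1] with x hx
        simp [hx]
      rw [Matrix.det_eq_zero_of_row_eq_zero i0, Matrix.det_eq_zero_of_row_eq_zero i0]
      · intro j; simp only [Matrix.of_apply]; rw [h2.fderiv_eq]; simp
      · intro j; simp only [Matrix.of_apply]; rw [h1.fderiv_eq]; simp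
  · intro i
    have hsub : tsupport (fun q => (κ q : ℂ) * h i q) ⊆ tsupport κ := by
      apply closure_mono
      intro x hx hx'
      exact hx (by simp [hx'])
    apply glue_smooth hΩ _ (hsub.trans hκΩ)
    have : ContDiff ℝ 1 (fun q => (κ q : ℂ)) := Complex.ofRealCLM.contDiff.comp (hκ.of_le (by norm_cast))
    exact this.contDiffOn.mul (hs i)
  · intro i
    apply hκc.mono
    intro x hx hx'
    exact hx (by simp [hx'])

theorem cramer_id (A : Matrix ι ι ℂ) (r L : ι → ℂ) :
    (∑ j, L j * r j) * A.det = ∑ i, (∑ j, A i j * L j) * (A.updateRow i r).det := by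
  have h1 := Matrix.mulVec_cramer A.transpose r
  rw [Matrix.det_transpose] at h1
  have h2 : ∀ j, ∑ i, A i j * (A.updateRow i r).det = A.det * r j := by
    intro j
    have := congrFun h1 j
    simp only [Matrix.mulVec, dotProduct, Matrix.transpose_apply, Pi.smul_apply, smul_eq_mul,
      Matrix.cramer_transpose_apply] at this
    exact this
  simp_rw [Finset.sum_mul]
  rw [Finset.sum_comm]
  apply Finset.sum_congr rfl
  intro j _
  calc L j * r j * A.det = L j * (A.det * r j) := by ring
    _ = _ := by
      rw [← h2, Finset.mul_sum]
      apply Finset.sum_congr rfl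
      intro i _; ring

theorem supp_int (μ : Measure E) [μ.IsAddHaarMeasure] {Ω : Set E} (hΩ : IsOpen Ω) {g : E → ℂ}
    (hg : ContinuousOn g Ω) (hc : HasCompactSupport g) (hs : tsupport g ⊆ Ω) : Integrable g μ :=
  (glue_cont hΩ hg hs).integrable_of_hasCompactSupport hc

theorem star_id (μ : Measure E) [μ.IsAddHaarMeasure] (e : ι → E) {Ω : Set E} (hΩ : IsOpen Ω)
    (h G : ι → E → ℂ) (φ : E → ℂ) (L : ι → E → ℂ) (hh : ∀ i, ContDiffOn ℝ 1 (h i) Ω) (hG : ∀ i, ContDiffOn ℝ 1 (G i) Ω)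
    (hφ : ContDiffOn ℝ 1 φ Ω) (hc : HasCompactSupport φ) (hsup : tsupport φ ⊆ Ω)
    (hL : ∀ i, ∀ q ∈ Ω, ∑ j, fderiv ℝ (h i) q (e j) * L j q = G i q) :
    Integrable (fun q => ((∑ j, L j q * fderiv ℝ φ q (e j)) * (Matrix.of fun i j => fderiv ℝ (h i) q (e j)).det
      + ∑ i, φ q * ((Matrix.of fun i j => fderiv ℝ (h i) q (e j)).updateRow i (fun j => fderiv ℝ (G i) q (e j))).det)) μ ∧
    ∫ q, ((∑ j, L j q * fderiv ℝ φ q (e j)) * (Matrix.of fun i j => fderiv ℝ (h i) q (e j)).det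
      + ∑ i, φ q * ((Matrix.of fun i j => fderiv ℝ (h i) q (e j)).updateRow i (fun j => fderiv ℝ (G i) q (e j))).det) ∂μ = 0 := by
  let N : ι → E → ℂ := fun i q => (Matrix.of fun i' j => fderiv ℝ (Function.update h i (fun q => φ q * G i q) i') q (e j)).det
  have hsubi : ∀ i, tsupport (fun q => φ q * G i q) ⊆ tsupport φ := fun i => by
    apply closure_mono
    intro x hx hx'
    exact hx (by simp [hx'])
  have hci : ∀ i, HasCompactSupport (fun q => φ q * G i q) := fun i => hc.mul_right
  have hupd : ∀ i i', ContDiffOn ℝ 1 (Function.update h i (fun q => φ q * G i q) i') Ω := by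
    intro i i'
    by_cases hi : i' = i
    · subst hi; simpa using hφ.mul (hG i')
    · simpa [hi] using hh i'
  have hN0 : ∀ i, ∫ q, N i q ∂μ = 0 := by
    intro i
    apply null_local μ e hΩ _ (hupd i) i
    · simpa using hci i
    · simpa using (hsubi i).trans hsup
  have hNz : ∀ i, ∀ q ∉ tsupport φ, N i q = 0 := by
    intro i q hq
    have h1 : (fun q => φ q * G i q) =ᶠ[𝓝 q] fun _ => 0 := notMem_tsupport_iff_eventuallyEq.mp (fun hh => hq (hsubi i hh))
    apply Matrix.det_eq_zero_of_row_eq_zero i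
    intro j
    simp only [Matrix.of_apply, Function.update_self]
    rw [h1.fderiv_eq]; simp
  have hNsup : ∀ i, tsupport (N i) ⊆ tsupport φ := by
    intro i
    apply closure_minimal _ (isClosed_tsupport _)
    intro q hq
    by_contra hh
    exact hq (hNz i q hh)
  have hNint : ∀ i, Integrable (N i) μ := by
    intro i
    apply supp_int μ hΩ _ _ ((hNsup i).trans hsup)
    · have : ∀ i' j, ContinuousOn (fun q => fderiv ℝ (Function.update h i (fun q => φ q * G i q) i') q (e j)) Ω :=
        fun i' j => ((hupd i i').continuousOn_fderiv_of_isOpen hΩ le_rfl).clm_apply continuousOn_const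
      simp only [N, Matrix.det_apply, Matrix.of_apply]
      apply continuousOn_finsetSum
      intro σ _
      apply ContinuousOn.const_smul
      apply continuousOn_finsetProd
      intro i' _
      exact this _ _
    · exact HasCompactSupport.of_support_subset_isCompact hc.isCompact (subset_closure.trans (hNsup i))
  have hsum : ∫ q, ∑ i, N i q ∂μ = 0 := by
    rw [integral_finsetSum _ (fun i _ => hNint i)]
    exact Finset.sum_eq_zero fun i _ => hN0 i
  suffices hfun : (fun q => ((∑ j, L j q * fderiv ℝ φ q (e j)) * (Matrix.of fun i j => fderiv ℝ (h i) q (e j)).det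
      + ∑ i, φ q * ((Matrix.of fun i j => fderiv ℝ (h i) q (e j)).updateRow i (fun j => fderiv ℝ (G i) q (e j))).det)) =
      fun q => ∑ i, N i q by
    rw [hfun]
    exact ⟨integrable_finsetSum _ (fun i _ => hNint i), hsum⟩
  ext q
  by_cases hq : q ∈ Ω
  · rw [cramer_id, ← Finset.sum_add_distrib]
    apply Finset.sum_congr rfl
    intro i _
    have h1 : (Matrix.of fun i' j => fderiv ℝ (Function.update h i (fun q => φ q * G i q) i') q (e j)) =
        (Matrix.of fun i j => fderiv ℝ (h i) q (e j)).updateRow i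
          (G i q • (fun j => fderiv ℝ φ q (e j)) + φ q • (fun j => fderiv ℝ (G i) q (e j))) := by
      ext i' j
      by_cases hi : i' = i
      · subst hi
        have hd1 : DifferentiableAt ℝ φ q := (hφ.contDiffAt (hΩ.mem_nhds hq)).differentiableAt (by simp)
        have hd2 : DifferentiableAt ℝ (G i') q := ((hG i').contDiffAt (hΩ.mem_nhds hq)).differentiableAt (by simp)
        simp only [Matrix.of_apply, Function.update_self, Matrix.updateRow_self, Pi.add_apply, Pi.smul_apply, smul_eq_mul]
        have := (hd1.hasFDerivAt.mul hd2.hasFDerivAt).fderiv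
        rw [show (fun q => φ q * G i' q) = φ * G i' from rfl, this]
        simp [smul_eq_mul]; ring
      · simp [hi]
    simp only [N]
    rw [h1, Matrix.det_updateRow_add, Matrix.det_updateRow_smul, Matrix.det_updateRow_smul, ← hL i q hq]
    simp only [Matrix.of_apply]
  · have hq' : q ∉ tsupport φ := fun hh => hq (hsup hh)
    have h1 : φ =ᶠ[𝓝 q] fun _ => 0 := notMem_tsupport_iff_eventuallyEq.mp hq'
    rw [h1.fderiv_eq, h1.eq_of_nhds]
    simp [hNz _ q hq']

end NullLoc

open scoped BigOperators ContDiff Topology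
open MeasureTheory
set_option linter.unusedSectionVars false

section Step
variable {E : Type*} [NormedAddCommGroup E] [NormedSpace ℝ E] [FiniteDimensional ℝ E]
  [MeasurableSpace E] [BorelSpace E]
variable {ι V : Type*} [Fintype ι] [DecidableEq ι] [Fintype V] [DecidableEq V]

theorem HolO.smul {O : Set (E × (V → ℂ))} {F : E × (V → ℂ) → ℂ} (hF : HolO O F) {y : E × (V → ℂ)} (hy : y ∈ O)
    (c : ℂ) (z : V → ℂ) : fderiv ℝ F y (0, c • z) = c * fderiv ℝ F y (0, z) := by
  have h1 : ((0 : E), c • z) = c.re • ((0 : E), z) + c.im • ((0 : E), Complex.I • z) := by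
    ext l
    · simp
    · simp only [Prod.smul_mk, smul_zero, Prod.mk_add_mk, add_zero, Pi.smul_apply, Pi.add_apply, smul_eq_mul,
        Complex.real_smul]
      conv_lhs => rw [← Complex.re_add_im c]
      ring
  rw [h1, map_add, map_smul, map_smul, hF y hy z]
  simp only [Complex.real_smul]
  conv_rhs => rw [← Complex.re_add_im c]
  ring

theorem HolO.mul {O : Set (E × (V → ℂ))} (hO : IsOpen O) {F G : E × (V → ℂ) → ℂ} (hF : HolO O F) (hG : HolO O G)
    (sF : ContDiffOn ℝ ∞ F O) (sG : ContDiffOn ℝ ∞ G O) : HolO O (fun y => F y * G y) := by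
  intro y hy z
  have h := ((smooth_diffAt hO sF hy).hasFDerivAt.mul (smooth_diffAt hO sG hy).hasFDerivAt).fderiv
  rw [show (fun y => F y * G y) = F * G from rfl, h]
  simp only [add_apply, smul_apply, smul_eq_mul, hF y hy z, hG y hy z]
  ring

/-- the coordinate functions -/
noncomputable def yv (bb : Module.Basis ι ℝ E) (v : E → V → ℂ) : ι ⊕ V → E → ℂ
  | Sum.inl i => fun q => ((bb.repr q i : ℝ) : ℂ)
  | Sum.inr l => fun q => v q l

noncomputable def reprC (bb : Module.Basis ι ℝ E) (i : ι) : E →L[ℝ] ℂ :=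
  Complex.ofRealCLM.comp (LinearMap.toContinuousLinearMap (bb.coord i))

theorem reprC_apply (bb : Module.Basis ι ℝ E) (i : ι) (q : E) : reprC bb i q = ((bb.repr q i : ℝ) : ℂ) := rfl

theorem yv_inl (bb : Module.Basis ι ℝ E) (v : E → V → ℂ) (i : ι) (q e' : E) :
    fderiv ℝ (yv bb v (Sum.inl i)) q e' = ((bb.repr e' i : ℝ) : ℂ) := by
  have : yv bb v (Sum.inl i) = reprC bb i := rfl
  rw [this, ContinuousLinearMap.fderiv]; rfl

theorem yv_inr (bb : Module.Basis ι ℝ E) (v : E → V → ℂ) (l : V) {q : E} (hv : DifferentiableAt ℝ v q) (e' : E) :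
    fderiv ℝ (yv bb v (Sum.inr l)) q e' = fderiv ℝ v q e' l := by
  have : yv bb v (Sum.inr l) = fun q => v q l := rfl
  rw [this]
  have := (hasFDerivAt_pi'.mp hv.hasFDerivAt l).fderiv
  rw [this]; rfl

theorem yv_smooth (bb : Module.Basis ι ℝ E) {v : E → V → ℂ} {Ω : Set E} (hv : ContDiffOn ℝ 1 v Ω) (m : ι ⊕ V) :
    ContDiffOn ℝ 1 (yv bb v m) Ω := by
  rcases m with i | l
  · exact (reprC bb i).contDiff.contDiffOn
  · exact (contDiffOn_pi.mp hv) l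

theorem chain_rule (bb : Module.Basis ι ℝ E) {v : E → V → ℂ} {O : Set (E × (V → ℂ))}
    {F : E × (V → ℂ) → ℂ} {q : E} (hF : HolO O F) (sF : DifferentiableAt ℝ F (q, v q))
    (hv : DifferentiableAt ℝ v q) (hq : (q, v q) ∈ O) (e' : E) :
    fderiv ℝ (fun q => F (q, v q)) q e' = ∑ m, PD (eY bb) m F (q, v q) * fderiv ℝ (yv bb v m) q e' := by
  have h1 : HasFDerivAt (fun q => F (q, v q)) _ q :=
    HasFDerivAt.comp (g := F) (f := fun q => (q, v q)) q sF.hasFDerivAt ((hasFDerivAt_id q).prodMk hv.hasFDerivAt)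
  rw [h1.fderiv, Fintype.sum_sum_type]
  have h2 : ((ContinuousLinearMap.id ℝ E).prod (fderiv ℝ v q)) e' = (e', 0) + (0, fderiv ℝ v q e') := by
    simp
  rw [ContinuousLinearMap.comp_apply, h2, map_add]
  congr 1
  · have h3 : (e', (0 : V → ℂ)) = ∑ i, bb.repr e' i • (bb i, (0 : V → ℂ)) := by
      ext1
      · simp [Prod.fst_sum, bb.sum_repr]
      · simp [Prod.snd_sum]
    rw [h3, map_sum]
    apply Finset.sum_congr rfl
    intro i _
    rw [yv_inl, map_smul, PD]
    simp only [eY, Complex.real_smul]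
    ring
  · have h3 : ((0 : E), fderiv ℝ v q e') = ∑ l, ((0 : E), (fderiv ℝ v q e' l) • (Pi.single l 1 : V → ℂ)) := by
      ext1
      · simp [Prod.fst_sum]
      · simp only [Prod.snd_sum]
        ext l
        simp [Finset.sum_apply, Pi.single_apply]
    rw [h3, map_sum]
    apply Finset.sum_congr rfl
    intro l _
    rw [yv_inr bb v l hv, hF.smul hq, PD]
    simp only [eY]
    ring

noncomputable def Dj (bb : Module.Basis ι ℝ E) (v : E → V → ℂ) (J : ι → ι ⊕ V) (q : E) : ℂ :=
  (Matrix.of fun i j => fderiv ℝ (yv bb v (J i)) q (bb j)).det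

structure Stp (bb : Module.Basis ι ℝ E) (O : Set (E × (V → ℂ))) (Ω : Set E) (v : E → V → ℂ)
    (X : ι ⊕ V → E × (V → ℂ) → ℂ) : Prop where
  hO : IsOpen O
  hΩ : IsOpen Ω
  hv : ContDiffOn ℝ 1 v Ω
  hσ : ∀ q ∈ Ω, (q, v q) ∈ O
  hXs : ∀ m, ContDiffOn ℝ ∞ (X m) O
  hXh : ∀ m, HolO O (X m)
  hXv : ∀ l, ∀ q ∈ Ω, ∑ j, fderiv ℝ v q (bb j) l * X (Sum.inl j) (q, v q) = X (Sum.inr l) (q, v q)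

variable {bb : Module.Basis ι ℝ E} {O : Set (E × (V → ℂ))} {Ω : Set E} {v : E → V → ℂ}
    {X : ι ⊕ V → E × (V → ℂ) → ℂ}

theorem Stp.vd (S : Stp bb O Ω v X) {q : E} (hq : q ∈ Ω) : DifferentiableAt ℝ v q :=
  (S.hv.contDiffAt (S.hΩ.mem_nhds hq)).differentiableAt (by simp)

theorem Stp.Xm (S : Stp bb O Ω v X) (m : ι ⊕ V) {q : E} (hq : q ∈ Ω) :
    ∑ j, fderiv ℝ (yv bb v m) q (bb j) * X (Sum.inl j) (q, v q) = X m (q, v q) := by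
  rcases m with i | l
  · have : ∀ x, (((if x = i then (1:ℝ) else 0 : ℝ)) : ℂ) = if x = i then 1 else 0 := fun x => by split_ifs <;> simp
    simp [yv_inl, Finsupp.single_apply, this]
  · simp_rw [yv_inr bb v l (S.vd hq)]
    exact S.hXv l q hq

theorem Stp.comp_smooth (S : Stp bb O Ω v X) {F : E × (V → ℂ) → ℂ} (sF : ContDiffOn ℝ ∞ F O) :
    ContDiffOn ℝ 1 (fun q => F (q, v q)) Ω :=
  (sF.of_le (by norm_cast)).comp (contDiffOn_id.prodMk S.hv) (fun q hq => S.hσ q hq)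

theorem Stp.chain (S : Stp bb O Ω v X) {F : E × (V → ℂ) → ℂ} (sF : ContDiffOn ℝ ∞ F O) (hF : HolO O F) {q : E}
    (hq : q ∈ Ω) (e' : E) :
    fderiv ℝ (fun q => F (q, v q)) q e' = ∑ m, PD (eY bb) m F (q, v q) * fderiv ℝ (yv bb v m) q e' :=
  chain_rule bb hF (smooth_diffAt S.hO sF (S.hσ q hq)) (S.vd hq) (S.hσ q hq) e'

theorem Stp.L_comp (S : Stp bb O Ω v X) {F : E × (V → ℂ) → ℂ} (sF : ContDiffOn ℝ ∞ F O) (hF : HolO O F) {q : E}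
    (hq : q ∈ Ω) : ∑ j, X (Sum.inl j) (q, v q) * fderiv ℝ (fun q => F (q, v q)) q (bb j) =
      ∑ m, X m (q, v q) * PD (eY bb) m F (q, v q) := by
  simp_rw [S.chain sF hF hq, Finset.mul_sum]
  rw [Finset.sum_comm]
  apply Finset.sum_congr rfl
  intro m _
  rw [← S.Xm m hq, Finset.sum_mul]
  apply Finset.sum_congr rfl
  intro j _; ring

theorem Stp.Dj_cont (S : Stp bb O Ω v X) (J : ι → ι ⊕ V) : ContinuousOn (Dj bb v J) Ω := by
  have : ∀ i j, ContinuousOn (fun q => fderiv ℝ (yv bb v (J i)) q (bb j)) Ω :=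
    fun i j => ((yv_smooth bb S.hv (J i)).continuousOn_fderiv_of_isOpen S.hΩ le_rfl).clm_apply continuousOn_const
  unfold Dj
  simp only [Matrix.det_apply, Matrix.of_apply]
  apply continuousOn_finsetSum
  intro σ _
  apply ContinuousOn.const_smul
  apply continuousOn_finsetProd
  intro i' _
  exact this _ _

theorem Stp.det_row (S : Stp bb O Ω v X) {F : E × (V → ℂ) → ℂ} (sF : ContDiffOn ℝ ∞ F O) (hF : HolO O F) {q : E}
    (hq : q ∈ Ω) (J : ι → ι ⊕ V) (i : ι) :
    ((Matrix.of fun i j => fderiv ℝ (yv bb v (J i)) q (bb j)).updateRow i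
      (fun j => fderiv ℝ (fun q => F (q, v q)) q (bb j))).det =
    ∑ m, PD (eY bb) m F (q, v q) * Dj bb v (Function.update J i m) q := by
  have h1 : (fun j => fderiv ℝ (fun q => F (q, v q)) q (bb j)) =
      ∑ m, PD (eY bb) m F (q, v q) • (fun j => fderiv ℝ (yv bb v m) q (bb j)) := by
    ext j
    rw [S.chain sF hF hq]
    simp [Finset.sum_apply]
  have h2 : ∀ r : ι → ℂ, ((Matrix.of fun i j => fderiv ℝ (yv bb v (J i)) q (bb j)).updateRow i r).det =
      Matrix.detRowAlternating.toMultilinearMap.toLinearMap (Matrix.of fun i j => fderiv ℝ (yv bb v (J i)) q (bb j)) i r := by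
    intro r
    rfl
  rw [h1, h2, map_sum]
  apply Finset.sum_congr rfl
  intro m _
  rw [map_smul, ← h2, smul_eq_mul]
  congr 1
  unfold Dj
  congr 1
  ext i' j
  by_cases hi : i' = i
  · subst hi; simp
  · simp [hi]

end Step

open scoped BigOperators ContDiff Topology
open MeasureTheory
set_option linter.unusedSectionVars false

section Step2
variable {E : Type*} [NormedAddCommGroup E] [NormedSpace ℝ E] [FiniteDimensional ℝ E]
  [MeasurableSpace E] [BorelSpace E]
variable {ι V : Type*} [Fintype ι] [DecidableEq ι] [Fintype V] [DecidableEq V]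
variable {bb : Module.Basis ι ℝ E} {O : Set (E × (V → ℂ))} {Ω : Set E} {v : E → V → ℂ}
    {X : ι ⊕ V → E × (V → ℂ) → ℂ}

/-- the coefficient recursion -/
noncomputable def PF (bb : Module.Basis ι ℝ E) (X : ι ⊕ V → E × (V → ℂ) → ℂ) (R : E × (V → ℂ) → ℂ)
    (F : (ι → ι ⊕ V) → E × (V → ℂ) → ℂ) : (ι → ι ⊕ V) → E × (V → ℂ) → ℂ :=
  fun J' y => (∑ m, (-1) * (X m y * PD (eY bb) m (fun y => R y * F J' y) y)) +
    ∑ J : ι → ι ⊕ V, ∑ i, ∑ m, (if Function.update J i m = J' then (-1 : ℂ) else 0) *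
      (PD (eY bb) m (X (J i)) y * (R y * F J y))

noncomputable def Iint (μ : Measure E) (bb : Module.Basis ι ℝ E) (v : E → V → ℂ) (Φ χ : E → ℂ)
    (F : (ι → ι ⊕ V) → E × (V → ℂ) → ℂ) : ℂ :=
  ∫ q, Complex.exp (Φ q) * χ q * ∑ J, F J (q, v q) * Dj bb v J q ∂μ

noncomputable def Lchi (bb : Module.Basis ι ℝ E) (v : E → V → ℂ) (X : ι ⊕ V → E × (V → ℂ) → ℂ) (χ : E → ℂ) (q : E) : ℂ :=
  ∑ j, X (Sum.inl j) (q, v q) * fderiv ℝ χ q (bb j)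

theorem Lchi_zero {χ : E → ℂ} {q : E} (hq : q ∉ tsupport χ) : Lchi bb v X χ q = 0 := by
  have h1 : χ =ᶠ[𝓝 q] fun _ => 0 := notMem_tsupport_iff_eventuallyEq.mp hq
  unfold Lchi
  rw [h1.fderiv_eq]; simp

theorem Stp.int_ok (S : Stp bb O Ω v X) (μ : Measure E) [μ.IsAddHaarMeasure] {Φ g χ : E → ℂ} (hΦ : ContDiff ℝ 1 Φ)
    (hg : ContinuousOn g Ω) (hz : ∀ q ∉ tsupport χ, g q = 0) (hχc : HasCompactSupport χ) (hχΩ : tsupport χ ⊆ Ω)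
    {F : (ι → ι ⊕ V) → E × (V → ℂ) → ℂ} (sF : ∀ J, ContDiffOn ℝ ∞ (F J) O) :
    Integrable (fun q => Complex.exp (Φ q) * g q * ∑ J, F J (q, v q) * Dj bb v J q) μ := by
  have hsub : Function.support (fun q => Complex.exp (Φ q) * g q * ∑ J, F J (q, v q) * Dj bb v J q) ⊆ tsupport χ := by
    intro q hq
    by_contra hh
    exact hq (by simp [hz q hh])
  apply supp_int μ S.hΩ
  · apply ContinuousOn.mul
    · exact (Complex.continuous_exp.comp hΦ.continuous).continuousOn.mul hg
    · apply continuousOn_finsetSum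
      intro J _
      exact (S.comp_smooth (sF J)).continuousOn.mul (S.Dj_cont J)
  · exact HasCompactSupport.of_support_subset_isCompact hχc.isCompact hsub
  · exact (closure_minimal hsub (isClosed_tsupport _)).trans hχΩ

theorem Stp.Lchi_cont (S : Stp bb O Ω v X) {χ : E → ℂ} (hχ : ContDiff ℝ 1 χ) : ContinuousOn (Lchi bb v X χ) Ω := by
  unfold Lchi
  apply continuousOn_finsetSum
  intro j _
  exact (S.comp_smooth (S.hXs _)).continuousOn.mul
    ((hχ.continuous_fderiv (by simp)).clm_apply continuous_const).continuousOn

set_option maxHeartbeats 2000000 in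
theorem Stp.step (S : Stp bb O Ω v X) (μ : Measure E) [μ.IsAddHaarMeasure] {Φ χ : E → ℂ} (hΦ : ContDiff ℝ 1 Φ)
    (hχ : ContDiff ℝ 1 χ) (hχc : HasCompactSupport χ) (hχΩ : tsupport χ ⊆ Ω)
    {ψ R : E × (V → ℂ) → ℂ} (sR : ContDiffOn ℝ ∞ R O) (hR : HolO O R) (hψR : ∀ y ∈ O, ψ y * R y = 1) (ρ : ℂ)
    (hΦL : ∀ q ∈ Ω, ∑ j, X (Sum.inl j) (q, v q) * fderiv ℝ Φ q (bb j) = ρ * ψ (q, v q))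
    {F : (ι → ι ⊕ V) → E × (V → ℂ) → ℂ} (sF : ∀ J, ContDiffOn ℝ ∞ (F J) O) (hF : ∀ J, HolO O (F J)) :
    ρ * Iint μ bb v Φ χ F = Iint μ bb v Φ χ (PF bb X R F) -
      Iint μ bb v Φ (Lchi bb v X χ) (fun J y => R y * F J y) := by
  have sRF : ∀ J, ContDiffOn ℝ ∞ (fun y => R y * F J y) O := fun J => sR.mul (sF J)
  have hRF : ∀ J, HolO O (fun y => R y * F J y) := fun J => hR.mul S.hO (hF J) sR (sF J)
  let φ : (ι → ι ⊕ V) → E → ℂ := fun J q => Complex.exp (Φ q) * χ q * (R (q, v q) * F J (q, v q))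
  have hφ1 : ∀ J, ContDiffOn ℝ 1 (φ J) Ω := fun J =>
    ((hΦ.cexp).mul hχ).contDiffOn.mul (S.comp_smooth (sRF J))
  have hsup : ∀ J, Function.support (φ J) ⊆ tsupport χ := by
    intro J q hq
    by_contra hh
    exact hq (by simp [φ, image_eq_zero_of_notMem_tsupport hh])
  have hφs : ∀ J, tsupport (φ J) ⊆ tsupport χ := fun J => closure_minimal (hsup J) (isClosed_tsupport _)
  have hst := fun J => star_id μ bb S.hΩ (fun i => yv bb v (J i)) (fun i q => X (J i) (q, v q)) (φ J)
    (fun j q => X (Sum.inl j) (q, v q)) (fun i => yv_smooth bb S.hv _) (fun i => S.comp_smooth (S.hXs _)) (hφ1 J)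
    (HasCompactSupport.of_support_subset_isCompact hχc.isCompact (hsup J)) ((hφs J).trans hχΩ)
    (fun i q hq => S.Xm (J i) hq)
  have hsum := integral_finsetSum (μ := μ) Finset.univ (fun J _ => (hst J).1)
  rw [Finset.sum_eq_zero (fun J _ => (hst J).2)] at hsum
  have hA := S.int_ok μ hΦ hχ.continuous.continuousOn (fun q hq => image_eq_zero_of_notMem_tsupport hq) hχc hχΩ sF
  have hB := S.int_ok μ hΦ (S.Lchi_cont hχ) (fun q hq => Lchi_zero hq) hχc hχΩ sRF
  have hT := integrable_finsetSum (μ := μ) Finset.univ (fun J _ => (hst J).1)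
  have hAB : Integrable (fun q => ρ * (Complex.exp (Φ q) * χ q * ∑ J, F J (q, v q) * Dj bb v J q) +
      Complex.exp (Φ q) * Lchi bb v X χ q * ∑ J, R (q, v q) * F J (q, v q) * Dj bb v J q) μ := (hA.const_mul ρ).add hB
  have hC : Iint μ bb v Φ χ (PF bb X R F) = ρ * Iint μ bb v Φ χ F + Iint μ bb v Φ (Lchi bb v X χ) (fun J y => R y * F J y) - 0 := by
    rw [← hsum]
    unfold Iint
    rw [← integral_const_mul, ← integral_add (hA.const_mul ρ) hB, ← integral_sub hAB hT]
    congr 1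
    ext q
    by_cases hq : q ∈ Ω
    · have hD : ∀ J, (Matrix.of fun i j => fderiv ℝ (yv bb v (J i)) q (bb j)).det = Dj bb v J q := fun J => rfl
      have hrow := fun J i => S.det_row (S.hXs (J i)) (S.hXh (J i)) hq J i
      simp_rw [hD, hrow]
      have hLφ : ∀ J, ∑ j, X (Sum.inl j) (q, v q) * fderiv ℝ (φ J) q (bb j) =
          Complex.exp (Φ q) * (ρ * χ q * F J (q, v q) + Lchi bb v X χ q * (R (q, v q) * F J (q, v q)) +
            χ q * ∑ m, X m (q, v q) * PD (eY bb) m (fun y => R y * F J y) (q, v q)) := by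
        intro J
        have d1 : HasFDerivAt (fun q => Complex.exp (Φ q)) _ q :=
          ((hΦ.differentiable (by simp)) q).hasFDerivAt.cexp
        have d2 : HasFDerivAt χ _ q := ((hχ.differentiable (by simp)) q).hasFDerivAt
        have d3 : HasFDerivAt (fun q => R (q, v q) * F J (q, v q)) _ q :=
          (((S.comp_smooth (sRF J)).contDiffAt (S.hΩ.mem_nhds hq)).differentiableAt (by simp)).hasFDerivAt
        have d : fderiv ℝ (φ J) q = _ := ((d1.mul d2).mul d3).fderiv
        rw [← S.L_comp (sRF J) (hRF J) hq, d]
        have e1 := hΦL q hq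
        have e2 := hψR _ (S.hσ q hq)
        have e3 : ρ * χ q * F J (q, v q) = (∑ j, X (Sum.inl j) (q, v q) * fderiv ℝ Φ q (bb j)) * χ q * (R (q, v q) * F J (q, v q)) := by
          rw [e1]; linear_combination (-ρ * χ q * F J (q, v q)) * e2
        rw [e3]
        unfold Lchi
        simp only [Finset.mul_sum, Finset.sum_mul, ← Finset.sum_add_distrib]
        apply Finset.sum_congr rfl
        intro j _
        simp only [add_apply, smul_apply, smul_eq_mul, Pi.mul_apply]
        ring
      simp_rw [hLφ]
      have hPF : ∑ J', PF bb X R F J' (q, v q) * Dj bb v J' q =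
          ∑ J, (-(∑ m, X m (q, v q) * PD (eY bb) m (fun y => R y * F J y) (q, v q)) * Dj bb v J q -
            ∑ i, ∑ m, (PD (eY bb) m (X (J i)) (q, v q) * (R (q, v q) * F J (q, v q))) * Dj bb v (Function.update J i m) q) := by
        simp only [PF, add_mul, Finset.sum_add_distrib, Finset.sum_sub_distrib, sub_eq_add_neg]
        congr 1
        · apply Finset.sum_congr rfl
          intro J _
          rw [← Finset.mul_sum]; ring
        · simp only [Finset.sum_mul]
          rw [Finset.sum_comm]
          apply Finset.sum_congr rfl
          intro J _
          rw [Finset.sum_comm, ← Finset.sum_neg_distrib]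
          apply Finset.sum_congr rfl
          intro i _
          rw [Finset.sum_comm, ← Finset.sum_neg_distrib]
          apply Finset.sum_congr rfl
          intro m _
          simp only [ite_mul, zero_mul, Finset.sum_ite_eq, Finset.mem_univ, if_true]
          ring
      rw [hPF]
      simp only [Finset.mul_sum, ← Finset.sum_add_distrib, ← Finset.sum_sub_distrib]
      apply Finset.sum_congr rfl
      intro J _
      simp only [φ, mul_add, mul_sub, add_mul, Finset.mul_sum, Finset.sum_mul, neg_mul, mul_neg]
      have : ∀ i m, Complex.exp (Φ q) * χ q * (R (q, v q) * F J (q, v q)) *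
          (PD (eY bb) m (X (J i)) (q, v q) * Dj bb v (Function.update J i m) q) =
          Complex.exp (Φ q) * χ q * (PD (eY bb) m (X (J i)) (q, v q) * (R (q, v q) * F J (q, v q)) * Dj bb v (Function.update J i m) q) := by
        intro i m; ring
      simp only [this]
      have h2 : ∀ m, Complex.exp (Φ q) * (χ q * (X m (q, v q) * PD (eY bb) m (fun y => R y * F J y) (q, v q))) * Dj bb v J q =
         Complex.exp (Φ q) * χ q * (X m (q, v q) * PD (eY bb) m (fun y => R y * F J y) (q, v q) * Dj bb v J q) := by
        intro m; ring
      simp only [h2, Finset.sum_neg_distrib, mul_neg]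
      ring
    · have hq' : q ∉ tsupport χ := fun hh => hq (hχΩ hh)
      have h0 : ∀ J, φ J =ᶠ[𝓝 q] fun _ => 0 := fun J => notMem_tsupport_iff_eventuallyEq.mp (fun hh => hq' (hφs J hh))
      have h1 : ∀ J, fderiv ℝ (φ J) q = 0 := fun J => by rw [(h0 J).fderiv_eq]; simp
      have h2 : ∀ J, φ J q = 0 := fun J => (h0 J).eq_of_nhds
      simp only [h1, h2]
      simp [image_eq_zero_of_notMem_tsupport hq', Lchi_zero hq']
  rw [hC]; ring

end Step2

open scoped BigOperators ContDiff Topology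
open MeasureTheory
set_option linter.unusedSectionVars false

section Est
variable {E : Type*} [NormedAddCommGroup E] [NormedSpace ℝ E] [FiniteDimensional ℝ E]
  [MeasurableSpace E] [BorelSpace E]
variable {ι V : Type*} [Fintype ι] [DecidableEq ι] [Fintype V] [DecidableEq V]
variable {bb : Module.Basis ι ℝ E} {O : Set (E × (V → ℂ))} {Ω : Set E} {v : E → V → ℂ}
    {X : ι ⊕ V → E × (V → ℂ) → ℂ} {M : ℕ → ℝ}

theorem PF_class (hM : WM M) (hO : IsOpen O) {CX CR h B : ℝ} (hCX : 0 ≤ CX) (hCR : 0 ≤ CR) (hh : 0 ≤ h)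
    (hB : 2 * h ≤ B) (hX : ∀ m, Cl (eY bb) O M CX h 0 (X m))
    (hdX : ∀ m m', Cl (eY bb) O M CX h 0 (PD (eY bb) m (X m'))) :
    ∃ A : ℝ, 0 ≤ A ∧ ∀ R, Cl (eY bb) O M CR h 0 R → ∀ (k : ℕ) (CF : ℝ) (F : (ι → ι ⊕ V) → E × (V → ℂ) → ℂ), 0 ≤ CF →
      (∀ J, Cl (eY bb) O M CF B k (F J)) → ∀ J, Cl (eY bb) O M (A * CF) B (k + 1) (PF bb X R F J) := by
  have hB0 : 0 ≤ B := by linarith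
  let A1 : ℝ := (Finset.univ : Finset (ι ⊕ V)).card * (2 * 1 * (2 * CX * (2 * CR * B)))
  let A2 : ℝ := (Finset.univ : Finset (ι → ι ⊕ V)).card * ((Finset.univ : Finset ι).card *
    ((Finset.univ : Finset (ι ⊕ V)).card * (2 * 1 * (2 * CX * (2 * CR)))))
  refine ⟨A1 + A2, by positivity, ?_⟩
  intro R hR k CF F hCF hF J'
  have hRF : ∀ J, Cl (eY bb) O M (2 * CR * CF) B k (fun y => R y * F J y) := fun J =>
    Cl.mul hM hO hR (hF J) hCR hCF hh hB
  have h1 : Cl (eY bb) O M (A1 * CF) B (k + 1)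
      (fun y => ∑ m, (-1) * (X m y * PD (eY bb) m (fun y => R y * F J' y) y)) := by
    have h1a : ∀ m ∈ (Finset.univ : Finset (ι ⊕ V)), Cl (eY bb) O M (2 * 1 * (2 * CX * (2 * CR * CF * B))) B (k + 1)
        (fun y => (-1) * (X m y * PD (eY bb) m (fun y => R y * F J' y) y)) := by
      intro m _
      apply Cl.cmul hM hO _ (by positivity) hB0 (-1) (by simp)
      exact Cl.mul hM hO (hX m) ((hRF J').pd hO m) hCX (by positivity) hh hB
    have := Cl.sum hM hO Finset.univ hB0 h1a
    convert this using 1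
    simp only [A1]; ring
  have h2 : Cl (eY bb) O M (A2 * CF) B k
      (fun y => ∑ J : ι → ι ⊕ V, ∑ i, ∑ m, (if Function.update J i m = J' then (-1 : ℂ) else 0) *
      (PD (eY bb) m (X (J i)) y * (R y * F J y))) := by
    have h2a : ∀ J ∈ (Finset.univ : Finset (ι → ι ⊕ V)), ∀ i ∈ (Finset.univ : Finset ι), ∀ m ∈ (Finset.univ : Finset (ι ⊕ V)),
        Cl (eY bb) O M (2 * 1 * (2 * CX * (2 * CR * CF))) B k
        (fun y => (if Function.update J i m = J' then (-1 : ℂ) else 0) *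
          (PD (eY bb) m (X (J i)) y * (R y * F J y))) := by
      intro J _ i _ m _
      apply Cl.cmul hM hO _ (by positivity) hB0 _ (by split_ifs <;> simp)
      exact Cl.mul hM hO (hdX _ _) (hRF J) hCX (by positivity) hh hB
    have := Cl.sum hM hO Finset.univ hB0 (fun J hJ => Cl.sum hM hO Finset.univ hB0 (fun i hi =>
      Cl.sum hM hO Finset.univ hB0 (h2a J hJ i hi)))
    convert this using 1
    simp only [A2]; ring
  have h3 := Cl.add hO h1 (h2.mono hM (by positivity) hB0 le_rfl le_rfl (Nat.le_succ k))
  rw [add_mul]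
  exact h3

/-- iterated coefficients -/
noncomputable def Fit (bb : Module.Basis ι ℝ E) (X : ι ⊕ V → E × (V → ℂ) → ℂ) (R : E × (V → ℂ) → ℂ)
    (F : (ι → ι ⊕ V) → E × (V → ℂ) → ℂ) : ℕ → (ι → ι ⊕ V) → E × (V → ℂ) → ℂ
  | 0 => F
  | k + 1 => PF bb X R (Fit bb X R F k)

theorem Stp.Iint_bd (S : Stp bb O Ω v X) (μ : Measure E) [μ.IsAddHaarMeasure] {g χ : E → ℂ}
    (hg : ContinuousOn g Ω) (hz : ∀ q ∉ tsupport χ, g q = 0) (hχc : HasCompactSupport χ) (hχΩ : tsupport χ ⊆ Ω) :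
    ∃ K : ℝ, 0 ≤ K ∧ ∀ (Φ : E → ℂ) (s N : ℝ) (F : (ι → ι ⊕ V) → E × (V → ℂ) → ℂ), 0 ≤ s → 0 ≤ N →
      (∀ q, g q ≠ 0 → ‖Complex.exp (Φ q)‖ ≤ s) → (∀ J, ∀ y ∈ O, ‖F J y‖ ≤ N) →
      ‖Iint μ bb v Φ g F‖ ≤ s * N * K := by
  let G : E → ℂ := fun q => g q * ∑ J, ((‖Dj bb v J q‖ : ℝ) : ℂ)
  have hsub : Function.support G ⊆ tsupport χ := by
    intro q hq
    by_contra hh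
    exact hq (by simp [G, hz q hh])
  have hG : Integrable G μ := by
    apply supp_int μ S.hΩ
    · apply hg.mul
      apply continuousOn_finsetSum
      intro J _
      exact Complex.continuous_ofReal.comp_continuousOn (S.Dj_cont J).norm
    · exact HasCompactSupport.of_support_subset_isCompact hχc.isCompact hsub
    · exact (closure_minimal hsub (isClosed_tsupport _)).trans hχΩ
  refine ⟨∫ q, ‖G q‖ ∂μ, integral_nonneg (fun q => norm_nonneg _), ?_⟩
  intro Φ s N F hs hN hΦ hF
  unfold Iint
  rw [← integral_const_mul]
  apply norm_integral_le_of_norm_le (hG.norm.const_mul _)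
  apply Filter.Eventually.of_forall
  intro q
  by_cases hq : g q = 0
  · simp [hq, G]
  · have hqΩ : q ∈ Ω := by
      apply hχΩ; by_contra hh; exact hq (hz q hh)
    have h1 : ‖G q‖ = ‖g q‖ * ∑ J, ‖Dj bb v J q‖ := by
      simp only [G, norm_mul, ← Complex.ofReal_sum]
      rw [Complex.norm_real, Real.norm_of_nonneg (Finset.sum_nonneg fun _ _ => norm_nonneg _)]
    have h2 : ‖∑ J, F J (q, v q) * Dj bb v J q‖ ≤ N * ∑ J, ‖Dj bb v J q‖ := by
      rw [Finset.mul_sum]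
      apply norm_sum_le_of_le
      intro J _
      rw [norm_mul]
      exact mul_le_mul_of_nonneg_right (hF J _ (S.hσ q hqΩ)) (norm_nonneg _)
    rw [norm_mul, norm_mul, h1]
    calc ‖Complex.exp (Φ q)‖ * ‖g q‖ * ‖∑ J, F J (q, v q) * Dj bb v J q‖ ≤ s * ‖g q‖ * (N * ∑ J, ‖Dj bb v J q‖) := by
          gcongr
          exact hΦ q hq
      _ = _ := by ring

theorem Cl.bd0 {Y : Type*} {e : Y → E × (V → ℂ)} {C h : ℝ} {k : ℕ} {F : E × (V → ℂ) → ℂ} (hF : Cl e O M C h k F) {y : E × (V → ℂ)} (hy : y ∈ O) :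
    ‖F y‖ ≤ C * M k := by
  have := hF.bd [] y hy
  simpa [DW] using this

theorem num_bound (hM : WM M) {ρ c a : ℝ} (hρ : 0 < ρ) (hc : 0 < c) (ha : 1 ≤ a) (hac : 1 / c ≤ a) (j m : ℕ) :
    ρ ^ m * (Real.exp (-(c * ρ)) * (a ^ j * M j)) ≤ a ^ (j + m) * M (j + m) := by
  have h1 := Real.pow_div_factorial_le_exp (c * ρ) (by positivity) m
  have hf : (0 : ℝ) < m.factorial := by exact_mod_cast m.factorial_pos
  have h2 : ρ ^ m * Real.exp (-(c * ρ)) ≤ m.factorial * a ^ m := by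
    rw [Real.exp_neg]
    have he := Real.exp_pos (c * ρ)
    rw [← div_eq_mul_inv, div_le_iff₀ he]
    have h3 : (c * ρ) ^ m ≤ m.factorial * Real.exp (c * ρ) := by
      rw [div_le_iff₀ hf] at h1; linarith
    have h4 : ρ ^ m = (1 / c) ^ m * (c * ρ) ^ m := by
      rw [← mul_pow]; congr 1; field_simp
    rw [h4]
    calc (1 / c) ^ m * (c * ρ) ^ m ≤ a ^ m * (m.factorial * Real.exp (c * ρ)) := by
          gcongr
      _ = _ := by ring
  have h5 := hM.fact j m
  have hMj := hM.pos j
  calc ρ ^ m * (Real.exp (-(c * ρ)) * (a ^ j * M j)) = (ρ ^ m * Real.exp (-(c * ρ))) * (a ^ j * M j) := by ring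
    _ ≤ (m.factorial * a ^ m) * (a ^ j * M j) := by gcongr
    _ = a ^ (j + m) * (M j * m.factorial) := by rw [pow_add]; ring
    _ ≤ _ := by gcongr

theorem Stp.est (S : Stp bb O Ω v X) (hM : WM M) (μ : Measure E) [μ.IsAddHaarMeasure] {χ : E → ℂ}
    (hχ : ContDiff ℝ 1 χ) (hχc : HasCompactSupport χ) (hχΩ : tsupport χ ⊆ Ω)
    {CX CR C0 h B c : ℝ} (hCX : 0 ≤ CX) (hCR : 0 ≤ CR) (hC0 : 0 ≤ C0) (hh : 0 ≤ h) (hc : 0 < c)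
    (hB : 2 * h ≤ B) (hX : ∀ m, Cl (eY bb) O M CX h 0 (X m))
    (hdX : ∀ m m', Cl (eY bb) O M CX h 0 (PD (eY bb) m (X m'))) :
    ∃ A > (0 : ℝ), ∀ (Φ : E → ℂ) (ψ R : E × (V → ℂ) → ℂ) (ρ : ℝ) (F0 : (ι → ι ⊕ V) → E × (V → ℂ) → ℂ),
      ContDiff ℝ 1 Φ → 0 < ρ → Cl (eY bb) O M CR h 0 R → (∀ y ∈ O, ψ y * R y = 1) →
      (∀ q ∈ Ω, ∑ j, X (Sum.inl j) (q, v q) * fderiv ℝ Φ q (bb j) = (ρ : ℂ) * ψ (q, v q)) →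
      (∀ q, ‖Complex.exp (Φ q)‖ ≤ 1) → (∀ q, Lchi bb v X χ q ≠ 0 → ‖Complex.exp (Φ q)‖ ≤ Real.exp (-(c * ρ))) →
      (∀ J, Cl (eY bb) O M C0 B 0 (F0 J)) → ∀ k : ℕ, ‖Iint μ bb v Φ χ F0‖ ≤ A ^ (k + 1) * M k / ρ ^ k := by
  obtain ⟨A1, hA1, hPF⟩ := PF_class hM S.hO hCX hCR hh hB hX hdX
  obtain ⟨K1, hK1, hI1⟩ := S.Iint_bd μ hχ.continuous.continuousOn (fun q hq => image_eq_zero_of_notMem_tsupport hq) hχc hχΩ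
  obtain ⟨K2, hK2, hI2⟩ := S.Iint_bd μ (S.Lchi_cont hχ) (fun q hq => Lchi_zero hq) hχc hχΩ
  let a : ℝ := A1 + 1 / c + 1
  have hc' : 0 < 1 / c := by positivity
  have ha1 : 1 ≤ a := by simp only [a]; linarith
  have haA : A1 ≤ a := by simp only [a]; linarith
  have hac : 1 / c ≤ a := by simp only [a]; linarith
  let D : ℝ := C0 * K1 + CR * C0 * K2
  have hD : 0 ≤ D := by positivity
  refine ⟨2 * a + D, by linarith, ?_⟩
  intro Φ ψ R ρ F0 hΦ hρ hR hψR hΦL hΦ1 hΦ2 hF0 k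
  let F := Fit bb X R F0
  have hF : ∀ k J, Cl (eY bb) O M (A1 ^ k * C0) B k (F k J) := by
    intro k
    induction k with
    | zero => simpa [F, Fit] using hF0
    | succ k ih =>
      intro J
      have := hPF R hR k _ _ (by positivity) ih J
      rw [pow_succ]
      rw [show A1 ^ k * A1 * C0 = A1 * (A1 ^ k * C0) by ring]
      exact this
  have hstep : ∀ k, (ρ : ℂ) * Iint μ bb v Φ χ (F k) = Iint μ bb v Φ χ (F (k + 1)) -
      Iint μ bb v Φ (Lchi bb v X χ) (fun J y => R y * F k J y) := fun k =>
    S.step μ hΦ hχ hχc hχΩ hR.smooth hR.hol hψR ρ hΦL (fun J => (hF k J).smooth) (fun J => (hF k J).hol)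
  have hT : ∀ k, ‖Iint μ bb v Φ χ (F k)‖ ≤ C0 * K1 * (a ^ k * M k) := by
    intro k
    have hMk := hM.pos k
    have := hI1 Φ 1 (A1 ^ k * C0 * M k) (F k) (by norm_num) (by positivity) (fun q _ => hΦ1 q) (fun J y hy => (hF k J).bd0 hy)
    refine this.trans ?_
    have : A1 ^ k ≤ a ^ k := by gcongr
    calc 1 * (A1 ^ k * C0 * M k) * K1 = C0 * K1 * (A1 ^ k * M k) := by ring
      _ ≤ _ := by gcongr
  have hBd : ∀ k, ‖Iint μ bb v Φ (Lchi bb v X χ) (fun J y => R y * F k J y)‖ ≤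
      CR * C0 * K2 * (Real.exp (-(c * ρ)) * (a ^ k * M k)) := by
    intro k
    have hMk := hM.pos k
    have := hI2 Φ (Real.exp (-(c * ρ))) (CR * (A1 ^ k * C0 * M k)) (fun J y => R y * F k J y) (Real.exp_pos _).le
      (by positivity) hΦ2 (fun J y hy => by
        rw [norm_mul]
        have e1 := hR.bd0 hy
        rw [hM.zero, mul_one] at e1
        have e2 := (hF k J).bd0 hy
        gcongr)
    refine this.trans ?_
    have : A1 ^ k ≤ a ^ k := by gcongr
    have he := (Real.exp_pos (-(c * ρ))).le
    calc Real.exp (-(c * ρ)) * (CR * (A1 ^ k * C0 * M k)) * K2 = CR * C0 * K2 * (Real.exp (-(c * ρ)) * (A1 ^ k * M k)) := by ring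
      _ ≤ _ := by gcongr
  have hind : ∀ k, ρ ^ k * ‖Iint μ bb v Φ χ F0‖ ≤ ‖Iint μ bb v Φ χ (F k)‖ + k * (CR * C0 * K2 * (a ^ k * M k)) := by
    intro k
    have : ∀ k, ∀ m, ρ ^ m * (ρ ^ k * ‖Iint μ bb v Φ χ F0‖) ≤ ρ ^ m * ‖Iint μ bb v Φ χ (F k)‖ +
        k * (CR * C0 * K2 * (a ^ (k + m) * M (k + m))) := by
      intro k
      induction k with
      | zero => intro m; simp [F, Fit]
      | succ k ih =>
        intro m
        have h1 := ih (m + 1)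
        have h2 : ρ * ‖Iint μ bb v Φ χ (F k)‖ ≤ ‖Iint μ bb v Φ χ (F (k + 1))‖ + CR * C0 * K2 * (Real.exp (-(c * ρ)) * (a ^ k * M k)) := by
          have e1 := congrArg norm (hstep k)
          rw [norm_mul, Complex.norm_real, Real.norm_of_nonneg hρ.le] at e1
          rw [e1]
          exact (norm_sub_le _ _).trans (add_le_add le_rfl (hBd k))
        have h3 := num_bound hM hρ hc ha1 hac k m
        have h4 : a ^ (k + m) * M (k + m) ≤ a ^ (k + 1 + m) * M (k + 1 + m) := by
          have := hM.pos (k + m)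
          have := hM.mono' (show k + m ≤ k + 1 + m by omega)
          have : a ^ (k + m) ≤ a ^ (k + 1 + m) := pow_le_pow_right₀ ha1 (by omega)
          gcongr
        have hpm : 0 ≤ ρ ^ m := by positivity
        have hQ : 0 ≤ CR * C0 * K2 := by positivity
        calc ρ ^ m * (ρ ^ (k + 1) * ‖Iint μ bb v Φ χ F0‖) = ρ ^ (m + 1) * (ρ ^ k * ‖Iint μ bb v Φ χ F0‖) := by ring
          _ ≤ ρ ^ (m + 1) * ‖Iint μ bb v Φ χ (F k)‖ + k * (CR * C0 * K2 * (a ^ (k + (m + 1)) * M (k + (m + 1)))) := h1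
          _ = ρ ^ m * (ρ * ‖Iint μ bb v Φ χ (F k)‖) + k * (CR * C0 * K2 * (a ^ (k + 1 + m) * M (k + 1 + m))) := by
              rw [show k + (m + 1) = k + 1 + m by ring]; ring
          _ ≤ ρ ^ m * (‖Iint μ bb v Φ χ (F (k + 1))‖ + CR * C0 * K2 * (Real.exp (-(c * ρ)) * (a ^ k * M k)))
              + k * (CR * C0 * K2 * (a ^ (k + 1 + m) * M (k + 1 + m))) := by gcongr
          _ = ρ ^ m * ‖Iint μ bb v Φ χ (F (k + 1))‖ + CR * C0 * K2 * (ρ ^ m * (Real.exp (-(c * ρ)) * (a ^ k * M k)))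
              + k * (CR * C0 * K2 * (a ^ (k + 1 + m) * M (k + 1 + m))) := by ring
          _ ≤ ρ ^ m * ‖Iint μ bb v Φ χ (F (k + 1))‖ + CR * C0 * K2 * (a ^ (k + 1 + m) * M (k + 1 + m))
              + k * (CR * C0 * K2 * (a ^ (k + 1 + m) * M (k + 1 + m))) := by
                have := mul_le_mul_of_nonneg_left (h3.trans h4) hQ
                linarith
          _ = _ := by push_cast; ring
    simpa using this k 0
  rw [le_div_iff₀ (by positivity)]
  have hMk := hM.pos k
  have hQ : 0 ≤ CR * C0 * K2 := by positivity
  have hk2 : (k : ℝ) ≤ 2 ^ k := by exact_mod_cast Nat.lt_two_pow_self.le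
  have h12 : (1 : ℝ) ≤ 2 ^ k := one_le_pow₀ (by norm_num)
  have hak : 0 ≤ a ^ k * M k := by positivity
  calc ‖Iint μ bb v Φ χ F0‖ * ρ ^ k = ρ ^ k * ‖Iint μ bb v Φ χ F0‖ := by ring
    _ ≤ _ := hind k
    _ ≤ C0 * K1 * (a ^ k * M k) + k * (CR * C0 * K2 * (a ^ k * M k)) := by gcongr; exact hT k
    _ ≤ 2 ^ k * (C0 * K1 * (a ^ k * M k)) + 2 ^ k * (CR * C0 * K2 * (a ^ k * M k)) := by
        apply add_le_add
        · exact le_mul_of_one_le_left (by positivity) h12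
        · exact mul_le_mul_of_nonneg_right hk2 (by positivity)
    _ = D * (2 * a) ^ k * M k := by simp only [D]; rw [mul_pow]; ring
    _ ≤ (2 * a + D) * (2 * a + D) ^ k * M k := by
        gcongr <;> linarith
    _ = _ := by rw [pow_succ]; ring

end Est

open scoped BigOperators ContDiff Topology
open MeasureTheory
set_option linter.unusedSectionVars false

section InClass
variable {E : Type*} [NormedAddCommGroup E] [NormedSpace ℝ E]
variable {Y V : Type*} [Fintype V]
variable {e : Y → E × (V → ℂ)} {O : Set (E × (V → ℂ))} {M : ℕ → ℝ}

/-- membership in the class with some constants -/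
def InCl (e : Y → E × (V → ℂ)) (O : Set (E × (V → ℂ))) (M : ℕ → ℝ) (F : E × (V → ℂ) → ℂ) : Prop :=
  ∃ C h : ℝ, 0 ≤ C ∧ 0 ≤ h ∧ Cl e O M C h 0 F

theorem Cl.subset {C h : ℝ} {k : ℕ} {F : E × (V → ℂ) → ℂ} (H : Cl e O M C h k F) {O' : Set (E × (V → ℂ))}
    (hs : O' ⊆ O) : Cl e O' M C h k F :=
  ⟨H.smooth.mono hs, fun y hy => H.hol y (hs hy), fun w y hy => H.bd w y (hs hy)⟩

theorem InCl.add (hM : WM M) (hO : IsOpen O) {F G : E × (V → ℂ) → ℂ} (hF : InCl e O M F) (hG : InCl e O M G) :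
    InCl e O M (fun y => F y + G y) := by
  obtain ⟨C, h, hC, hh, H⟩ := hF
  obtain ⟨C', h', hC', hh', H'⟩ := hG
  exact ⟨C + C', max h h', by positivity, le_max_of_le_left hh,
    Cl.add hO (H.mono hM hC hh le_rfl (le_max_left _ _) le_rfl) (H'.mono hM hC' hh' le_rfl (le_max_right _ _) le_rfl)⟩

theorem InCl.mul (hM : WM M) (hO : IsOpen O) {F G : E × (V → ℂ) → ℂ} (hF : InCl e O M F) (hG : InCl e O M G) :
    InCl e O M (fun y => F y * G y) := by
  obtain ⟨C, h, hC, hh, H⟩ := hF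
  obtain ⟨C', h', hC', hh', H'⟩ := hG
  exact ⟨2 * C * C', max (2 * h) h', by positivity, le_max_of_le_right hh',
    Cl.mul hM hO H (H'.mono hM hC' hh' le_rfl (le_max_right _ _) le_rfl) hC hC' hh (le_max_left _ _)⟩

theorem InCl.const (hM : WM M) (c : ℂ) : InCl e O M (fun _ => c) :=
  ⟨‖c‖, 0, norm_nonneg _, le_rfl, Cl.const hM le_rfl c⟩

theorem InCl.pd (hM : WM M) (hO : IsOpen O) {F : E × (V → ℂ) → ℂ} (hF : InCl e O M F) (m : Y) :
    InCl e O M (PD e m F) := by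
  obtain ⟨C, h, hC, hh, H⟩ := hF
  obtain ⟨D, hD, hder⟩ := hM.der
  exact ⟨C * h, h * D, by positivity, by positivity, H.pd0 hO hC hh hder m⟩

theorem InCl.sum (hM : WM M) (hO : IsOpen O) {ι : Type*} (s : Finset ι) {F : ι → E × (V → ℂ) → ℂ}
    (hF : ∀ i ∈ s, InCl e O M (F i)) : InCl e O M (fun y => ∑ i ∈ s, F i y) := by
  classical
  induction s using Finset.induction_on with
  | empty => simpa using InCl.const hM (0 : ℂ)
  | insert i s hi ih =>
    simp only [Finset.sum_insert hi]
    exact InCl.add hM hO (hF i (by simp)) (ih (fun j hj => hF j (by simp [hj])))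

theorem InCl.lin (hM : WM M) [Finite Y] (ℓ : E × (V → ℂ) →L[ℝ] ℂ)
    (hℓ : ∀ z, ℓ (0, Complex.I • z) = Complex.I * ℓ (0, z)) (hO : Bornology.IsBounded O) : InCl e O M (fun y => ℓ y) := by
  obtain ⟨R, hR⟩ := hO.exists_norm_le
  obtain ⟨R', hR'⟩ := (Set.finite_range (fun m => ‖ℓ (e m)‖)).bddAbove
  have hn : 0 ≤ ‖ℓ‖ := norm_nonneg _
  refine ⟨‖ℓ‖ * |R| + |R'|, 1, by positivity, by norm_num, Cl.lin hM le_rfl ℓ hℓ ?_ ?_ (by positivity)⟩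
  · intro y hy
    have h1 := ℓ.le_opNorm y
    have h2 : ‖ℓ‖ * ‖y‖ ≤ ‖ℓ‖ * |R| := mul_le_mul_of_nonneg_left ((hR y hy).trans (le_abs_self _)) hn
    have := abs_nonneg R'
    linarith
  · intro m
    have h1 : ‖ℓ (e m)‖ ≤ R' := hR' ⟨m, rfl⟩
    have h2 := le_abs_self R'
    have : 0 ≤ ‖ℓ‖ * |R| := by positivity
    linarith

theorem InCl.unif (hM : WM M) {ι : Type*} (s : Finset ι) {F : ι → E × (V → ℂ) → ℂ} (hF : ∀ i ∈ s, InCl e O M (F i)) :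
    ∃ C h : ℝ, 0 ≤ C ∧ 0 ≤ h ∧ ∀ i ∈ s, Cl e O M C h 0 (F i) := by
  classical
  induction s using Finset.induction_on with
  | empty => exact ⟨0, 0, le_rfl, le_rfl, by simp⟩
  | insert i s hi ih =>
    obtain ⟨C, h, hC, hh, H⟩ := ih (fun j hj => hF j (by simp [hj]))
    obtain ⟨C', h', hC', hh', H'⟩ := hF i (by simp)
    refine ⟨C + C', max h h', by positivity, le_max_of_le_left hh, ?_⟩
    intro j hj
    rcases Finset.mem_insert.mp hj with rfl | hj
    · exact H'.mono hM hC' hh' (by linarith) (le_max_right _ _) le_rfl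
    · exact (H j hj).mono hM hC hh (by linarith) (le_max_left _ _) le_rfl
end InClass

section Concrete
variable {d n : ℕ}

/-- the nonlinearity as a function on the jet space -/
def ft (fj : PSp d n → ℂ → (Fin d → ℂ) → ℂ) : PSp d n × (Option (Fin d) → ℂ) → ℂ :=
  fun y => fj y.1 (y.2 none) (fun k => y.2 (some k))

/-- splitting map -/
noncomputable def spl (d : ℕ) : (Option (Fin d) → ℂ) →L[ℂ] ℂ × (Fin d → ℂ) :=
  (ContinuousLinearMap.proj none).prod (ContinuousLinearMap.pi fun k => ContinuousLinearMap.proj (some k))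

theorem spl_apply (z : Option (Fin d) → ℂ) : spl d z = (z none, fun k => z (some k)) := rfl

theorem slice_eq {fj : PSp d n → ℂ → (Fin d → ℂ) → ℂ} (p : PSp d n) (z : Option (Fin d) → ℂ) (l : Option (Fin d)) :
    (fun c : ℂ => ft fj (p, z + Pi.single l c)) =
    fun c : ℂ => (fun q : ℂ × (Fin d → ℂ) => fj p q.1 q.2) (spl d z + c • spl d (Pi.single l 1)) := by
  funext c
  have : spl d z + c • spl d (Pi.single l 1) = spl d (z + Pi.single l c) := by
    rw [map_add, ← map_smul]
    congr 2
    ext m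
    by_cases hm : m = l
    · subst hm; simp
    · simp [hm]
  rw [this]
  rfl

theorem ft_hol {fj : PSp d n → ℂ → (Fin d → ℂ) → ℂ} {Ω : Set (PSp d n)}
    (hfhol : ∀ p ∈ Ω, Differentiable ℂ (fun q : ℂ × (Fin d → ℂ) => fj p q.1 q.2)) (l : Option (Fin d)) :
    SHol Ω (ft fj) l := by
  intro p hp z
  rw [slice_eq]
  apply (hfhol p hp).comp
  fun_prop

theorem ft_pd {fj : PSp d n → ℂ → (Fin d → ℂ) → ℂ} {Ω : Set (PSp d n)}
    (hfhol : ∀ p ∈ Ω, Differentiable ℂ (fun q : ℂ × (Fin d → ℂ) => fj p q.1 q.2)) {y : PSp d n × (Option (Fin d) → ℂ)}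
    (hy : y.1 ∈ Ω) (hd : DifferentiableAt ℝ (ft fj) y) (k : Fin d) :
    PD (eY (bE d n)) (Sum.inr (some k)) (ft fj) y =
      fderiv ℂ (fun q : ℂ × (Fin d → ℂ) => fj y.1 q.1 q.2) (y.2 none, fun k => y.2 (some k)) ((0 : ℂ), Pi.single k (1 : ℂ)) := by
  have h1 := SD_line (ft_hol hfhol (some k)) hy 1
  have h2 : HasLineDerivAt ℝ (ft fj) (fderiv ℝ (ft fj) y (0, Pi.single (some k) 1)) y (0, Pi.single (some k) 1) :=
    hd.hasFDerivAt.hasLineDerivAt _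
  have h3 := h2.unique h1
  rw [one_mul] at h3
  show fderiv ℝ (ft fj) y (0, Pi.single (some k) 1) = _
  rw [h3]
  unfold SD
  rw [slice_eq]
  have hs : spl d (Pi.single (some k) 1) = ((0 : ℂ), Pi.single k (1 : ℂ)) := by
    rw [spl_apply]
    ext m
    · simp
    · simp [Pi.single_apply]
  have hA : HasDerivAt (fun c : ℂ => spl d y.2 + c • spl d (Pi.single (some k) 1)) (spl d (Pi.single (some k) 1)) 0 := by
    simpa using ((hasDerivAt_id (0 : ℂ)).smul_const (spl d (Pi.single (some k) 1))).const_add (spl d y.2)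
  have hB : HasFDerivAt (fun q : ℂ × (Fin d → ℂ) => fj y.1 q.1 q.2) _ (spl d y.2 + (0 : ℂ) • spl d (Pi.single (some k) 1)) :=
    ((hfhol y.1 hy) _).hasFDerivAt
  have := (hB.comp_hasDerivAt (0 : ℂ) hA).deriv
  rw [hs] at this ⊢
  simp only [zero_smul, add_zero] at this
  rw [spl_apply] at this
  exact this

theorem ft_class {fj : PSp d n → ℂ → (Fin d → ℂ) → ℂ} {Ω : Set (PSp d n)} {M : ℕ → ℝ} (hM : WM M) (hΩ : IsOpen Ω)
    (hfsm : ∀ (ζ0 : ℂ) (ζ : Fin d → ℂ), ContDiffOn ℝ (⊤ : ℕ∞) (fun p => fj p ζ0 ζ) Ω)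
    (hfhol : ∀ p ∈ Ω, Differentiable ℂ (fun q : ℂ × (Fin d → ℂ) => fj p q.1 q.2))
    (hfCM : ∀ (K : Set (PSp d n × ℂ × (Fin d → ℂ))), IsCompact K →
      K ⊆ Ω ×ˢ (Set.univ : Set (ℂ × (Fin d → ℂ))) →
      ∃ C > (0 : ℝ), ∀ (α : Fin d → ℕ) (β : Fin n → ℕ), ∀ q ∈ K,
        ‖PDxt α β (fun p => fj p q.2.1 q.2.2) q.1‖
          ≤ C ^ ((∑ i, α i) + (∑ i, β i) + 1) * M ((∑ i, α i) + (∑ i, β i)))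
    (y0 : PSp d n × (Option (Fin d) → ℂ)) (hy0 : y0.1 ∈ Ω) :
    ∃ r > 0, Metric.ball y0.1 r ⊆ Ω ∧ InCl (eY (bE d n)) (Metric.ball y0.1 r ×ˢ Metric.ball y0.2 r) M (ft fj) := by
  refine f_class hM (bE d n) hΩ (fun z => hfsm (z none) (fun k => z (some k))) (ft_hol hfhol) ?_ y0 hy0
  intro K hK hKΩ
  let T : PSp d n × (Option (Fin d) → ℂ) → PSp d n × ℂ × (Fin d → ℂ) := fun y => (y.1, spl d y.2)
  have hT : Continuous T := continuous_fst.prodMk ((spl d).continuous.comp continuous_snd)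
  obtain ⟨C, hC, H⟩ := hfCM (T '' K) (hK.image hT) (by
    rintro _ ⟨y, hy, rfl⟩
    exact ⟨(hKΩ hy).1, trivial⟩)
  refine ⟨C, hC, fun α y hy => ?_⟩
  apply word_bound hΩ (hfsm (y.2 none) (fun k => y.2 (some k))) (hKΩ hy).1
  intro a b
  exact H a b (T y) ⟨y, hy, rfl⟩
end Concrete

open scoped BigOperators ContDiff Topology
open MeasureTheory
set_option linter.unusedSectionVars false

section Concrete
variable {d n : ℕ}

/-- the one-jet in `x` of `u` -/
noncomputable def vj (u : PSp d n → ℂ) (q : PSp d n) : Option (Fin d) → ℂ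
  | none => u q
  | some k => fderiv ℝ u q (Pi.single k 1, 0)

/-- components of the lifted vector field -/
noncomputable def Xf (fj : PSp d n → ℂ → (Fin d → ℂ) → ℂ) (j : Fin n) :
    (Fin d ⊕ Fin n) ⊕ Option (Fin d) → PSp d n × (Option (Fin d) → ℂ) → ℂ
  | Sum.inl (Sum.inl k) => fun y => (-1) * PD (eY (bE d n)) (Sum.inr (some k)) (ft fj) y
  | Sum.inl (Sum.inr i) => fun _ => if i = j then 1 else 0
  | Sum.inr none => fun y => ft fj y + ∑ k, (-1) * (y.2 (some k) * PD (eY (bE d n)) (Sum.inr (some k)) (ft fj) y)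
  | Sum.inr (some k) => fun y => PD (eY (bE d n)) (Sum.inl (Sum.inl k)) (ft fj) y +
      y.2 (some k) * PD (eY (bE d n)) (Sum.inr none) (ft fj) y

theorem InCl_zc {O : Set (PSp d n × (Option (Fin d) → ℂ))} {M : ℕ → ℝ} (hM : WM M) (hOb : Bornology.IsBounded O)
    (l : Option (Fin d)) : InCl (eY (bE d n)) O M (fun y => y.2 l) :=
  InCl.lin hM ((ContinuousLinearMap.proj (R := ℝ) (φ := fun _ : Option (Fin d) => ℂ) l).comp (ContinuousLinearMap.snd ℝ (PSp d n) (Option (Fin d) → ℂ)))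
    (fun z => by simp) hOb

/-- coordinates of a point -/
def co (q : PSp d n) : Fin d ⊕ Fin n → ℝ := Sum.elim q.1 q.2

noncomputable def coL (i : Fin d ⊕ Fin n) : PSp d n →L[ℝ] ℝ :=
  match i with
  | Sum.inl k => (ContinuousLinearMap.proj (R := ℝ) (φ := fun _ : Fin d => ℝ) k).comp (ContinuousLinearMap.fst ℝ _ _)
  | Sum.inr k => (ContinuousLinearMap.proj (R := ℝ) (φ := fun _ : Fin n => ℝ) k).comp (ContinuousLinearMap.snd ℝ _ _)

theorem coL_apply (i : Fin d ⊕ Fin n) (q : PSp d n) : coL i q = co q i := by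
  rcases i with k | k <;> rfl

theorem co_basis (i i' : Fin d ⊕ Fin n) : co (bE d n i) i' = if i' = i then 1 else 0 := by
  rcases i with k | k <;> rcases i' with k' | k' <;> simp [bE_inl, bE_inr, co, Pi.single_apply]

theorem InCl_co {O : Set (PSp d n × (Option (Fin d) → ℂ))} {M : ℕ → ℝ} (hM : WM M) (hOb : Bornology.IsBounded O)
    (i : Fin d ⊕ Fin n) : InCl (eY (bE d n)) O M (fun y => ((co y.1 i : ℝ) : ℂ)) := by
  have := InCl.lin (e := eY (bE d n)) (V := Option (Fin d)) hM
    (Complex.ofRealCLM.comp ((coL i).comp (ContinuousLinearMap.fst ℝ (PSp d n) (Option (Fin d) → ℂ))))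
    (fun z => by simp) hOb
  simpa [coL_apply] using this

theorem Xf_class {fj : PSp d n → ℂ → (Fin d → ℂ) → ℂ} {j : Fin n} {O : Set (PSp d n × (Option (Fin d) → ℂ))} {M : ℕ → ℝ} (hM : WM M)
    (hO : IsOpen O) (hOb : Bornology.IsBounded O) (hf : InCl (eY (bE d n)) O M (ft fj)) (m) :
    InCl (eY (bE d n)) O M (Xf fj j m) := by
  rcases m with (k | i) | (_ | k)
  · exact InCl.mul hM hO (InCl.const hM _) (hf.pd hM hO _)
  · exact InCl.const hM _
  · apply InCl.add hM hO hf
    apply InCl.sum hM hO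
    intro k _
    exact InCl.mul hM hO (InCl.const hM _) (InCl.mul hM hO (InCl_zc hM hOb _) (hf.pd hM hO _))
  · exact InCl.add hM hO (hf.pd hM hO _) (InCl.mul hM hO (InCl_zc hM hOb _) (hf.pd hM hO _))

theorem vj_smooth {u : PSp d n → ℂ} {Ω : Set (PSp d n)} (hΩ : IsOpen Ω) (hu : ContDiffOn ℝ 2 u Ω) :
    ContDiffOn ℝ 1 (vj u) Ω := by
  rw [contDiffOn_pi]
  rintro (_ | k)
  · exact hu.of_le (by norm_num)
  · exact (hu.fderiv_of_isOpen hΩ (by norm_num)).clm_apply contDiffOn_const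

theorem Xf_v {u : PSp d n → ℂ} {Ω : Set (PSp d n)} (hΩ : IsOpen Ω) (hu : ContDiffOn ℝ 2 u Ω)
    {fj : PSp d n → ℂ → (Fin d → ℂ) → ℂ} {j : Fin n} (hPDE : ∀ p ∈ Ω,
      fderiv ℝ u p ((0, Pi.single j (1 : ℝ)) : PSp d n) =
        fj p (u p) (fun k => fderiv ℝ u p ((Pi.single k (1 : ℝ), 0) : PSp d n)))
    {O : Set (PSp d n × (Option (Fin d) → ℂ))} {q : PSp d n} (hq : q ∈ Ω) (hqO : (q, vj u q) ∈ O)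
    (hF : HolO O (ft fj)) (sF : DifferentiableAt ℝ (ft fj) (q, vj u q)) (l : Option (Fin d)) :
    ∑ i, fderiv ℝ (vj u) q (bE d n i) l * Xf fj j (Sum.inl i) (q, vj u q) = Xf fj j (Sum.inr l) (q, vj u q) := by
  have hvd : DifferentiableAt ℝ (vj u) q := ((vj_smooth hΩ hu).contDiffAt (hΩ.mem_nhds hq)).differentiableAt (by simp)
  have hn : ∀ e, fderiv ℝ (vj u) q e none = fderiv ℝ u q e := by
    intro e
    rw [← yv_inr (bE d n) (vj u) none hvd]; rfl
  have hua : ContDiffAt ℝ 2 u q := hu.contDiffAt (hΩ.mem_nhds hq)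
  have hud : DifferentiableAt ℝ (fderiv ℝ u) q :=
    (hua.fderiv_right (m := 1) (by norm_num)).differentiableAt (by simp)
  have hfd : ∀ e' e, fderiv ℝ (fun q => fderiv ℝ u q e') q e = fderiv ℝ (fderiv ℝ u) q e e' := by
    intro e' e
    have := (hud.hasFDerivAt.clm_apply (hasFDerivAt_const e' q)).fderiv
    rw [this]; simp
  have hs : ∀ k e, fderiv ℝ (vj u) q e (some k) = fderiv ℝ (fderiv ℝ u) q e (Pi.single k 1, 0) := by
    intro k e
    rw [← yv_inr (bE d n) (vj u) (some k) hvd, ← hfd]; rfl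
  have hsym : ∀ a b, fderiv ℝ (fderiv ℝ u) q a b = fderiv ℝ (fderiv ℝ u) q b a := by
    intro a b
    exact (hua.isSymmSndFDerivAt (by simp)).eq a b
  have hPt : ∀ e, fderiv ℝ (fderiv ℝ u) q e (0, Pi.single j 1) = fderiv ℝ (fun q => ft fj (q, vj u q)) q e := by
    intro e
    rw [← hfd]
    have : (fun q => fderiv ℝ u q (0, Pi.single j 1)) =ᶠ[𝓝 q] fun q => ft fj (q, vj u q) := by
      filter_upwards [hΩ.mem_nhds hq] with p hp
      rw [hPDE p hp]; rfl
    rw [this.fderiv_eq]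
  rcases l with _ | k
  · simp only [hn, Fintype.sum_sum_type, bE_inl, bE_inr, Xf]
    simp only [mul_ite, mul_one, mul_zero, Finset.sum_ite_eq', Finset.mem_univ, if_true]
    rw [hPDE q hq, add_comm]
    congr 1
    apply Finset.sum_congr rfl
    intro k _
    show _ = -1 * (fderiv ℝ u q (Pi.single k 1, 0) * _)
    ring
  · simp only [hs, Fintype.sum_sum_type, bE_inl, bE_inr, Xf]
    simp only [mul_ite, mul_one, mul_zero, Finset.sum_ite_eq', Finset.mem_univ, if_true]
    rw [hsym (0, Pi.single j 1), hPt, chain_rule (bE d n) hF sF hvd hqO]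
    simp only [Fintype.sum_sum_type, Fintype.sum_option, yv_inl, yv_inr _ _ _ hvd, hn, hs]
    have hr : ∀ i, (bE d n).repr (Pi.single k (1:ℝ), 0) i = if i = Sum.inl k then 1 else 0 := by
      intro i
      rw [← bE_inl, Module.Basis.repr_self, Finsupp.single_apply]
      simp only [eq_comm]
    simp only [hr, Sum.inl.injEq, reduceCtorEq, if_false, Complex.ofReal_zero, mul_zero, Finset.sum_const_zero, add_zero]
    have hr2 : ∀ x, (((if x = k then (1:ℝ) else 0 : ℝ)) : ℂ) = if x = k then 1 else 0 := fun x => by split_ifs <;> simp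
    simp only [hr2, mul_ite, mul_one, mul_zero, Finset.sum_ite_eq', Finset.mem_univ, if_true]
    have hc : ∀ x : Fin d, fderiv ℝ (fderiv ℝ u) q (Pi.single x 1, 0) (Pi.single k 1, 0) =
      fderiv ℝ (fderiv ℝ u) q (Pi.single k 1, 0) (Pi.single x 1, 0) := fun x => hsym _ _
    have hv0 : vj u q (some k) = fderiv ℝ u q (Pi.single k 1, 0) := rfl
    simp only [hc, hv0]
    have : ∑ x : Fin d, fderiv ℝ (fderiv ℝ u) q (Pi.single k 1, 0) (Pi.single x 1, 0) * (-1 * PD (eY (bE d n)) (Sum.inr (some x)) (ft fj) (q, vj u q)) =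
      - ∑ x : Fin d, PD (eY (bE d n)) (Sum.inr (some x)) (ft fj) (q, vj u q) * fderiv ℝ (fderiv ℝ u) q (Pi.single k 1, 0) (Pi.single x 1, 0) := by
      rw [← Finset.sum_neg_distrib]
      apply Finset.sum_congr rfl
      intro x _; ring
    rw [this]; ring
end Concrete

open scoped BigOperators ContDiff Topology
open MeasureTheory
set_option linter.unusedSectionVars false

section Phase
variable {d n : ℕ}

theorem co_sub (p q : PSp d n) (i) : co (p - q) i = co p i - co q i := by
  rcases i with k | k <;> simp [co]

theorem co_smul (s : ℝ) (q : PSp d n) (i) : co (s • q) i = s * co q i := by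
  rcases i with k | k <;> simp [co]

theorem co_norm (q : PSp d n) (i) : |co q i| ≤ ‖q‖ := by
  rcases i with k | k
  · exact (norm_le_pi_norm q.1 k).trans (norm_fst_le q)
  · exact (norm_le_pi_norm q.2 k).trans (norm_snd_le q)

theorem co_cont (i) : Continuous (fun q : PSp d n => co q i) := by
  have : (fun q : PSp d n => co q i) = fun q => coL i q := by
    ext q; rw [coL_apply]
  rw [this]; exact (coL i).continuous

theorem dotP_co (p q : PSp d n) : dotP p q = ∑ i, co p i * co q i := by
  simp [dotP, co, Fintype.sum_sum_type]

theorem enP_sq (p : PSp d n) : enP p ^ 2 = ∑ i, co p i ^ 2 := by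
  unfold enP
  rw [Real.sq_sqrt (by positivity)]
  simp [co, Fintype.sum_sum_type]

theorem enP_nonneg (p : PSp d n) : 0 ≤ enP p := Real.sqrt_nonneg _

theorem enP_cont : Continuous (enP : PSp d n → ℝ) := by
  unfold enP; fun_prop

theorem enP_smul (s : ℝ) (hs : 0 < s) (p : PSp d n) : enP (s • p) = s * enP p := by
  have h1 : enP (s • p) ^ 2 = (s * enP p) ^ 2 := by
    rw [mul_pow, enP_sq, enP_sq, Finset.mul_sum]
    simp [co_smul, mul_pow]
  exact (pow_left_inj₀ (enP_nonneg _) (mul_nonneg hs.le (enP_nonneg _)) two_ne_zero).1 h1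

theorem norm_le_enP (p : PSp d n) : ‖p‖ ≤ enP p := by
  have h : ∀ i, |co p i| ≤ enP p := by
    intro i
    refine abs_le_of_sq_le_sq ?_ (enP_nonneg p)
    rw [enP_sq]
    exact Finset.single_le_sum (f := fun i => co p i ^ 2) (fun _ _ => sq_nonneg _) (Finset.mem_univ i)
  rw [Prod.norm_def]
  apply max_le
  · exact (pi_norm_le_iff_of_nonneg (enP_nonneg p)).2 fun k => h (Sum.inl k)
  · exact (pi_norm_le_iff_of_nonneg (enP_nonneg p)).2 fun k => h (Sum.inr k)

noncomputable def Ph (p w q : PSp d n) : ℂ :=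
  Complex.I * ((dotP (p - q) w : ℝ) : ℂ) - ((enP w * (enP (p - q)) ^ 2 : ℝ) : ℂ)

theorem Ph_exp (p w q : PSp d n) : ‖Complex.exp (Ph p w q)‖ = Real.exp (-(enP w * enP (p - q) ^ 2)) := by
  rw [Complex.norm_exp]
  congr 1
  unfold Ph
  rw [Complex.sub_re, Complex.ofReal_re, Complex.mul_re]
  simp

theorem Ph_eq (p w : PSp d n) : Ph p w = fun q => ∑ i, (Complex.I * (((coL i p - coL i q) * co w i : ℝ) : ℂ)
    - ((enP w * (coL i p - coL i q) ^ 2 : ℝ) : ℂ)) := by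
  ext q
  unfold Ph
  rw [dotP_co, enP_sq, Finset.sum_sub_distrib]
  simp only [co_sub, coL_apply]
  push_cast
  simp only [Finset.mul_sum]

theorem Ph_smooth (p w : PSp d n) : ContDiff ℝ 1 (Ph p w) := by
  rw [Ph_eq]
  apply ContDiff.sum
  intro i _
  apply ContDiff.sub
  · apply ContDiff.mul contDiff_const
    exact Complex.ofRealCLM.contDiff.comp ((contDiff_const.sub (coL i).contDiff).mul contDiff_const)
  · exact Complex.ofRealCLM.contDiff.comp (contDiff_const.mul ((contDiff_const.sub (coL i).contDiff).pow 2))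

theorem Ph_fderiv (p w q : PSp d n) (i) : fderiv ℝ (Ph p w) q (bE d n i) =
    -Complex.I * (co w i : ℂ) + 2 * (enP w : ℂ) * ((co p i : ℂ) - (co q i : ℂ)) := by
  have hl : HasDerivAt (fun t : ℝ => Ph p w (q + t • bE d n i))
      (fderiv ℝ (Ph p w) q (bE d n i)) 0 :=
    (((Ph_smooth p w).differentiable (by simp)) q).hasFDerivAt.hasLineDerivAt _
  have h2 : HasDerivAt (fun t : ℝ => Ph p w (q + t • bE d n i))
      (∑ i', (Complex.I * ((((0 - 1 * co (bE d n i) i') * co w i' : ℝ)) : ℂ) -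
        ((enP w * ((2 : ℕ) * (co p i' - (co q i' + 0 * co (bE d n i) i')) ^ (2 - 1) * (0 - 1 * co (bE d n i) i')) : ℝ) : ℂ))) 0 := by
    rw [Ph_eq]
    have : (fun t : ℝ => (fun q => ∑ i, (Complex.I * (((coL i p - coL i q) * co w i : ℝ) : ℂ)
       - ((enP w * (coL i p - coL i q) ^ 2 : ℝ) : ℂ))) (q + t • bE d n i)) =
       fun t : ℝ => ∑ i', (Complex.I * (((co p i' - (co q i' + t * co (bE d n i) i')) * co w i' : ℝ) : ℂ)
       - ((enP w * (co p i' - (co q i' + t * co (bE d n i) i')) ^ 2 : ℝ) : ℂ)) := by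
      ext t
      simp only [map_add, map_smul, coL_apply, smul_eq_mul]
    rw [this]
    apply HasDerivAt.fun_sum
    intro i' _
    have hb : HasDerivAt (fun t : ℝ => co p i' - (co q i' + t * co (bE d n i) i')) (0 - 1 * co (bE d n i) i') 0 := by
      have := (((hasDerivAt_id (0:ℝ)).mul_const (co (bE d n i) i')).const_add (co q i')).const_sub (co p i')
      simpa using this
    apply HasDerivAt.sub
    · exact (((hb.mul_const (co w i')).ofReal_comp).const_mul Complex.I)
    · exact (((hb.pow 2).const_mul (enP w)).ofReal_comp)
  rw [hl.unique h2]
  simp only [co_basis]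
  rw [Finset.sum_eq_single i]
  · simp; ring
  · intro b _ hb; simp [hb]
  · simp

/-- the symbol along the phase -/
noncomputable def psi (fj : PSp d n → ℂ → (Fin d → ℂ) → ℂ) (j : Fin n) (p o : PSp d n)
    (y : PSp d n × (Option (Fin d) → ℂ)) : ℂ :=
  ∑ i, Xf fj j (Sum.inl i) y * (-Complex.I * (co o i : ℂ) + 2 * ((co p i : ℂ) - (co y.1 i : ℂ)))

theorem psi_class {fj : PSp d n → ℂ → (Fin d → ℂ) → ℂ} {j : Fin n} {O : Set (PSp d n × (Option (Fin d) → ℂ))}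
    {M : ℕ → ℝ} (hM : WM M) (hO : IsOpen O) {C h D : ℝ} (hC : 0 ≤ C) (hh : 0 ≤ h) 
    (h1 : ∀ i, Cl (eY (bE d n)) O M C h 0 (Xf fj j (Sum.inl i)))
    (h2 : ∀ i, Cl (eY (bE d n)) O M C h 0 (fun y => ((co y.1 i : ℝ) : ℂ) * Xf fj j (Sum.inl i) y))
    {p o : PSp d n} (hD : ‖o‖ + 2 * ‖p‖ ≤ D) :
    Cl (eY (bE d n)) O M ((Finset.univ : Finset (Fin d ⊕ Fin n)).card * (2 * D * C + 2 * 2 * C)) h 0 (psi fj j p o) := by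
  have h3 : ∀ i ∈ (Finset.univ : Finset (Fin d ⊕ Fin n)), Cl (eY (bE d n)) O M (2 * D * C + 2 * 2 * C) h 0
      (fun y => (-Complex.I * (co o i : ℂ) + 2 * (co p i : ℂ)) * Xf fj j (Sum.inl i) y +
        (-2) * (((co y.1 i : ℝ) : ℂ) * Xf fj j (Sum.inl i) y)) := by
    intro i _
    apply Cl.add hO
    · apply Cl.cmul hM hO (h1 i) hC hh
      refine le_trans ?_ hD
      refine (norm_add_le _ _).trans ?_
      have a1 := co_norm o i
      have a2 := co_norm p i
      simp only [neg_mul, norm_neg, norm_mul, Complex.norm_I, one_mul, Complex.norm_real, Real.norm_eq_abs, Complex.norm_ofNat]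
      linarith
    · apply Cl.cmul hM hO (h2 i) hC hh
      simp
  refine (Cl.sum hM hO _ hh h3).congr hO ?_
  intro y _
  unfold psi
  apply Finset.sum_congr rfl
  intro i _
  ring

theorem psi_lower {fj : PSp d n → ℂ → (Fin d → ℂ) → ℂ} {j : Fin n} {O : Set (PSp d n × (Option (Fin d) → ℂ))}
    (hO : IsOpen O) (hX : ∀ i, ContinuousOn (Xf fj j (Sum.inl i)) O) {p0 o0 : PSp d n} {y0} (hy0 : y0 ∈ O)
    (hne : psi fj j p0 o0 y0 ≠ 0) :
    ∃ δ > 0, ∃ c > 0, δ ≤ 1 ∧ ∀ p ∈ Metric.ball p0 δ, ∀ o ∈ Metric.ball o0 δ, ∀ y ∈ Metric.ball y0 δ, c ≤ ‖psi fj j p o y‖ := by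
  have hc : ContinuousAt (fun a : (PSp d n × PSp d n) × (PSp d n × (Option (Fin d) → ℂ)) => ‖psi fj j a.1.1 a.1.2 a.2‖) ((p0, o0), y0) := by
    apply ContinuousAt.norm
    unfold psi
    apply tendsto_finsetSum
    intro i _
    apply ContinuousAt.mul
    · exact ContinuousAt.comp (f := Prod.snd) (x := ((p0, o0), y0)) (((hX i).continuousAt (hO.mem_nhds hy0))) continuousAt_snd
    · apply Continuous.continuousAt
      have := co_cont (d := d) (n := n) i
      fun_prop
  have hpos : 0 < ‖psi fj j p0 o0 y0‖ := norm_pos_iff.2 hne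
  have hev := hc.eventually (lt_mem_nhds (show ‖psi fj j p0 o0 y0‖ / 2 < ‖psi fj j p0 o0 y0‖ by linarith))
  obtain ⟨δ, hδ, H⟩ := Metric.eventually_nhds_iff.1 hev
  refine ⟨min δ 1, by positivity, ‖psi fj j p0 o0 y0‖ / 2, by positivity, min_le_right _ _, ?_⟩
  intro p hp o hoo y hy
  refine (H (y := ((p, o), y)) ?_).le
  rw [Metric.mem_ball] at hp hoo hy
  rw [Prod.dist_eq, Prod.dist_eq]
  have := min_le_left δ 1
  exact max_lt (max_lt (by linarith) (by linarith)) (by linarith)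

theorem Dj_inl (v : PSp d n → Option (Fin d) → ℂ) (q : PSp d n) : Dj (bE d n) v Sum.inl q = 1 := by
  unfold Dj
  have : (Matrix.of fun i j => fderiv ℝ (yv (bE d n) v (Sum.inl i)) q (bE d n j)) = 1 := by
    ext i j
    rw [Matrix.of_apply, yv_inl, Module.Basis.repr_self, Finsupp.single_apply, Matrix.one_apply]
    by_cases h : i = j
    · simp [h]
    · simp [h, Ne.symm h]
  rw [this, Matrix.det_one]

theorem Iint_FBI (u χ : PSp d n → ℂ) (p w : PSp d n) :
    Iint volume (bE d n) (vj u) (Ph p w) χ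
      (fun J => if J = Sum.inl then (fun y => y.2 none) else fun _ => 0) = FBIP (fun q => χ q * u q) p w := by
  unfold Iint FBIP
  congr 1
  ext q
  rw [Finset.sum_eq_single Sum.inl]
  · simp only [if_true, Dj_inl]
    show _ * _ * (u q * 1) = _
    unfold Ph; ring
  · intro J _ hJ
    simp only [if_neg hJ]; simp
  · simp
end Phase

open scoped BigOperators ContDiff Topology
open MeasureTheory
set_option linter.unusedSectionVars false

section Fin
variable {d n : ℕ}

theorem psi_ne {fj : PSp d n → ℂ → (Fin d → ℂ) → ℂ} {j : Fin n} {u : PSp d n → ℂ} {Ω : Set (PSp d n)}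
    (hfhol : ∀ p ∈ Ω, Differentiable ℂ (fun q : ℂ × (Fin d → ℂ) => fj p q.1 q.2)) {p0 : PSp d n} (hp0 : p0 ∈ Ω)
    (hd : DifferentiableAt ℝ (ft fj) (p0, vj u p0)) (ξ0 : Fin d → ℝ) (τ0 : Fin n → ℝ)
    (hnc : ((τ0 j : ℝ) : ℂ) ≠
      ∑ k, fderiv ℂ (fun q : ℂ × (Fin d → ℂ) => fj p0 q.1 q.2)
          (u p0, fun k' => fderiv ℝ u p0 ((Pi.single k' (1 : ℝ), 0) : PSp d n))
          ((0 : ℂ), Pi.single k (1 : ℂ)) * ((ξ0 k : ℝ) : ℂ)) {s : ℝ} (hs : 0 < s) :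
    psi fj j p0 (s • (ξ0, τ0)) (p0, vj u p0) ≠ 0 := by
  have key : psi fj j p0 (s • (ξ0, τ0)) (p0, vj u p0) = -Complex.I * s * (((τ0 j : ℝ) : ℂ) -
      ∑ k, fderiv ℂ (fun q : ℂ × (Fin d → ℂ) => fj p0 q.1 q.2)
          (u p0, fun k' => fderiv ℝ u p0 ((Pi.single k' (1 : ℝ), 0) : PSp d n))
          ((0 : ℂ), Pi.single k (1 : ℂ)) * ((ξ0 k : ℝ) : ℂ)) := by
    unfold psi
    simp only [sub_self, mul_zero, add_zero, co_smul]
    rw [Fintype.sum_sum_type]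
    simp only [Xf]
    simp only [ite_mul, one_mul, zero_mul, Finset.sum_ite_eq', Finset.mem_univ, if_true]
    rw [mul_sub, Finset.mul_sum]
    have : ∀ k, PD (eY (bE d n)) (Sum.inr (some k)) (ft fj) (p0, vj u p0) = fderiv ℂ (fun q : ℂ × (Fin d → ℂ) => fj p0 q.1 q.2)
          (u p0, fun k' => fderiv ℝ u p0 ((Pi.single k' (1 : ℝ), 0) : PSp d n))
          ((0 : ℂ), Pi.single k (1 : ℂ)) := fun k => ft_pd hfhol (y := (p0, vj u p0)) hp0 hd k
    simp only [this, co, Sum.elim_inl, Sum.elim_inr]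
    rw [sub_eq_add_neg, add_comm, ← Finset.sum_neg_distrib]
    congr 1
    · push_cast; ring
    · apply Finset.sum_congr rfl
      intro k _
      push_cast; ring
  rw [key]
  refine mul_ne_zero (mul_ne_zero (neg_ne_zero.2 Complex.I_ne_zero) ?_) (sub_ne_zero.2 hnc)
  exact_mod_cast hs.ne'
end Fin

set_option maxHeartbeats 1000000

/-- Theorem 3.3: a `C²` solution `u` of the nonlinear system `∂u/∂t_j = f_j(x,t,u,u_x)`,
with `f_j` of class `C^𝓜` in `(x,t)` and holomorphic in `(ζ_0,ζ)`, is `𝓜`-microlocally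
regular at every point `(p_0,(ξ_0,τ_0))` that is noncharacteristic for the linearized
operators `L_j^u`, in the sense of Denjoy–Carleman decay of the F.B.I. transform. -/
theorem stmt18 (d n : ℕ) (M : ℕ → ℝ) (hreg : DCRegular M)
    (Ω : Set (PSp d n)) (hΩ : IsOpen Ω) (hΩ0 : (0 : PSp d n) ∈ Ω)
    (u : PSp d n → ℂ) (hu : ContDiffOn ℝ 2 u Ω)
    (f : Fin n → PSp d n → ℂ → (Fin d → ℂ) → ℂ)
    (hfsm : ∀ (j : Fin n) (ζ0 : ℂ) (ζ : Fin d → ℂ),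
      ContDiffOn ℝ (⊤ : ℕ∞) (fun p => f j p ζ0 ζ) Ω)
    (hfhol : ∀ (j : Fin n), ∀ p ∈ Ω,
      Differentiable ℂ (fun q : ℂ × (Fin d → ℂ) => f j p q.1 q.2))
    (hfCM : ∀ (j : Fin n) (K : Set (PSp d n × ℂ × (Fin d → ℂ))), IsCompact K →
      K ⊆ Ω ×ˢ (Set.univ : Set (ℂ × (Fin d → ℂ))) →
      ∃ C > (0 : ℝ), ∀ (α : Fin d → ℕ) (β : Fin n → ℕ), ∀ q ∈ K,
        ‖PDxt α β (fun p => f j p q.2.1 q.2.2) q.1‖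
          ≤ C ^ ((∑ i, α i) + (∑ i, β i) + 1) * M ((∑ i, α i) + (∑ i, β i)))
    (hPDE : ∀ p ∈ Ω, ∀ j : Fin n,
      fderiv ℝ u p ((0, Pi.single j (1 : ℝ)) : PSp d n) =
        f j p (u p) (fun k => fderiv ℝ u p ((Pi.single k (1 : ℝ), 0) : PSp d n)))
    (p0 : PSp d n) (hp0 : p0 ∈ Ω) (ξ0 : Fin d → ℝ) (τ0 : Fin n → ℝ)
    (hξτ0 : ¬(ξ0 = 0 ∧ τ0 = 0))
    (hnc : ∃ j : Fin n, ((τ0 j : ℝ) : ℂ) ≠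
      ∑ k, fderiv ℂ (fun q : ℂ × (Fin d → ℂ) => f j p0 q.1 q.2)
          (u p0, fun k' => fderiv ℝ u p0 ((Pi.single k' (1 : ℝ), 0) : PSp d n))
          ((0 : ℂ), Pi.single k (1 : ℂ)) * ((ξ0 k : ℝ) : ℂ)) :
    ∃ χ : PSp d n → ℝ, ContDiff ℝ (⊤ : ℕ∞) χ ∧ HasCompactSupport χ ∧ tsupport χ ⊆ Ω ∧
      (∃ W : Set (PSp d n), IsOpen W ∧ p0 ∈ W ∧ ∀ q ∈ W, χ q = 1) ∧
    ∃ UU : Set (PSp d n), IsOpen UU ∧ p0 ∈ UU ∧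
      IsCompact (closure UU) ∧ closure UU ⊆ Ω ∧
    ∃ Γ : Set (PSp d n), IsOpen Γ ∧ (ξ0, τ0) ∈ Γ ∧
      (∀ w ∈ Γ, ∀ s : ℝ, 0 < s → s • w ∈ Γ) ∧ (∀ w ∈ Γ, w ≠ 0) ∧
    ∃ A > (0 : ℝ), ∀ p ∈ UU, ∀ w ∈ Γ, ∀ k : ℕ,
      ‖FBIP (fun q => (χ q : ℂ) * u q) p w‖ ≤ A ^ (k + 1) * M k / (enP w) ^ k := by
  have hM := hreg.wm
  obtain ⟨j, hnc⟩ := hnc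
  obtain ⟨r, hr, hrΩ, hft⟩ := ft_class (fj := f j) hM hΩ (hfsm j) (hfhol j) (hfCM j) (p0, vj u p0) hp0
  simp only at hrΩ hft
  set O : Set (PSp d n × (Option (Fin d) → ℂ)) := Metric.ball p0 r ×ˢ Metric.ball (vj u p0) r with hOdef
  have hO : IsOpen O := Metric.isOpen_ball.prod Metric.isOpen_ball
  have hOb : Bornology.IsBounded O := Metric.isBounded_ball.prod Metric.isBounded_ball
  have hy0 : (p0, vj u p0) ∈ O := ⟨Metric.mem_ball_self hr, Metric.mem_ball_self hr⟩
  have hXc : ∀ m, InCl (eY (bE d n)) O M (Xf (f j) j m) := Xf_class hM hO hOb hft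
  obtain ⟨C1, h1, hC1, hh1, H1⟩ := InCl.unif hM Finset.univ (fun m _ => hXc m)
  obtain ⟨C2, h2, hC2, hh2, H2⟩ := InCl.unif hM (Finset.univ : Finset (_ × _)) (fun m _ => (hXc m.1).pd hM hO m.2)
  obtain ⟨C3, h3, hC3, hh3, H3⟩ := InCl.unif hM Finset.univ
    (fun i _ => InCl.mul hM hO (InCl_co hM hOb i) (hXc (Sum.inl i)))
  obtain ⟨C4, h4, hC4, hh4, H4⟩ := InCl_zc (d := d) (n := n) hM hOb none
  -- a common pair of constants
  let C : ℝ := C1 + C2 + C3 + C4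
  let h : ℝ := h1 + h2 + h3 + h4
  have hC : 0 ≤ C := by positivity
  have hh : 0 ≤ h := by positivity
  have G1 : ∀ m, Cl (eY (bE d n)) O M C h 0 (Xf (f j) j m) := fun m =>
    (H1 m (Finset.mem_univ _)).mono hM hC1 hh1 (by simp only [C]; linarith) (by simp only [h]; linarith) le_rfl
  have G2 : ∀ m m', Cl (eY (bE d n)) O M C h 0 (PD (eY (bE d n)) m (Xf (f j) j m')) := fun m m' =>
    (H2 (m', m) (Finset.mem_univ _)).mono hM hC2 hh2 (by simp only [C]; linarith) (by simp only [h]; linarith) le_rfl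
  have G3 : ∀ i, Cl (eY (bE d n)) O M C h 0 (fun y => ((co y.1 i : ℝ) : ℂ) * Xf (f j) j (Sum.inl i) y) := fun i =>
    (H3 i (Finset.mem_univ _)).mono hM hC3 hh3 (by simp only [C]; linarith) (by simp only [h]; linarith) le_rfl
  have G4 : Cl (eY (bE d n)) O M C h 0 (fun y => y.2 none) :=
    H4.mono hM hC4 hh4 (by simp only [C]; linarith) (by simp only [h]; linarith) le_rfl
  have hfts : ContDiffOn ℝ ∞ (ft (f j)) O := by obtain ⟨_, _, _, _, H⟩ := hft; exact H.smooth
  have hfth : HolO O (ft (f j)) := by obtain ⟨_, _, _, _, H⟩ := hft; exact H.hol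
  have hftd : ∀ y ∈ O, DifferentiableAt ℝ (ft (f j)) y := fun y hy => smooth_diffAt hO hfts hy
  -- direction
  have hw0 : 0 < enP ((ξ0, τ0) : PSp d n) := by
    refine lt_of_lt_of_le (norm_pos_iff.2 ?_) (norm_le_enP _)
    intro h0
    exact hξτ0 ⟨congrArg Prod.fst h0, congrArg Prod.snd h0⟩
  have hs0 : 0 < 1 / enP ((ξ0, τ0) : PSp d n) := by positivity
  have hne := psi_ne (hfhol j) hp0 (hftd _ hy0) ξ0 τ0 hnc hs0
  set o0 : PSp d n := (1 / enP ((ξ0, τ0) : PSp d n)) • (ξ0, τ0) with ho0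
  obtain ⟨δ, hδ, c, hc, hδ1, hlow⟩ := psi_lower hO (fun i => (G1 (Sum.inl i)).smooth.continuousOn) hy0 hne
  -- shrink
  let r' : ℝ := min r δ
  have hr' : 0 < r' := lt_min hr hδ
  let O' : Set (PSp d n × (Option (Fin d) → ℂ)) := Metric.ball p0 r' ×ˢ Metric.ball (vj u p0) r'
  have hO' : IsOpen O' := Metric.isOpen_ball.prod Metric.isOpen_ball
  have hO'O : O' ⊆ O := Set.prod_mono (Metric.ball_subset_ball (min_le_left _ _)) (Metric.ball_subset_ball (min_le_left _ _))
  have hO'b : ∀ y ∈ O', y ∈ Metric.ball (p0, vj u p0) δ := by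
    rintro y ⟨ha, hb⟩
    rw [← ball_prod_same]
    exact ⟨Metric.ball_subset_ball (min_le_right _ _) ha, Metric.ball_subset_ball (min_le_right _ _) hb⟩
  have hvc : ContinuousAt (vj u) p0 := (vj_smooth hΩ hu).continuousOn.continuousAt (hΩ.mem_nhds hp0)
  obtain ⟨s1, hs1, hvs⟩ := Metric.continuousAt_iff.1 hvc r' hr'
  let s : ℝ := min s1 r'
  have hs : 0 < s := lt_min hs1 hr'
  have hss1 : s ≤ s1 := min_le_left _ _
  have hsr' : s ≤ r' := min_le_right _ _
  have hr'r : r' ≤ r := min_le_left _ _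
  have hr'δ : r' ≤ δ := min_le_right _ _
  let Ω' : Set (PSp d n) := Metric.ball p0 s
  have hΩ'Ω : Ω' ⊆ Ω := (Metric.ball_subset_ball (hsr'.trans hr'r)).trans hrΩ
  have hσ : ∀ q ∈ Ω', (q, vj u q) ∈ O' := fun q hq =>
    ⟨Metric.ball_subset_ball hsr' hq, hvs (lt_of_lt_of_le hq hss1)⟩
  have S : Stp (bE d n) O' Ω' (vj u) (Xf (f j) j) :=
    { hO := hO'
      hΩ := Metric.isOpen_ball
      hv := (vj_smooth hΩ hu).mono hΩ'Ω
      hσ := hσ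
      hXs := fun m => (G1 m).smooth.mono hO'O
      hXh := fun m => ((G1 m).subset hO'O).hol
      hXv := fun l q hq => Xf_v hΩ hu (fun p hp => hPDE p hp j) (hΩ'Ω hq) (hO'O (hσ q hq)) hfth
        (hftd _ (hO'O (hσ q hq))) l }
  obtain ⟨χ, hχs, hχ1, -, hχc, hχΩ'⟩ := exists_cut (E := PSp d n) (Ω := Ω') (K := Metric.closedBall p0 (s / 2))
    Metric.isOpen_ball (isCompact_closedBall _ _) (Metric.closedBall_subset_ball (by linarith))
  -- complex-valued cutoff
  let χc : PSp d n → ℂ := fun q => (χ q : ℂ)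
  have hχcs : ContDiff ℝ 1 χc := Complex.ofRealCLM.contDiff.comp (hχs.of_le (by norm_cast))
  have hχcc : HasCompactSupport χc := hχc.comp_left (g := fun x : ℝ => (x : ℂ)) (by simp)
  have hχct : tsupport χc ⊆ Ω' := (closure_mono (by
    intro q hq
    simpa [χc] using hq)).trans hχΩ'
  -- constants
  let D : ℝ := (‖o0‖ + 1) + 2 * (‖p0‖ + 1)
  have hD : 0 ≤ D := by positivity
  let Cψ : ℝ := (Finset.univ : Finset (Fin d ⊕ Fin n)).card * (2 * D * C + 2 * 2 * C)
  have hCψ : 0 ≤ Cψ := by positivity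
  let H : ℝ := max (2 * h) (2 * h * Cψ / c)
  have hH1 : 2 * h ≤ H := le_max_left _ _
  have hhH : h ≤ H := by linarith
  have hH : 0 ≤ H := hh.trans hhH
  have h2H : h ≤ 2 * H := by linarith
  have : (volume : Measure (PSp d n)).IsAddHaarMeasure :=
    Measure.prod.instIsAddHaarMeasure (volume : Measure (Fin d → ℝ)) (volume : Measure (Fin n → ℝ))
  obtain ⟨A, hA, hest⟩ := S.est hM (volume : Measure (PSp d n)) hχcs hχcc hχct (CX := C) (CR := 1 / c) (C0 := C) (h := H) (B := 2 * H)
    (c := (s / 4) ^ 2) hC (by positivity) hC hH (by positivity) le_rfl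
    (fun m => ((G1 m).subset hO'O).mono hM hC hh le_rfl hhH le_rfl)
    (fun m m' => ((G2 m m').subset hO'O).mono hM hC hh le_rfl hhH le_rfl)
  refine ⟨χ, hχs, hχc, hχΩ'.trans hΩ'Ω, ⟨Metric.ball p0 (s / 2), Metric.isOpen_ball, Metric.mem_ball_self (by positivity), ?_⟩,
    Metric.ball p0 (s / 4), Metric.isOpen_ball, Metric.mem_ball_self (by positivity), ?_, ?_,
    {w | 0 < enP w ∧ (1 / enP w) • w ∈ Metric.ball o0 δ}, ?_, ⟨hw0, Metric.mem_ball_self hδ⟩, ?_, ?_, A, hA, ?_⟩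
  · intro q hq
    exact (hχ1.filter_mono (nhds_le_nhdsSet (Metric.ball_subset_closedBall hq))).self_of_nhds
  · exact (isCompact_closedBall p0 (s / 4)).of_isClosed_subset isClosed_closure Metric.closure_ball_subset_closedBall
  · exact (Metric.closure_ball_subset_closedBall.trans (Metric.closedBall_subset_ball (by linarith))).trans hΩ'Ω
  · rw [isOpen_iff_mem_nhds]
    rintro w ⟨hw1, hw2⟩
    have hcw : ContinuousAt (fun w : PSp d n => (1 / enP w) • w) w :=
      (continuousAt_const.div enP_cont.continuousAt hw1.ne').smul continuousAt_id
    filter_upwards [enP_cont.continuousAt.eventually (lt_mem_nhds hw1),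
      hcw.eventually (Metric.isOpen_ball.mem_nhds hw2)] with w' ha hb using ⟨ha, hb⟩
  · rintro w ⟨hw1, hw2⟩ t ht
    refine ⟨by rw [enP_smul t ht]; positivity, ?_⟩
    rw [enP_smul t ht, smul_smul]
    have : 1 / (t * enP w) * t = 1 / enP w := by field_simp
    rw [this]; exact hw2
  · rintro w ⟨hw1, hw2⟩ rfl
    simp [enP] at hw1
  · rintro p hp w ⟨hw1, hw2⟩ k
    rw [← Iint_FBI u χc p w]
    have hpδ : p ∈ Metric.ball p0 δ := Metric.ball_subset_ball (by linarith) hp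
    have hlo : ∀ y ∈ O', c ≤ ‖psi (f j) j p ((1 / enP w) • w) y‖ := fun y hy => hlow p hpδ _ hw2 y (hO'b y hy)
    have hψc : Cl (eY (bE d n)) O' M Cψ h 0 (psi (f j) j p ((1 / enP w) • w)) := by
      apply psi_class hM hO' hC hh (fun i => (G1 _).subset hO'O) (fun i => (G3 i).subset hO'O)
      have e1 : ‖(1 / enP w) • w‖ ≤ ‖o0‖ + 1 := by
        have := norm_le_norm_add_norm_sub' ((1 / enP w) • w) o0
        rw [Metric.mem_ball, dist_eq_norm] at hw2
        linarith
      have e2 : ‖p‖ ≤ ‖p0‖ + 1 := by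
        have := norm_le_norm_add_norm_sub' p p0
        rw [Metric.mem_ball, dist_eq_norm] at hpδ
        linarith
      simp only [D]; linarith
    refine hest (Ph p w) (psi (f j) j p ((1 / enP w) • w)) (fun y => (psi (f j) j p ((1 / enP w) • w) y)⁻¹) (enP w) _
      (Ph_smooth p w) hw1 (Cl.inv hM hO' hψc hCψ hh hc hlo (le_max_left _ _) (le_max_right _ _)) ?_ ?_ ?_ ?_ ?_ k
    · intro y hy
      apply mul_inv_cancel₀
      intro h0
      have := hlo y hy
      rw [h0, norm_zero] at this; linarith
    · intro q hq
      unfold psi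
      rw [Finset.mul_sum]
      apply Finset.sum_congr rfl
      intro i _
      rw [Ph_fderiv, co_smul]
      have : (enP w : ℂ) ≠ 0 := by exact_mod_cast hw1.ne'
      push_cast
      field_simp
    · intro q
      rw [Ph_exp]
      apply Real.exp_le_one_iff.2
      have := enP_nonneg w
      nlinarith [sq_nonneg (enP (p - q))]
    · intro q hq
      rw [Ph_exp]
      apply Real.exp_le_exp.2
      have hqs : q ∉ Metric.ball p0 (s / 2) := by
        intro hqb
        apply hq
        have : χc =ᶠ[𝓝 q] fun _ => 1 := by
          filter_upwards [hχ1.filter_mono (nhds_le_nhdsSet (Metric.ball_subset_closedBall hqb))] with x hx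
          simp [χc, hx]
        unfold Lchi
        rw [this.fderiv_eq]; simp
      have hqs' : s / 2 ≤ dist q p0 := by
        by_contra hcon
        exact hqs (not_le.1 hcon)
      have hpd : dist p p0 < s / 4 := hp
      have htri := dist_triangle_left q p0 p
      have h5 : s / 4 ≤ enP (p - q) := by
        refine le_trans ?_ (norm_le_enP _)
        rw [← dist_eq_norm]
        linarith
      have h6 : (s / 4) ^ 2 ≤ enP (p - q) ^ 2 := by gcongr
      nlinarith
    · intro J
      by_cases hJ : J = Sum.inl
      · simp only [hJ, if_true]
        exact (G4.subset hO'O).mono hM hC hh le_rfl h2H le_rfl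
      · simp only [hJ, if_false]
        have := Cl.const (e := eY (V := Option (Fin d)) (bE d n)) (O := O') hM (show 0 ≤ 2 * H by positivity) 0
        exact this.mono hM (norm_nonneg _) (by positivity) (by simpa using hC) le_rfl le_rfl
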